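/- Let Ω ⊂ ℝ^N be an open bounded set with Lipschitz boundary and φ a metric integrand. If u ∈ BV_φ(Ω) is a function of φ-least gradient in Ω, then ∫_Ω |Du|_φ ≤ ∫_{∂Ω} φ(x, ν(x)) |Tu(x)| dH^{N-1}(x), where ν is the outer unit normal to ∂Ω. -/

import Mathlib

open MeasureTheory Metric Set Bornology Filter
open scoped ENNReal NNReal RealInnerProductSpace Topology

noncomputable section

abbrev Euc (N : ℕ) := EuclideanSpace ℝ (Fin N)

def divg {N : ℕ} (z : Euc N → Euc N) (x : Euc N) : ℝ :=
  ∑ i : Fin N, fderiv ℝ z x (EuclideanSpace.single i 1) i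

def polarFn {N : ℕ} (φ : Euc N → Euc N → ℝ) (x zs : Euc N) : ℝ :=
  sSup {r : ℝ | ∃ ξ, φ x ξ ≤ 1 ∧ r = ⟪zs, ξ⟫}

def phiTV {N : ℕ} (φ : Euc N → Euc N → ℝ) (Ω : Set (Euc N)) (u : Euc N → ℝ) : ℝ≥0∞ :=
  ⨆ (z : Euc N → Euc N) (_ : ContDiff ℝ 1 z) (_ : HasCompactSupport z)
    (_ : tsupport z ⊆ Ω) (_ : ∀ x, polarFn φ x (z x) ≤ 1),
    ENNReal.ofReal (∫ x in Ω, u x * divg z x)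

def TV {N : ℕ} (Ω : Set (Euc N)) (u : Euc N → ℝ) : ℝ≥0∞ :=
  ⨆ (z : Euc N → Euc N) (_ : ContDiff ℝ 1 z) (_ : HasCompactSupport z)
    (_ : tsupport z ⊆ Ω) (_ : ∀ x, ‖z x‖ ≤ 1),
    ENNReal.ofReal (∫ x in Ω, u x * divg z x)

def MetricIntegrand {N : ℕ} (φ : Euc N → Euc N → ℝ) (Ω : Set (Euc N)) (lam Lam : ℝ) : Prop :=
  ContinuousOn (fun p : Euc N × Euc N => φ p.1 p.2) (closure Ω ×ˢ univ) ∧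
  (∀ x ∈ closure Ω, ConvexOn ℝ univ (φ x)) ∧
  (∀ x ∈ closure Ω, ∀ (t : ℝ) (ξ : Euc N), φ x (t • ξ) = |t| * φ x ξ) ∧
  0 < lam ∧ 0 < Lam ∧
  (∀ x ∈ closure Ω, ∀ ξ : Euc N, lam * ‖ξ‖ ≤ φ x ξ ∧ φ x ξ ≤ Lam * ‖ξ‖)

def HasLipschitzBoundary {N : ℕ} (Ω : Set (Euc N)) : Prop :=
  ∀ x ∈ frontier Ω, ∃ (ν : Euc N) (U : Set (Euc N)) (g : Euc N → ℝ) (L : ℝ≥0),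
    ‖ν‖ = 1 ∧ IsOpen U ∧ x ∈ U ∧ LipschitzWith L g ∧
    ∀ y ∈ U, (y ∈ Ω ↔ g (y - ⟪y, ν⟫ • ν) < ⟪y, ν⟫)

def IsTrace {N : ℕ} (Ω : Set (Euc N)) (u f : Euc N → ℝ) : Prop :=
  ∀ᵐ x ∂((μH[(N : ℝ) - 1] : Measure (Euc N)).restrict (frontier Ω)),
    Filter.Tendsto (fun r : ℝ => ⨍ y in ball x r ∩ Ω, |u y - f x| ∂volume)
      (𝓝[>] (0:ℝ)) (𝓝 0)

def IsLeastGradient {N : ℕ} (Ω : Set (Euc N)) (u : Euc N → ℝ) : Prop :=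
  ∀ v : Euc N → ℝ, HasCompactSupport v → tsupport v ⊆ Ω → TV Ω u ≤ TV Ω (u + v)

def IsPhiLeastGradient {N : ℕ} (φ : Euc N → Euc N → ℝ) (Ω : Set (Euc N)) (u : Euc N → ℝ) : Prop :=
  ∀ v : Euc N → ℝ, HasCompactSupport v → tsupport v ⊆ Ω → phiTV φ Ω u ≤ phiTV φ Ω (u + v)

def IsLeastGradientLoc {N : ℕ} (Ω : Set (Euc N)) (u : Euc N → ℝ) : Prop :=
  ∀ v : Euc N → ℝ, HasCompactSupport v → tsupport v ⊆ Ω →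
    ∀ U : Set (Euc N), IsOpen U → Bornology.IsBounded U → tsupport v ⊆ U → U ⊆ Ω →
      TV U u ≤ TV U (u + v)

def Perim {N : ℕ} (E U : Set (Euc N)) : ℝ≥0∞ :=
  TV U (E.indicator (fun _ => (1:ℝ)))

def IsOuterUnitNormal {N : ℕ} (Ω : Set (Euc N)) (ν : Euc N → Euc N) : Prop :=
  ∀ x ∈ frontier Ω, ‖ν x‖ = 1 ∧
    Filter.Tendsto
      (fun r : ℝ => volume (Ω ∩ ball x r ∩ {y | 0 < ⟪y - x, ν x⟫}) / volume (ball x r))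
      (𝓝[>] (0:ℝ)) (𝓝 0)

/-!
If `χ` is a Lipschitz cutoff equal to `1` near `∂Ω` and vanishing outside a layer of width `2ε`,
then `-χu` is, up to truncation near `∂Ω`, an admissible perturbation of `u`, and the minimality of
`u` gives `∫_Ω |Du|_φ ≤ ∫_{Ω ∖ K} |Du|_φ + ∫_Ω |u| φ(x, ∇χ)` for any compact `K` outside the layer.
The first term on the right is small when `K` exhausts `Ω`. For the second, `χ` is assembled from
profiles of the graph heights `G` of finitely many boundary charts, with slope `-1/ε` for
`ε < G < 2ε`. There `φ(x, ∇χ) ≈ |∇G| φ(q, ν(q)) / ε`, where `q` is the projection of `x` to the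
boundary along the axis of the chart and `φ` is even, while `|∇G|` is the area factor of the graph.
Replacing `u(x)` by the trace `f(q)` costs at most the variation of `u` in the layer, which is small
with `|Du|_φ(Ω ∖ K)`, and integrating `|f(q)| φ(q, ν(q))` over the slab leaves `∫_{∂Ω} φ(x, ν) |f|`.
-/

section Mollification

variable {E F : Type*} [NormedAddCommGroup E] [NormedSpace ℝ E] [FiniteDimensional ℝ E]
  [NormedAddCommGroup F] [NormedSpace ℝ F]

/-- A sequence of bump functions at the origin with support shrinking to it. The ratio of the two
radii is kept equal to `2`, as Lebesgue differentiation requires. -/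
def shrinkingBump (E : Type*) [NormedAddCommGroup E] [NormedSpace ℝ E] [FiniteDimensional ℝ E]
    (k : ℕ) : ContDiffBump (0 : E) where
  rIn := 1 / (k + 1) / 2
  rOut := 1 / (k + 1)
  rIn_pos := by positivity
  rIn_lt_rOut := half_lt_self (by positivity)

lemma tendsto_rOut_shrinkingBump :
    Tendsto (fun k => (shrinkingBump E k).rOut) atTop (𝓝 0) :=
  tendsto_one_div_add_atTop_nhds_zero_nat

variable [MeasurableSpace E] [BorelSpace E]

lemma stronglyMeasurable_fderiv_of_finiteDimensional [FiniteDimensional ℝ F] (g : E → F) :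
    StronglyMeasurable (fderiv ℝ g) :=
  have := FiniteDimensional.complete ℝ F
  (measurable_fderiv ℝ g).stronglyMeasurable

variable (μ : Measure E) [μ.IsAddHaarMeasure]

/-- The mollification of `g` at scale `1 / (k + 1)`. -/
def mollify (k : ℕ) (g : E → F) : E → F :=
  convolution ((shrinkingBump E k).normed μ) g (ContinuousLinearMap.lsmul ℝ ℝ) μ

variable {μ}

lemma contDiff_mollify (k : ℕ) {g : E → F} (hg : LocallyIntegrable g μ) :
    ContDiff ℝ 1 (mollify μ k g) :=
  HasCompactSupport.contDiff_convolution_left (n := 1) _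
    (shrinkingBump E k).hasCompactSupport_normed ((shrinkingBump E k).contDiff_normed (n := 1)) hg

lemma integrable_normed_smul_sub (k : ℕ) {g : E → F} (hg : LocallyIntegrable g μ) (x : E) :
    Integrable (fun t => (shrinkingBump E k).normed μ t • g (x - t)) μ :=
  (shrinkingBump E k).hasCompactSupport_normed.convolutionExists_left
    (ContinuousLinearMap.lsmul ℝ ℝ) (shrinkingBump E k).continuous_normed hg x

open scoped Pointwise in
lemma tsupport_mollify_subset (k : ℕ) (g : E → F) :
    tsupport (mollify μ k g) ⊆ cthickening (shrinkingBump E k).rOut (Function.support g) := by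
  refine closure_minimal ?_ isClosed_cthickening
  calc Function.support (mollify μ k g)
      ⊆ ball 0 (shrinkingBump E k).rOut + Function.support g := by
        rw [← (shrinkingBump E k).support_normed_eq (μ := μ)]
        exact support_convolution_subset _
    _ = thickening (shrinkingBump E k).rOut (Function.support g) := ball_add_zero _ _
    _ ⊆ cthickening (shrinkingBump E k).rOut (Function.support g) :=
        thickening_subset_cthickening _ _

lemma eventually_disjoint_tsupport_mollify {g : E → F} {K : Set E} (hK : IsCompact K)
    (h : Disjoint (tsupport g) K) : ∀ᶠ k in atTop, Disjoint (tsupport (mollify μ k g)) K := by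
  obtain ⟨η, hη, hd⟩ := h.symm.exists_cthickenings hK (isClosed_tsupport g)
  filter_upwards [(tendsto_rOut_shrinkingBump (E := E)).eventually_le_const hη] with k hk
  refine (hd.mono (self_subset_cthickening K) ?_).symm
  exact (tsupport_mollify_subset k g).trans
    ((cthickening_mono hk _).trans (cthickening_subset_of_subset η subset_closure))

lemma eventually_tsupport_mollify_subset {g : E → F} {C S : Set E} (hC : IsCompact C)
    (hS : IsOpen S) (hCS : C ⊆ S) (hg : Function.support g ⊆ C) :
    ∀ᶠ k in atTop, HasCompactSupport (mollify μ k g) ∧ tsupport (mollify μ k g) ⊆ S := by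
  obtain ⟨η, hη, hηS⟩ := hC.exists_cthickening_subset_open hS hCS
  filter_upwards [(tendsto_rOut_shrinkingBump (E := E)).eventually_le_const hη] with k hk
  have hsub : tsupport (mollify μ k g) ⊆ cthickening η C :=
    (tsupport_mollify_subset k g).trans
      ((cthickening_mono hk _).trans (cthickening_subset_of_subset η hg))
  exact ⟨hC.cthickening.of_isClosed_subset (isClosed_tsupport _) hsub, hsub.trans hηS⟩

lemma dist_mollify_le [CompleteSpace F] (k : ℕ) {g : E → F} (hg : AEStronglyMeasurable g μ)
    {z : F} {ε : ℝ} (hε : 0 ≤ ε) (h : ∀ y, dist (g y) z ≤ ε) (x : E) :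
    dist (mollify μ k g x) z ≤ ε :=
  dist_convolution_le hε (shrinkingBump E k).support_normed_eq.le
    (shrinkingBump E k).nonneg_normed (shrinkingBump E k).integral_normed hg fun y _ => h y

lemma norm_mollify_le [CompleteSpace F] (k : ℕ) {g : E → F} (hg : AEStronglyMeasurable g μ)
    {C : ℝ} (h : ∀ y, ‖g y‖ ≤ C) (x : E) : ‖mollify μ k g x‖ ≤ C := by
  simpa using dist_mollify_le (z := 0) k hg ((norm_nonneg _).trans (h 0)) (by simpa using h) x

lemma mollify_mem_Icc (k : ℕ) {g : E → ℝ} (hg : AEStronglyMeasurable g μ) {a b : ℝ}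
    (h : ∀ y, g y ∈ Icc a b) (x : E) : mollify μ k g x ∈ Icc a b := by
  rw [Real.Icc_eq_closedBall] at h ⊢
  exact dist_mollify_le k hg (dist_nonneg.trans (h 0)) h x

lemma ae_tendsto_mollify [CompleteSpace F] {g : E → F} (hg : LocallyIntegrable g μ) :
    ∀ᵐ x ∂μ, Tendsto (fun k => mollify μ k g x) atTop (𝓝 (g x)) :=
  ContDiffBump.ae_convolution_tendsto_right_of_locallyIntegrable (K := 2)
    tendsto_rOut_shrinkingBump
    (Eventually.of_forall fun k => by simp only [shrinkingBump]; linarith) hg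

lemma tendsto_mollify [CompleteSpace F] {g : E → F} (hg : Continuous g) (x : E) :
    Tendsto (fun k => mollify μ k g x) atTop (𝓝 (g x)) :=
  ContDiffBump.convolution_tendsto_right_of_continuous tendsto_rOut_shrinkingBump hg x

variable [FiniteDimensional ℝ F]

lemma locallyIntegrable_fderiv_of_lipschitzWith {g : E → F} {C : ℝ≥0} (hg : LipschitzWith C g) :
    LocallyIntegrable (fderiv ℝ g) μ :=
  (memLp_top_of_bound (stronglyMeasurable_fderiv_of_finiteDimensional g).aestronglyMeasurable C
    (Eventually.of_forall fun _ => norm_fderiv_le_of_lipschitz ℝ hg)).locallyIntegrable le_top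

lemma hasFDerivAt_mollify {g : E → F} {C : ℝ≥0} (hg : LipschitzWith C g) (k : ℕ) (x : E) :
    HasFDerivAt (mollify μ k g) (mollify μ k (fderiv ℝ g) x) x := by
  set ρ := (shrinkingBump E k).normed μ
  have hgl : LocallyIntegrable g μ := hg.continuous.locallyIntegrable
  have hlip : ∀ t, LipschitzOnWith (Real.nnabs (ρ t * C)) (fun y => ρ t • g (y - t)) univ := by
    intro t
    refine LipschitzOnWith.of_dist_le_mul fun y _ y' _ => ?_
    have hd := hg.dist_le_mul (y - t) (y' - t)
    rw [dist_sub_right] at hd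
    rw [dist_smul₀, Real.coe_nnabs, abs_mul, NNReal.abs_eq, Real.norm_eq_abs, mul_assoc]
    gcongr
  have hdiff : ∀ᵐ t ∂μ, DifferentiableAt ℝ g (x - t) :=
    (Measure.measurePreserving_sub_left μ x).quasiMeasurePreserving.ae hg.ae_differentiableAt
  refine (hasFDerivAt_integral_of_dominated_loc_of_lip (F' := fun t => ρ t • fderiv ℝ g (x - t))
    univ_mem (Eventually.of_forall fun y => (integrable_normed_smul_sub k hgl y).1)
    (integrable_normed_smul_sub k hgl x)
    (integrable_normed_smul_sub k (locallyIntegrable_fderiv_of_lipschitzWith hg) x).1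
    (Eventually.of_forall hlip) ((shrinkingBump E k).integrable_normed.mul_const _) ?_).2
  filter_upwards [hdiff] with t ht
  exact (ht.hasFDerivAt.comp x ((hasFDerivAt_id x).sub_const t)).const_smul (ρ t)

lemma norm_fderiv_mollify_le {g : E → F} {C : ℝ≥0} (hg : LipschitzWith C g) (k : ℕ) (x : E) :
    ‖fderiv ℝ (mollify μ k g) x‖ ≤ C := by
  have := FiniteDimensional.complete ℝ F
  rw [(hasFDerivAt_mollify hg k x).fderiv]
  exact norm_mollify_le k (stronglyMeasurable_fderiv_of_finiteDimensional g).aestronglyMeasurable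
    (fun _ => norm_fderiv_le_of_lipschitz ℝ hg) x

lemma ae_tendsto_fderiv_mollify {g : E → F} {C : ℝ≥0} (hg : LipschitzWith C g) :
    ∀ᵐ x ∂μ, Tendsto (fun k => fderiv ℝ (mollify μ k g) x) atTop (𝓝 (fderiv ℝ g x)) := by
  have := FiniteDimensional.complete ℝ F
  filter_upwards [ae_tendsto_mollify (locallyIntegrable_fderiv_of_lipschitzWith (μ := μ) hg)]
    with x hx
  exact hx.congr fun k => (hasFDerivAt_mollify hg k x).fderiv.symm

end Mollification

section Duality

variable {E : Type*} [NormedAddCommGroup E] [NormedSpace ℝ E] [FiniteDimensional ℝ E]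
  [MeasurableSpace E] [BorelSpace E] {μ : Measure E} [μ.IsAddHaarMeasure]

lemma tendsto_integral_mul_mollify {w g : E → ℝ} (hw : Integrable w μ)
    (hg : LocallyIntegrable g μ) {C : ℝ} (hgC : ∀ x, ‖g x‖ ≤ C) :
    Tendsto (fun k => ∫ x, w x * mollify μ k g x ∂μ) atTop (𝓝 (∫ x, w x * g x ∂μ)) := by
  refine tendsto_integral_of_dominated_convergence (fun x => ‖w x‖ * C)
    (fun k => hw.1.mul (contDiff_mollify k hg).continuous.aestronglyMeasurable)
    (hw.norm.mul_const C) (fun k => Eventually.of_forall fun x => ?_) ?_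
  · rw [norm_mul]
    gcongr
    exact norm_mollify_le k hg.aestronglyMeasurable hgC x
  · filter_upwards [ae_tendsto_mollify hg] with x hx
    exact hx.const_mul _

lemma setLIntegral_enorm_le_of_forall_test_of_isCompact {S C : Set E} (hS : IsOpen S)
    (hC : IsCompact C) (hCS : C ⊆ S) {w : E → ℝ} (hw : Integrable w μ) {c : ℝ≥0∞}
    (h : ∀ θ : E → ℝ, ContDiff ℝ 1 θ → HasCompactSupport θ → tsupport θ ⊆ S →
      (∀ x, ‖θ x‖ ≤ 1) → ENNReal.ofReal (∫ x, w x * θ x ∂μ) ≤ c) :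
    ∫⁻ x in C, ‖w x‖ₑ ∂μ ≤ c := by
  set g : E → ℝ := C.indicator fun x => w x / |w x| with hg
  have hg1 (x) : ‖g x‖ ≤ 1 := by
    refine (norm_indicator_le_norm_self _ x).trans ?_
    rw [norm_div, Real.norm_eq_abs, Real.norm_eq_abs, abs_abs]
    exact div_self_le_one _
  have hgm : AEStronglyMeasurable g μ :=
    (hw.1.aemeasurable.div hw.1.aemeasurable.abs).aestronglyMeasurable.indicator hC.measurableSet
  have hgl : LocallyIntegrable g μ :=
    (memLp_top_of_bound hgm 1 (Eventually.of_forall hg1)).locallyIntegrable le_top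
  have hlim : ENNReal.ofReal (∫ x, w x * g x ∂μ) ≤ c := by
    refine le_of_tendsto (ENNReal.tendsto_ofReal (tendsto_integral_mul_mollify hw hgl hg1)) ?_
    filter_upwards [eventually_tsupport_mollify_subset (μ := μ) hC hS hCS
      (support_indicator_subset : Function.support g ⊆ C)]
      with k ⟨hk, hkS⟩
    exact h _ (contDiff_mollify k hgl) hk hkS (norm_mollify_le k hgm hg1)
  have hwg : (fun x => w x * g x) = C.indicator fun x => ‖w x‖ := by
    ext x
    simp only [hg, ← indicator_mul_right, Real.norm_eq_abs, ← mul_div_assoc,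
      ← abs_mul_abs_self (w _), mul_self_div_self]
  rwa [hwg, integral_indicator hC.measurableSet,
    ofReal_integral_norm_eq_lintegral_enorm hw.integrableOn] at hlim

lemma setLIntegral_enorm_le_of_forall_test {S : Set E} (hS : IsOpen S) {w : E → ℝ}
    (hw : Integrable w μ) {c : ℝ≥0∞}
    (h : ∀ θ : E → ℝ, ContDiff ℝ 1 θ → HasCompactSupport θ → tsupport θ ⊆ S →
      (∀ x, ‖θ x‖ ≤ 1) → ENNReal.ofReal (∫ x, w x * θ x ∂μ) ≤ c) :
    ∫⁻ x in S, ‖w x‖ₑ ∂μ ≤ c := by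
  have := isFiniteMeasure_withDensity hw.2.ne
  rw [← withDensity_apply _ hS.measurableSet, hS.measure_eq_iSup_isCompact]
  refine iSup₂_le fun C hCS => iSup_le fun hC => ?_
  rw [withDensity_apply _ hC.measurableSet]
  exact setLIntegral_enorm_le_of_forall_test_of_isCompact hS hC hCS hw h

end Duality

section SegmentAverage

variable {E F : Type*} [NormedAddCommGroup E] [NormedSpace ℝ E]
  [NormedAddCommGroup F] [NormedSpace ℝ F]

/-- The average of `θ` over the segment from `y - h` to `y`. Its derivative in the direction `h` is
the increment of `θ` along that segment. -/
def segmentAverage (θ : E → F) (h y : E) : F :=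
  ∫ τ in (0 : ℝ)..1, θ (y - τ • h)

lemma hasFDerivAt_segmentAverage {θ : E → F} (hθ : ContDiff ℝ 1 θ) {C : ℝ≥0}
    (hC : LipschitzWith C θ) (h y : E) :
    HasFDerivAt (segmentAverage θ h) (segmentAverage (fderiv ℝ θ) h y) y := by
  have hcont : Continuous (fderiv ℝ θ) := hθ.continuous_fderiv one_ne_zero
  refine intervalIntegral.hasFDerivAt_integral_of_dominated_of_fderiv_le (𝕜 := ℝ)
    (F' := fun y τ => fderiv ℝ θ (y - τ • h)) (bound := fun _ => C) univ_mem
    (Eventually.of_forall fun x => (hθ.continuous.comp (by fun_prop)).aestronglyMeasurable)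
    ((hθ.continuous.comp (by fun_prop)).intervalIntegrable _ _)
    (hcont.comp (by fun_prop)).aestronglyMeasurable
    (Eventually.of_forall fun _ _ _ _ => norm_fderiv_le_of_lipschitz ℝ hC)
    _root_.intervalIntegrable_const (Eventually.of_forall fun τ _ x _ => ?_)
  exact (hθ.differentiable one_ne_zero _).hasFDerivAt.comp x
    ((hasFDerivAt_id x).sub_const (τ • h))

lemma contDiff_segmentAverage {θ : E → F} (hθ : ContDiff ℝ 1 θ) {C : ℝ≥0}
    (hC : LipschitzWith C θ) (h : E) : ContDiff ℝ 1 (segmentAverage θ h) := by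
  have hderiv := hasFDerivAt_segmentAverage hθ hC h
  refine contDiff_one_iff_fderiv.2 ⟨fun y => (hderiv y).differentiableAt, ?_⟩
  rw [funext fun y => (hderiv y).fderiv]
  have hcont : Continuous (Function.uncurry fun (y : E) (τ : ℝ) => fderiv ℝ θ (y - τ • h)) := by
    simp only [Function.uncurry_def]
    exact (hθ.continuous_fderiv one_ne_zero).comp (by fun_prop)
  exact intervalIntegral.continuous_parametric_intervalIntegral_of_continuous' hcont 0 1

lemma fderiv_segmentAverage_apply_self [CompleteSpace F] {θ : E → F} (hθ : ContDiff ℝ 1 θ)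
    {C : ℝ≥0} (hC : LipschitzWith C θ) (h y : E) :
    fderiv ℝ (segmentAverage θ h) y h = θ y - θ (y - h) := by
  have hcont : Continuous fun τ : ℝ => fderiv ℝ θ (y - τ • h) :=
    (hθ.continuous_fderiv one_ne_zero).comp (by fun_prop)
  have hderiv (τ : ℝ) : HasDerivAt (fun τ : ℝ => -θ (y - τ • h)) (fderiv ℝ θ (y - τ • h) h) τ := by
    have hline : HasDerivAt (fun τ : ℝ => y - τ • h) (-h) τ := by
      simpa using ((hasDerivAt_id τ).smul_const h).const_sub y
    simpa using
      ((hθ.differentiable one_ne_zero _).hasFDerivAt.comp_hasDerivAt τ hline).fun_neg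
  rw [(hasFDerivAt_segmentAverage hθ hC h y).fderiv, segmentAverage,
    ContinuousLinearMap.intervalIntegral_apply (hcont.intervalIntegrable _ _),
    intervalIntegral.integral_eq_sub_of_hasDerivAt (fun τ _ => hderiv τ)
      ((hcont.clm_apply continuous_const).intervalIntegrable _ _)]
  simp only [one_smul, zero_smul, sub_zero]
  abel

lemma support_segmentAverage_subset (θ : E → F) (h : E) :
    Function.support (segmentAverage θ h) ⊆
      (fun p : ℝ × E => p.2 + p.1 • h) '' (Icc (0 : ℝ) 1 ×ˢ tsupport θ) := by
  intro y hy
  by_contra hcon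
  refine hy ((intervalIntegral.integral_congr fun τ hτ => ?_).trans intervalIntegral.integral_zero)
  rw [uIcc_of_le zero_le_one] at hτ
  by_contra h0
  exact hcon ⟨(τ, y - τ • h), ⟨hτ, subset_tsupport _ h0⟩, sub_add_cancel _ _⟩

lemma norm_segmentAverage_le {θ : E → F} (hθ : ∀ x, ‖θ x‖ ≤ 1) {S : Set E} (hS : tsupport θ ⊆ S)
    (h y : E) :
    ‖segmentAverage θ h y‖ ≤ volume.real (Ioc (0 : ℝ) 1 ∩ {τ | y - τ • h ∈ S}) := by
  have hfin : volume (Ioc (0 : ℝ) 1 ∩ {τ | y - τ • h ∈ S}) < ⊤ :=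
    (measure_mono inter_subset_left).trans_lt (by simp)
  rw [segmentAverage, intervalIntegral.integral_of_le zero_le_one,
    setIntegral_eq_of_subset_of_forall_sdiff_eq_zero measurableSet_Ioc
      (s := Ioc (0 : ℝ) 1 ∩ {τ | y - τ • h ∈ S}) inter_subset_left]
  · simpa using norm_setIntegral_le_of_norm_le_const hfin
      fun τ _ => hθ (y - τ • h)
  · exact fun τ hτ => image_eq_zero_of_notMem_tsupport fun h0 => hτ.2 ⟨hτ.1, hS h0⟩

end SegmentAverage

section BallAverage

lemma setAverage_sub_const {α F : Type*} [MeasurableSpace α] {μ : Measure α}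
    [NormedAddCommGroup F] [NormedSpace ℝ F] [CompleteSpace F] {u : α → F} {s : Set α}
    (hs : μ s ≠ 0) (hs' : μ s ≠ ⊤) (hu : IntegrableOn u s μ) (a : F) :
    ⨍ x in s, (u x - a) ∂μ = (⨍ x in s, u x ∂μ) - a := by
  simp only [setAverage_eq]
  rw [integral_sub hu (integrableOn_const hs'), smul_sub, setIntegral_const,
    inv_smul_smul₀ (measureReal_ne_zero_iff hs' |>.2 hs)]

lemma norm_setAverage_sub_le_of_subset {α F : Type*} [MeasurableSpace α] {μ : Measure α}
    [NormedAddCommGroup F] [NormedSpace ℝ F] [CompleteSpace F] {u : α → F} {s t : Set α}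
    (hst : s ⊆ t) (hs : μ s ≠ 0) (ht : μ t ≠ ⊤) (hu : IntegrableOn u t μ) {C : ℝ}
    (hC : μ.real t ≤ C * μ.real s) (a : F) :
    ‖(⨍ x in s, u x ∂μ) - a‖ ≤ C * ⨍ x in t, ‖u x - a‖ ∂μ := by
  have hs' : μ s ≠ ⊤ := measure_ne_top_of_subset hst ht
  have hμs : 0 < μ.real s := ENNReal.toReal_pos hs hs'
  have hμt : 0 < μ.real t := hμs.trans_le (measureReal_mono hst ht)
  rw [← setAverage_sub_const hs hs' (hu.mono_set hst)]
  simp only [setAverage_eq]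
  rw [norm_smul, norm_inv, Real.norm_of_nonneg hμs.le, smul_eq_mul]
  calc (μ.real s)⁻¹ * ‖∫ x in s, (u x - a) ∂μ‖
      ≤ (μ.real s)⁻¹ * ∫ x in t, ‖u x - a‖ ∂μ := by
        gcongr
        exact (norm_integral_le_integral_norm _).trans (setIntegral_mono_set
          (hu.sub (integrableOn_const ht)).norm
          (Eventually.of_forall fun x => norm_nonneg _) hst.eventuallyLE)
    _ ≤ (C * (μ.real t)⁻¹) * ∫ x in t, ‖u x - a‖ ∂μ := by
        gcongr
        rwa [← div_eq_mul_inv, le_div_iff₀ hμt, inv_mul_le_iff₀ hμs, mul_comm]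
    _ = C * ((μ.real t)⁻¹ * ∫ x in t, ‖u x - a‖ ∂μ) := mul_assoc _ _ _

lemma stronglyMeasurable_setAverage_ball {X F : Type*} [PseudoMetricSpace X]
    [SecondCountableTopology X] [MeasurableSpace X] [OpensMeasurableSpace X] {μ : Measure X}
    [SFinite μ] [NormedAddCommGroup F] [NormedSpace ℝ F] {u : X → F} (hu : StronglyMeasurable u)
    (r : ℝ) : StronglyMeasurable fun y => ⨍ z in ball y r, u z ∂μ := by
  have hs : MeasurableSet {p : X × X | dist p.2 p.1 < r} :=
    measurableSet_lt (measurable_snd.dist measurable_fst) measurable_const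
  have hint : StronglyMeasurable fun y => ∫ z in ball y r, u z ∂μ := by
    simp only [← integral_indicator measurableSet_ball]
    exact ((hu.comp_measurable measurable_snd).indicator hs).integral_prod_right'
  have hvol : Measurable fun y => μ.real (ball y r) :=
    (measurable_measure_prodMk_left hs).ennreal_toReal
  simp only [setAverage_eq]
  exact hvol.inv.stronglyMeasurable.smul hint

lemma setAverage_ball_eq_setAverage_ball_zero {E F : Type*} [NormedAddCommGroup E]
    [MeasurableSpace E] [BorelSpace E] {μ : Measure E} [μ.IsAddLeftInvariant]
    [NormedAddCommGroup F] [NormedSpace ℝ F] (u : E → F) (y : E) (r : ℝ) :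
    ⨍ z in ball y r, u z ∂μ = ⨍ w in ball 0 r, u (y + w) ∂μ := by
  have hball : (fun w => y + w) ⁻¹' ball y r = ball 0 r := by
    ext w
    simp
  rw [setAverage_eq, setAverage_eq, ← (measurePreserving_add_left μ y).setIntegral_preimage_emb
    (measurableEmbedding_addLeft y), hball, measureReal_def, measureReal_def,
    ← measure_preimage_add μ y (ball y r), hball]

variable {E F : Type*} [NormedAddCommGroup E] [NormedSpace ℝ E] [FiniteDimensional ℝ E]
  [MeasurableSpace E] [BorelSpace E] {μ : Measure E} [μ.IsAddHaarMeasure]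
  [NormedAddCommGroup F] [NormedSpace ℝ F]

lemma tendsto_setAverage_ball_of_ball_subset [CompleteSpace F] {ι : Type*} {l : Filter ι}
    {Ω : Set E} {u : E → F} (hu : LocallyIntegrable u μ) {x : E} {a : F}
    (hx : Tendsto (fun r : ℝ => ⨍ y in ball x r ∩ Ω, ‖u y - a‖ ∂μ) (𝓝[>] 0) (𝓝 0))
    {s : ι → ℝ} (hs : Tendsto s l (𝓝[>] 0)) {c : ℝ} (hc : 0 < c) {q : ι → E}
    (hq : ∀ i, ball (q i) (c * s i) ⊆ ball x (s i) ∩ Ω) :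
    Tendsto (fun i => ⨍ y in ball (q i) (c * s i), u y ∂μ) l (𝓝 a) := by
  have hlim := (hx.comp hs).const_mul ((c ^ Module.finrank ℝ E)⁻¹)
  rw [mul_zero] at hlim
  refine tendsto_iff_norm_sub_tendsto_zero.2
    (squeeze_zero' (Eventually.of_forall fun _ => norm_nonneg _) ?_ hlim)
  filter_upwards [hs.eventually self_mem_nhdsWithin] with i (hi : 0 < s i)
  refine norm_setAverage_sub_le_of_subset (hq i) (measure_ball_pos μ _ (mul_pos hc hi)).ne'
    (measure_ne_top_of_subset inter_subset_left measure_ball_lt_top.ne)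
    ((hu.integrableOn_isCompact (isCompact_closedBall x (s i))).mono_set
      (inter_subset_left.trans ball_subset_closedBall)) ?_ a
  calc μ.real (ball x (s i) ∩ Ω) ≤ μ.real (ball x (s i)) :=
        measureReal_mono inter_subset_left measure_ball_lt_top.ne
    _ = (c ^ Module.finrank ℝ E)⁻¹ * μ.real (ball (q i) (c * s i)) := by
        rw [measureReal_def, measureReal_def, Measure.addHaar_ball_of_pos μ _ hi,
          Measure.addHaar_ball_of_pos μ _ (mul_pos hc hi), ENNReal.toReal_mul, ENNReal.toReal_mul,
          ENNReal.toReal_ofReal (by positivity), ENNReal.toReal_ofReal (by positivity), mul_pow]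
        field_simp

lemma aestronglyMeasurable_of_tendsto_setAverage_ball [CompleteSpace F] {m : Measure E} {Ω : Set E}
    {u f : E → F} (hΩ : IsOpen Ω) (hu : StronglyMeasurable u) (hu' : LocallyIntegrable u μ)
    (hf : ∀ᵐ x ∂m, x ∈ closure Ω ∧
      Tendsto (fun r : ℝ => ⨍ y in ball x r ∩ Ω, ‖u y - f x‖ ∂μ) (𝓝[>] 0) (𝓝 0)) :
    AEStronglyMeasurable f m := by
  have hs : Tendsto (fun n : ℕ => 1 / ((n : ℝ) + 1)) atTop (𝓝[>] 0) :=
    tendsto_nhdsWithin_iff.2 ⟨tendsto_one_div_add_atTop_nhds_zero_nat,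
      Eventually.of_forall fun n => by simp only [mem_Ioi]; positivity⟩
  refine aestronglyMeasurable_of_tendsto_ae atTop
    (f := fun (n : ℕ) x => ⨍ y in ball x (1 / ((n : ℝ) + 1)) ∩ Ω, u y ∂μ) (fun n => ?_) ?_
  · simp only [← Measure.restrict_restrict measurableSet_ball]
    exact (stronglyMeasurable_setAverage_ball hu _).aestronglyMeasurable
  filter_upwards [hf] with x ⟨hx, hlim⟩
  refine tendsto_iff_norm_sub_tendsto_zero.2
    (squeeze_zero (fun _ => norm_nonneg _) (fun n => ?_) (hlim.comp hs))
  have hn : 0 < 1 / ((n : ℝ) + 1) := by positivity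
  have hpos : μ (ball x (1 / ((n : ℝ) + 1)) ∩ Ω) ≠ 0 :=
    ((isOpen_ball.inter hΩ).measure_pos μ
      (mem_closure_iff.1 hx _ isOpen_ball (mem_ball_self hn))).ne'
  simpa using norm_setAverage_sub_le_of_subset subset_rfl hpos
    (measure_ne_top_of_subset inter_subset_left measure_ball_lt_top.ne)
    ((hu'.integrableOn_isCompact (isCompact_closedBall x _)).mono_set
      (inter_subset_left.trans ball_subset_closedBall)) (one_mul _).ge (f x)

lemma setLIntegral_enorm_setAverage_ball_sub_le [CompleteSpace F] {u : E → F}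
    (hu : StronglyMeasurable u) (hu' : LocallyIntegrable u μ) {r : ℝ} (hr : 0 < r) {S : Set E}
    {c : ℝ≥0∞} (h : ∀ w ∈ ball (0 : E) r, ∫⁻ y in S, ‖u (y + w) - u y‖ₑ ∂μ ≤ c) :
    ∫⁻ y in S, ‖(⨍ z in ball y r, u z ∂μ) - u y‖ₑ ∂μ ≤ c := by
  have hball : μ (ball 0 r) ≠ 0 := (measure_ball_pos μ 0 hr).ne'
  have hball' : μ (ball 0 r) ≠ ⊤ := measure_ball_lt_top.ne
  have hint (y : E) : IntegrableOn (fun w => u (y + w)) (ball 0 r) μ := by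
    have hy := (measurePreserving_add_left μ y).integrableOn_comp_preimage
      (f := u) (s := ball y r) (measurableEmbedding_addLeft y)
    refine IntegrableOn.mono_set (hy.2 ?_) fun w hw => ?_
    · exact (hu'.integrableOn_isCompact (isCompact_closedBall y r)).mono_set
        ball_subset_closedBall
    · simpa using hw
  have havg (y : E) :
      ‖(⨍ z in ball y r, u z ∂μ) - u y‖ₑ ≤ ⨍⁻ w in ball 0 r, ‖u (y + w) - u y‖ₑ ∂μ := by
    rw [setAverage_ball_eq_setAverage_ball_zero, ← setAverage_sub_const hball hball' (hint y)]
    exact enorm_integral_le_lintegral_enorm _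
  calc ∫⁻ y in S, ‖(⨍ z in ball y r, u z ∂μ) - u y‖ₑ ∂μ
      ≤ ∫⁻ y in S, ⨍⁻ w in ball 0 r, ‖u (y + w) - u y‖ₑ ∂μ ∂μ := lintegral_mono havg
    _ = ⨍⁻ w in ball 0 r, ∫⁻ y in S, ‖u (y + w) - u y‖ₑ ∂μ ∂μ := by
        refine lintegral_lintegral_swap (Measurable.aemeasurable ?_)
        exact ((hu.comp_measurable measurable_add).sub
          (hu.comp_measurable measurable_fst)).enorm
    _ ≤ ⨍⁻ _ in ball (0 : E) r, c ∂μ :=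
        lintegral_mono_ae <| Measure.ae_smul_measure
          (ae_restrict_of_forall_mem measurableSet_ball h) _
    _ = c := setLAverage_const hball hball' c

end BallAverage

section Divergence

variable {N : ℕ} {z : Euc N → Euc N}

lemma continuous_divg (hz : ContDiff ℝ 1 z) : Continuous (divg z) := by
  have := hz.continuous_fderiv one_ne_zero
  unfold divg
  fun_prop

lemma tsupport_divg_subset (z : Euc N → Euc N) : tsupport (divg z) ⊆ tsupport z := by
  refine closure_minimal (fun x hx => ?_) (isClosed_tsupport z)
  contrapose! hx
  have hderiv : fderiv ℝ z x = 0 :=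
    image_eq_zero_of_notMem_tsupport fun h => hx (tsupport_fderiv_subset ℝ h)
  simp [divg, hderiv]

lemma integrable_mul_divg {μ : Measure (Euc N)} {u : Euc N → ℝ} (hu : Integrable u μ)
    (hz : ContDiff ℝ 1 z) (hc : HasCompactSupport z) : Integrable (fun x => u x * divg z x) μ := by
  have hc' : HasCompactSupport (divg z) :=
    hc.of_isClosed_subset (isClosed_tsupport _) (tsupport_divg_subset z)
  obtain ⟨C, hC⟩ := (continuous_divg hz).bounded_above_of_compact_support hc'
  exact hu.mul_bdd (continuous_divg hz).aestronglyMeasurable (Eventually.of_forall hC)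

lemma setIntegral_mul_divg_eq_integral {V : Set (Euc N)} (hz : tsupport z ⊆ V) (u : Euc N → ℝ) :
    ∫ x in V, u x * divg z x = ∫ x, u x * divg z x :=
  setIntegral_eq_integral_of_forall_compl_eq_zero fun x hx => by
    rw [image_eq_zero_of_notMem_tsupport fun h => hx (hz (tsupport_divg_subset z h)), mul_zero]

lemma divg_add {w : Euc N → Euc N} (hz : ContDiff ℝ 1 z) (hw : ContDiff ℝ 1 w) (x : Euc N) :
    divg (z + w) x = divg z x + divg w x := by
  simp [divg, fderiv_add (hz.differentiable one_ne_zero x) (hw.differentiable one_ne_zero x),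
    Finset.sum_add_distrib]

lemma divg_smul {χ : Euc N → ℝ} (hχ : ContDiff ℝ 1 χ) (hz : ContDiff ℝ 1 z) (x : Euc N) :
    divg (fun y => χ y • z y) x = χ x * divg z x + fderiv ℝ χ x (z x) := by
  have hsum : fderiv ℝ χ x (z x) = ∑ i, fderiv ℝ χ x (EuclideanSpace.single i 1) * z x i := by
    conv_lhs => rw [← (EuclideanSpace.basisFun (Fin N) ℝ).sum_repr (z x)]
    simp [mul_comm]
  simp [divg, hsum, fderiv_fun_smul (hχ.differentiable one_ne_zero x)
    (hz.differentiable one_ne_zero x), Finset.sum_add_distrib, Finset.mul_sum]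

lemma divg_smul_const {θ : Euc N → ℝ} (hθ : ContDiff ℝ 1 θ) (h x : Euc N) :
    divg (fun y => θ y • h) x = fderiv ℝ θ x h := by
  rw [divg_smul hθ contDiff_const]
  simp [divg]

end Divergence

section TotalVariation

variable {N : ℕ} {φ : Euc N → Euc N → ℝ} {Ω : Set (Euc N)} {lam Lam : ℝ} {u : Euc N → ℝ}

lemma MetricIntegrand.nonneg (hφ : MetricIntegrand φ Ω lam Lam) {x : Euc N} (hx : x ∈ closure Ω)
    (ξ : Euc N) : 0 ≤ φ x ξ := by
  obtain ⟨-, -, -, hlam, -, hbound⟩ := hφ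
  exact (mul_nonneg hlam.le (norm_nonneg ξ)).trans (hbound x hx ξ).1

lemma MetricIntegrand.smul (hφ : MetricIntegrand φ Ω lam Lam) {x : Euc N} (hx : x ∈ closure Ω)
    (t : ℝ) (ξ : Euc N) : φ x (t • ξ) = |t| * φ x ξ :=
  hφ.2.2.1 x hx t ξ

lemma MetricIntegrand.neg (hφ : MetricIntegrand φ Ω lam Lam) {x : Euc N} (hx : x ∈ closure Ω)
    (ξ : Euc N) : φ x (-ξ) = φ x ξ := by
  simpa using hφ.smul hx (-1) ξ

lemma MetricIntegrand.zero (hφ : MetricIntegrand φ Ω lam Lam) {x : Euc N} (hx : x ∈ closure Ω) :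
    φ x 0 = 0 := by
  simpa using hφ.smul hx 0 0

lemma polarFn_le_one_of_forall_inner_le {x z : Euc N} (h : ∀ ξ, ⟪z, ξ⟫ ≤ φ x ξ) :
    polarFn φ x z ≤ 1 := by
  refine Real.sSup_le ?_ zero_le_one
  rintro _ ⟨ξ, hξ, rfl⟩
  exact (h ξ).trans hξ

lemma polarFn_zero_le_one (x : Euc N) : polarFn φ x 0 ≤ 1 := by
  refine Real.sSup_le ?_ zero_le_one
  rintro _ ⟨ξ, -, rfl⟩
  simp

lemma MetricIntegrand.inner_le_of_polarFn_le_one (hφ : MetricIntegrand φ Ω lam Lam) {x z : Euc N}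
    (hx : x ∈ closure Ω) (h : polarFn φ x z ≤ 1) (ξ : Euc N) : ⟪z, ξ⟫ ≤ φ x ξ := by
  obtain ⟨-, -, -, hlam, -, hbound⟩ := id hφ
  have hbdd : BddAbove {r : ℝ | ∃ ξ, φ x ξ ≤ 1 ∧ r = ⟪z, ξ⟫} := by
    refine ⟨‖z‖ * lam⁻¹, ?_⟩
    rintro _ ⟨ξ, hξ, rfl⟩
    have hnorm : ‖ξ‖ ≤ lam⁻¹ := by
      rw [← one_div, le_div_iff₀' hlam]
      exact (hbound x hx ξ).1.trans hξ
    exact (real_inner_le_norm z ξ).trans (by gcongr)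
  rcases eq_or_ne ξ 0 with rfl | hξ
  · simp [hφ.zero hx]
  · have hpos : 0 < φ x ξ := (mul_pos hlam (norm_pos_iff.2 hξ)).trans_le (hbound x hx ξ).1
    have hunit : φ x ((φ x ξ)⁻¹ • ξ) ≤ 1 := by
      rw [hφ.smul hx, abs_of_pos (inv_pos.2 hpos), inv_mul_cancel₀ hpos.ne']
    have hle : ⟪z, (φ x ξ)⁻¹ • ξ⟫ ≤ 1 := (le_csSup hbdd ⟨_, hunit, rfl⟩).trans h
    rwa [inner_smul_right, inv_mul_le_iff₀ hpos, mul_one] at hle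

/-- The test fields in the definition of `phiTV φ Ω`. -/
structure IsAdmissible (φ : Euc N → Euc N → ℝ) (Ω : Set (Euc N)) (z : Euc N → Euc N) : Prop where
  contDiff : ContDiff ℝ 1 z
  hasCompactSupport : HasCompactSupport z
  tsupport_subset : tsupport z ⊆ Ω
  polarFn_le_one (x : Euc N) : polarFn φ x (z x) ≤ 1

namespace IsAdmissible

variable {z : Euc N → Euc N}

lemma of_forall_mem (hz : ContDiff ℝ 1 z) (hc : HasCompactSupport z) (hs : tsupport z ⊆ Ω)
    (h : ∀ x ∈ Ω, polarFn φ x (z x) ≤ 1) : IsAdmissible φ Ω z where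
  contDiff := hz
  hasCompactSupport := hc
  tsupport_subset := hs
  polarFn_le_one x := by
    by_cases hx : x ∈ Ω
    · exact h x hx
    · rw [image_eq_zero_of_notMem_tsupport fun hx' => hx (hs hx')]
      exact polarFn_zero_le_one x

lemma of_tsupport_subset {V : Set (Euc N)} (hz : IsAdmissible φ Ω z) (h : tsupport z ⊆ V) :
    IsAdmissible φ V z :=
  { hz with tsupport_subset := h }

lemma ofReal_integral_le_phiTV (hz : IsAdmissible φ Ω z) (u : Euc N → ℝ) :
    ENNReal.ofReal (∫ x in Ω, u x * divg z x) ≤ phiTV φ Ω u :=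
  le_iSup_of_le z <| le_iSup_of_le hz.contDiff <| le_iSup_of_le hz.hasCompactSupport <|
    le_iSup_of_le hz.tsupport_subset <| le_iSup_of_le hz.polarFn_le_one le_rfl

lemma add_of_disjoint {w : Euc N → Euc N} (hz : IsAdmissible φ Ω z) (hw : IsAdmissible φ Ω w)
    (h : Disjoint (tsupport z) (tsupport w)) : IsAdmissible φ Ω (z + w) where
  contDiff := hz.contDiff.add hw.contDiff
  hasCompactSupport := hz.hasCompactSupport.add hw.hasCompactSupport
  tsupport_subset :=
    (tsupport_add z w).trans (union_subset hz.tsupport_subset hw.tsupport_subset)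
  polarFn_le_one x := by
    by_cases hx : x ∈ tsupport z
    · have hw0 : w x = 0 := image_eq_zero_of_notMem_tsupport (disjoint_left.1 h hx)
      simpa [hw0] using hz.polarFn_le_one x
    · have hz0 : z x = 0 := image_eq_zero_of_notMem_tsupport hx
      simpa [hz0] using hw.polarFn_le_one x

lemma smul (hφ : MetricIntegrand φ Ω lam Lam) (hz : IsAdmissible φ Ω z) {χ : Euc N → ℝ}
    (hχ : ContDiff ℝ 1 χ) (h01 : ∀ x, χ x ∈ Icc (0 : ℝ) 1) :
    IsAdmissible φ Ω (fun x => χ x • z x) := by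
  refine of_forall_mem (hχ.smul hz.contDiff)
    (hz.hasCompactSupport.mono (Function.support_smul_subset_right χ z))
    ((tsupport_smul_subset_right χ z).trans hz.tsupport_subset) fun x hx =>
    polarFn_le_one_of_forall_inner_le fun ξ => ?_
  have hx' := subset_closure hx
  calc ⟪χ x • z x, ξ⟫ = χ x * ⟪z x, ξ⟫ := real_inner_smul_left _ _ _
    _ ≤ χ x * φ x ξ := by
        gcongr
        · exact (h01 x).1
        · exact hφ.inner_le_of_polarFn_le_one hx' (hz.polarFn_le_one x) ξ
    _ ≤ φ x ξ := mul_le_of_le_one_left (hφ.nonneg hx' ξ) (h01 x).2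

lemma abs_inner_le (hφ : MetricIntegrand φ Ω lam Lam) (hz : IsAdmissible φ Ω z) {x : Euc N}
    (hx : x ∈ closure Ω) (ξ : Euc N) : |⟪z x, ξ⟫| ≤ φ x ξ := by
  have hneg := hφ.inner_le_of_polarFn_le_one hx (hz.polarFn_le_one x) (-ξ)
  rw [hφ.neg hx, inner_neg_right] at hneg
  exact abs_le.2 ⟨by linarith, hφ.inner_le_of_polarFn_le_one hx (hz.polarFn_le_one x) ξ⟩

end IsAdmissible

lemma phiTV_le_of_forall_isAdmissible {c : ℝ≥0∞}
    (h : ∀ z, IsAdmissible φ Ω z → ENNReal.ofReal (∫ x in Ω, u x * divg z x) ≤ c) :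
    phiTV φ Ω u ≤ c :=
  iSup_le fun z => iSup_le fun h1 => iSup_le fun h2 => iSup_le fun h3 => iSup_le fun h4 =>
    h z ⟨h1, h2, h3, h4⟩

lemma exists_isAdmissible_of_lt_phiTV {c : ℝ≥0∞} (h : c < phiTV φ Ω u) :
    ∃ z, IsAdmissible φ Ω z ∧ c < ENNReal.ofReal (∫ x in Ω, u x * divg z x) := by
  contrapose! h
  exact phiTV_le_of_forall_isAdmissible h

lemma ofReal_integral_le_TV {z : Euc N → Euc N} (hz : ContDiff ℝ 1 z) (hc : HasCompactSupport z)
    (hs : tsupport z ⊆ Ω) (hle : ∀ x, ‖z x‖ ≤ 1) (u : Euc N → ℝ) :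
    ENNReal.ofReal (∫ x in Ω, u x * divg z x) ≤ TV Ω u :=
  le_iSup_of_le z <| le_iSup_of_le hz <| le_iSup_of_le hc <| le_iSup_of_le hs <|
    le_iSup_of_le hle le_rfl

lemma ofReal_mul_TV_le_phiTV (hlam : 0 ≤ lam) (h : ∀ x ∈ Ω, ∀ ξ, lam * ‖ξ‖ ≤ φ x ξ)
    (u : Euc N → ℝ) : ENNReal.ofReal lam * TV Ω u ≤ phiTV φ Ω u := by
  simp only [TV, ENNReal.mul_iSup]
  refine iSup_le fun z => iSup_le fun hz => iSup_le fun hc => iSup_le fun hs =>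
    iSup_le fun hle => ?_
  have hadm : IsAdmissible φ Ω (fun x => lam • z x) := by
    refine .of_forall_mem (hz.const_smul lam)
      (hc.mono (Function.support_smul_subset_right (fun _ => lam) z))
      ((tsupport_smul_subset_right (fun _ => lam) z).trans hs) fun x hx =>
      polarFn_le_one_of_forall_inner_le fun ξ => ?_
    calc ⟪lam • z x, ξ⟫ ≤ ‖lam • z x‖ * ‖ξ‖ := real_inner_le_norm _ _
      _ ≤ lam * ‖ξ‖ := by
          rw [norm_smul, Real.norm_of_nonneg hlam]
          gcongr
          exact mul_le_of_le_one_right hlam (hle x)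
      _ ≤ φ x ξ := h x hx ξ
  have hdivg (x : Euc N) : u x * divg (fun y => lam • z y) x = lam * (u x * divg z x) := by
    rw [divg_smul contDiff_const hz]
    simp [mul_left_comm]
  rw [← ENNReal.ofReal_mul hlam, ← integral_const_mul]
  simpa only [hdivg] using hadm.ofReal_integral_le_phiTV u

lemma phiTV_congr_ae {v : Euc N → ℝ} (h : u =ᵐ[volume.restrict Ω] v) :
    phiTV φ Ω u = phiTV φ Ω v := by
  have hint (z : Euc N → Euc N) : ∫ x in Ω, u x * divg z x = ∫ x in Ω, v x * divg z x :=
    integral_congr_ae (h.mono fun x hx => by simp only [hx])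
  simp only [phiTV, hint]

lemma exists_isCompact_phiTV_sdiff_le (hu : IntegrableOn u Ω) (hTV : phiTV φ Ω u ≠ ⊤) {δ : ℝ≥0∞}
    (hδ : δ ≠ 0) : ∃ K, IsCompact K ∧ K ⊆ Ω ∧ phiTV φ (Ω \ K) u ≤ δ := by
  rcases le_or_gt (phiTV φ Ω u) δ with hle | hlt
  · exact ⟨∅, isCompact_empty, empty_subset Ω, by simpa using hle⟩
  obtain ⟨z₀, hz₀, hlt₀⟩ := exists_isAdmissible_of_lt_phiTV
    (ENNReal.sub_lt_self hTV hlt.ne_bot hδ)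
  have hmax := tsub_le_iff_right.1 hlt₀.le
  have hpos : 0 < ∫ x in Ω, u x * divg z₀ x := ENNReal.ofReal_pos.1 (pos_of_gt hlt₀)
  refine ⟨tsupport z₀, hz₀.hasCompactSupport, hz₀.tsupport_subset,
    phiTV_le_of_forall_isAdmissible fun z hz => ?_⟩
  have hzΩ : IsAdmissible φ Ω z := hz.of_tsupport_subset (hz.tsupport_subset.trans sdiff_subset)
  rw [setIntegral_mul_divg_eq_integral hz.tsupport_subset,
    ← setIntegral_mul_divg_eq_integral hzΩ.tsupport_subset]
  rcases le_total (∫ x in Ω, u x * divg z x) 0 with hneg | hnonneg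
  · simp [ENNReal.ofReal_of_nonpos hneg]
  have hadd := (hz₀.add_of_disjoint hzΩ (disjoint_right.2 fun x hx =>
    (hz.tsupport_subset hx).2)).ofReal_integral_le_phiTV u
  simp only [divg_add hz₀.contDiff hzΩ.contDiff, mul_add] at hadd
  rw [integral_add (integrable_mul_divg hu hz₀.contDiff hz₀.hasCompactSupport)
    (integrable_mul_divg hu hz.contDiff hz.hasCompactSupport),
    ENNReal.ofReal_add hpos.le hnonneg] at hadd
  exact (ENNReal.add_le_add_iff_left ENNReal.ofReal_ne_top).1 (hadd.trans hmax)

end TotalVariation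

section Cutoff

lemma tsupport_subset_of_eventually_eq_zero {X F : Type*} [TopologicalSpace X] [Zero F]
    {Ω : Set X} (hΩ : IsOpen Ω) {v : X → F} (hv : Function.support v ⊆ Ω)
    (h : ∀ q ∈ frontier Ω, ∀ᶠ y in 𝓝[Ω] q, v y = 0) : tsupport v ⊆ Ω := by
  intro y hy
  by_contra hyΩ
  have hfr : y ∈ frontier Ω := ⟨closure_mono hv hy, by rwa [hΩ.interior_eq]⟩
  refine notMem_tsupport_iff_eventuallyEq.2 ?_ hy
  filter_upwards [eventually_nhdsWithin_iff.1 (h y hfr)] with x hx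
  by_contra hne
  exact hne (hx (hv hne))

variable {N : ℕ} {φ : Euc N → Euc N → ℝ} {Ω : Set (Euc N)} {lam Lam : ℝ} {u : Euc N → ℝ}
  {χ : Euc N → ℝ} {C : ℝ≥0} {z : Euc N → Euc N}

lemma integrable_mul_fderiv_apply {μ : Measure (Euc N)} (hu : Integrable u μ)
    (hχ : LipschitzWith C χ) (hz : Continuous z) (hc : HasCompactSupport z) :
    Integrable (fun x => u x * fderiv ℝ χ x (z x)) μ := by
  obtain ⟨B, hB⟩ := hz.bounded_above_of_compact_support hc
  refine hu.mul_bdd (c := C * B) ?_ (Eventually.of_forall fun x => ?_)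
  · exact (isBoundedBilinearMap_apply.continuous.comp_stronglyMeasurable
      ((stronglyMeasurable_fderiv_of_finiteDimensional χ).prodMk
        hz.stronglyMeasurable)).aestronglyMeasurable
  · exact (fderiv ℝ χ x).le_of_opNorm_le_of_le (norm_fderiv_le_of_lipschitz ℝ hχ) (hB x)

lemma tendsto_integral_mul_divg_mollify_smul {μ : Measure (Euc N)} (hμ : μ ≪ volume)
    (hu : Integrable u μ) (hχ : LipschitzWith C χ) (h01 : ∀ x, χ x ∈ Icc (0 : ℝ) 1)
    (hz : ContDiff ℝ 1 z) (hc : HasCompactSupport z) :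
    Tendsto (fun k => ∫ x, u x * divg (fun y => mollify volume k χ y • z y) x ∂μ) atTop
      (𝓝 (∫ x, u x * (χ x * divg z x + fderiv ℝ χ x (z x)) ∂μ)) := by
  obtain ⟨B, hB⟩ := hz.continuous.bounded_above_of_compact_support hc
  have hmol (k : ℕ) : ContDiff ℝ 1 (mollify volume k χ) :=
    contDiff_mollify k hχ.continuous.locallyIntegrable
  have hmem (k : ℕ) (x : Euc N) : mollify volume k χ x ∈ Icc (0 : ℝ) 1 :=
    mollify_mem_Icc k hχ.continuous.aestronglyMeasurable h01 x
  simp only [fun k => divg_smul (hmol k) hz]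
  refine tendsto_integral_of_dominated_convergence
    (fun x => ‖u x * divg z x‖ + ‖u x‖ * (C * B))
    (fun k => hu.aestronglyMeasurable.mul (Continuous.aestronglyMeasurable ?_))
    ((integrable_mul_divg hu hz hc).norm.add (hu.norm.mul_const _))
    (fun k => Eventually.of_forall fun x => ?_) ?_
  · exact ((hmol k).continuous.mul (continuous_divg hz)).add
      (((hmol k).continuous_fderiv one_ne_zero).clm_apply hz.continuous)
  · have hdivg : ‖mollify volume k χ x * divg z x‖ ≤ ‖divg z x‖ := by
      rw [norm_mul, Real.norm_of_nonneg (hmem k x).1]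
      exact mul_le_of_le_one_left (norm_nonneg _) (hmem k x).2
    have hderiv : ‖fderiv ℝ (mollify volume k χ) x (z x)‖ ≤ C * B :=
      (fderiv ℝ _ x).le_of_opNorm_le_of_le (norm_fderiv_mollify_le hχ k x) (hB x)
    rw [norm_mul, norm_mul, ← mul_add]
    gcongr
    exact (norm_add_le _ _).trans (add_le_add hdivg hderiv)
  · filter_upwards [hμ.ae_le (ae_tendsto_fderiv_mollify (μ := volume) hχ)] with x hx
    exact (((tendsto_mollify hχ.continuous x).mul_const _).add
      (((ContinuousLinearMap.apply ℝ ℝ (z x)).continuous.tendsto _).comp hx)).const_mul _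

lemma IsAdmissible.ofReal_integral_cutoff_le (hφ : MetricIntegrand φ Ω lam Lam)
    (hu : IntegrableOn u Ω) {K : Set (Euc N)} (hK : IsCompact K) (hχ : LipschitzWith C χ)
    (h01 : ∀ x, χ x ∈ Icc (0 : ℝ) 1) (hχK : Disjoint (tsupport χ) K)
    (hz : IsAdmissible φ Ω z) :
    ENNReal.ofReal (∫ x in Ω, u x * (χ x * divg z x + fderiv ℝ χ x (z x))) ≤
      phiTV φ (Ω \ K) u := by
  have hlim := tendsto_integral_mul_divg_mollify_smul Measure.absolutelyContinuous_restrict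
    hu hχ h01 hz.contDiff hz.hasCompactSupport
  refine le_of_tendsto (ENNReal.tendsto_ofReal hlim) ?_
  filter_upwards [eventually_disjoint_tsupport_mollify (μ := volume) hK hχK] with k hk
  have hadm : IsAdmissible φ Ω (fun x => mollify volume k χ x • z x) :=
    hz.smul hφ (contDiff_mollify k hχ.continuous.locallyIntegrable)
      (mollify_mem_Icc k hχ.continuous.aestronglyMeasurable h01)
  have hsupp : tsupport (fun x => mollify volume k χ x • z x) ⊆ Ω \ K :=
    fun x hx => ⟨hadm.tsupport_subset hx,
      disjoint_left.1 hk (tsupport_smul_subset_left (mollify volume k χ) z hx)⟩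
  rw [setIntegral_mul_divg_eq_integral hadm.tsupport_subset,
    ← setIntegral_mul_divg_eq_integral hsupp]
  exact (hadm.of_tsupport_subset hsupp).ofReal_integral_le_phiTV u

lemma IsAdmissible.ofReal_integral_mul_divg_le (hφ : MetricIntegrand φ Ω lam Lam)
    (hΩ : MeasurableSet Ω) (hu : IntegrableOn u Ω) {K : Set (Euc N)} (hK : IsCompact K)
    (hχ : LipschitzWith C χ) (h01 : ∀ x, χ x ∈ Icc (0 : ℝ) 1) (hχK : Disjoint (tsupport χ) K)
    (hz : IsAdmissible φ Ω z) :
    ENNReal.ofReal (∫ x in Ω, χ x * u x * divg z x) ≤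
      phiTV φ (Ω \ K) u + ∫⁻ x in Ω, ENNReal.ofReal (|u x| * φ x (gradient χ x)) := by
  have hderiv := integrable_mul_fderiv_apply hu hχ hz.contDiff.continuous hz.hasCompactSupport
  have hdivg : IntegrableOn (fun x => u x * (χ x * divg z x)) Ω := by
    refine ((integrable_mul_divg hu hz.contDiff hz.hasCompactSupport).bdd_mul (c := 1)
      hχ.continuous.aestronglyMeasurable (Eventually.of_forall fun x => ?_)).congr
      (Eventually.of_forall fun x => mul_left_comm _ _ _)
    rw [Real.norm_of_nonneg (h01 x).1]
    exact (h01 x).2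
  have hsplit : ∫ x in Ω, χ x * u x * divg z x =
      (∫ x in Ω, u x * (χ x * divg z x + fderiv ℝ χ x (z x))) -
        ∫ x in Ω, u x * fderiv ℝ χ x (z x) := by
    simp only [mul_add]
    rw [integral_add hdivg hderiv, add_sub_cancel_right]
    exact integral_congr_ae (Eventually.of_forall fun x => by ring)
  have hgrad : ∫⁻ x in Ω, ‖u x * fderiv ℝ χ x (z x)‖ₑ ≤
      ∫⁻ x in Ω, ENNReal.ofReal (|u x| * φ x (gradient χ x)) := by
    refine setLIntegral_mono_ae' hΩ (Eventually.of_forall fun x hx => ?_)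
    rw [← ofReal_norm, norm_mul, Real.norm_eq_abs, Real.norm_eq_abs, ← inner_gradient_left,
      real_inner_comm]
    gcongr
    exact hz.abs_inner_le hφ (subset_closure hx) _
  have hle : ∫ x in Ω, χ x * u x * divg z x ≤
      (∫ x in Ω, u x * (χ x * divg z x + fderiv ℝ χ x (z x))) +
        ‖∫ x in Ω, u x * fderiv ℝ χ x (z x)‖ := by
    rw [hsplit, sub_eq_add_neg]
    gcongr
    exact neg_le_abs _
  refine (ENNReal.ofReal_le_ofReal hle).trans (ENNReal.ofReal_add_le.trans ?_)
  rw [ofReal_norm]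
  exact add_le_add (hz.ofReal_integral_cutoff_le hφ hu hK hχ h01 hχK)
    ((enorm_integral_le_lintegral_enorm _).trans hgrad)

lemma IsPhiLeastGradient.phiTV_le_add_lintegral_gradient (hlg : IsPhiLeastGradient φ Ω u)
    (hφ : MetricIntegrand φ Ω lam Lam) (hΩo : IsOpen Ω) (hΩb : IsBounded Ω)
    (hu : IntegrableOn u Ω) {K : Set (Euc N)} (hK : IsCompact K) (hχ : LipschitzWith C χ)
    (h01 : ∀ x, χ x ∈ Icc (0 : ℝ) 1) (hχK : Disjoint (tsupport χ) K)
    (hχ1 : ∀ q ∈ frontier Ω, ∀ᶠ y in 𝓝[Ω] q, χ y = 1) :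
    phiTV φ Ω u ≤
      phiTV φ (Ω \ K) u + ∫⁻ x in Ω, ENNReal.ofReal (|u x| * φ x (gradient χ x)) := by
  set v : Euc N → ℝ := Ω.indicator fun y => (χ y - 1) * u y with hv
  have hsupp : tsupport v ⊆ Ω := by
    refine tsupport_subset_of_eventually_eq_zero hΩo support_indicator_subset fun q hq => ?_
    filter_upwards [hχ1 q hq] with y hy
    simp [hv, hy]
  have hcomp : HasCompactSupport v :=
    isCompact_of_isClosed_isBounded (isClosed_tsupport v) (hΩb.subset hsupp)
  refine (hlg v hcomp hsupp).trans (phiTV_le_of_forall_isAdmissible fun z hz => ?_)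
  have huv : EqOn (fun x => (u + v) x * divg z x) (fun x => χ x * u x * divg z x) Ω := by
    intro x hx
    simp only [hv, Pi.add_apply, indicator_of_mem hx]
    ring
  rw [setIntegral_congr_fun hΩo.measurableSet huv]
  exact hz.ofReal_integral_mul_divg_le hφ hΩo.measurableSet hu hK hχ h01 hχK

end Cutoff

section Translation

lemma integral_translate_sub_mul {G : Type*} [AddCommGroup G] [MeasurableSpace G]
    [MeasurableAdd G] {μ : Measure G} [μ.IsAddRightInvariant] {u θ : G → ℝ} {h : G}
    (h₁ : Integrable (fun y => u (y + h) * θ y) μ) (h₂ : Integrable (fun y => u y * θ y) μ) :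
    ∫ y, (u (y + h) - u y) * θ y ∂μ = ∫ y, u y * (θ (y - h) - θ y) ∂μ := by
  have h₃ : Integrable (fun y => u y * θ (y - h)) μ := by
    simpa using h₁.comp_sub_right h
  simp only [sub_mul, mul_sub]
  rw [integral_sub h₁ h₂, integral_sub h₃ h₂,
    ← integral_add_right_eq_self (fun y => u y * θ (y - h)) h]
  simp only [add_sub_cancel_right]

variable {N : ℕ} {u : Euc N → ℝ} {S V : Set (Euc N)} {h : Euc N} {l : ℝ}

lemma ofReal_integral_translate_sub_mul_le {θ : Euc N → ℝ} (hu : Integrable u)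
    (hθ : ContDiff ℝ 1 θ) (hc : HasCompactSupport θ) (hθS : tsupport θ ⊆ S) (hθ1 : ∀ x, ‖θ x‖ ≤ 1)
    (hSV : ∀ y ∈ S, ∀ τ ∈ Icc (0 : ℝ) 1, y + τ • h ∈ V) (hl₀ : 0 < l)
    (hl : ∀ y, ‖h‖ * volume.real (Ioc (0 : ℝ) 1 ∩ {τ | y - τ • h ∈ S}) ≤ l) :
    ENNReal.ofReal (∫ y, (u (y + h) - u y) * θ y) ≤ ENNReal.ofReal l * TV V u := by
  obtain ⟨C, hC⟩ := hθ.lipschitzWith_of_hasCompactSupport hc one_ne_zero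
  have hint {w : Euc N → ℝ} (hw : Integrable w) : Integrable fun y => w y * θ y :=
    hw.mul_bdd hθ.continuous.aestronglyMeasurable (Eventually.of_forall hθ1)
  set z : Euc N → Euc N := fun y => segmentAverage θ h y • (-l⁻¹ • h) with hz
  set Q : Set (Euc N) := (fun p : ℝ × Euc N => p.2 + p.1 • h) '' (Icc 0 1 ×ˢ tsupport θ)
  have hQ : IsCompact Q := (isCompact_Icc.prod hc).image (by fun_prop)
  have htsupp : tsupport z ⊆ Q :=
    closure_minimal ((Function.support_smul_subset_left _ _).trans
      (support_segmentAverage_subset θ h)) hQ.isClosed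
  have hzV : tsupport z ⊆ V := htsupp.trans <| by
    rintro _ ⟨⟨τ, y⟩, ⟨hτ, hy⟩, rfl⟩
    exact hSV y (hθS hy) τ hτ
  have hz1 (y : Euc N) : ‖z y‖ ≤ 1 := by
    have hseg := norm_segmentAverage_le hθ1 hθS h y
    rw [hz, norm_smul, norm_smul, norm_neg, norm_inv, Real.norm_of_nonneg hl₀.le, mul_left_comm,
      inv_mul_le_iff₀ hl₀, mul_one, mul_comm]
    exact (mul_le_mul_of_nonneg_left hseg (norm_nonneg h)).trans (hl y)
  have hdivg (y : Euc N) : θ (y - h) - θ y = l * divg z y := by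
    rw [hz, divg_smul_const (contDiff_segmentAverage hθ hC h), map_smul,
      fderiv_segmentAverage_apply_self hθ hC, smul_eq_mul]
    field_simp
    ring
  rw [integral_translate_sub_mul (hint (hu.comp_add_right h)) (hint hu)]
  simp only [hdivg, mul_left_comm (u _)]
  rw [integral_const_mul, ENNReal.ofReal_mul hl₀.le, ← setIntegral_mul_divg_eq_integral hzV]
  gcongr
  exact ofReal_integral_le_TV ((contDiff_segmentAverage hθ hC h).smul contDiff_const)
    (hQ.of_isClosed_subset (isClosed_tsupport z) htsupp) hzV hz1 u

lemma setLIntegral_enorm_translate_sub_le (hu : Integrable u) (hS : IsOpen S)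
    (hSV : ∀ y ∈ S, ∀ τ ∈ Icc (0 : ℝ) 1, y + τ • h ∈ V) (hl₀ : 0 < l)
    (hl : ∀ y, ‖h‖ * volume.real (Ioc (0 : ℝ) 1 ∩ {τ | y - τ • h ∈ S}) ≤ l) :
    ∫⁻ y in S, ‖u (y + h) - u y‖ₑ ≤ ENNReal.ofReal l * TV V u := by
  exact setLIntegral_enorm_le_of_forall_test hS ((hu.comp_add_right h).sub hu)
    fun θ hθ hc hθS hθ1 => ofReal_integral_translate_sub_mul_le hu hθ hc hθS hθ1 hSV hl₀ hl

lemma setLIntegral_enorm_translate_sub_le_of_norm_le (hu : Integrable u) (hS : IsOpen S)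
    (hSV : ∀ y ∈ S, ∀ τ ∈ Icc (0 : ℝ) 1, y + τ • h ∈ V) (hl₀ : 0 < l) (hl : ‖h‖ ≤ l) :
    ∫⁻ y in S, ‖u (y + h) - u y‖ₑ ≤ ENNReal.ofReal l * TV V u := by
  refine setLIntegral_enorm_translate_sub_le hu hS hSV hl₀ fun y => ?_
  refine (mul_le_of_le_one_right (norm_nonneg h) ?_).trans hl
  exact (measureReal_mono inter_subset_left (by simp)).trans (by simp)

end Translation

section Graph

variable {E : Type*} [NormedAddCommGroup E] [NormedSpace ℝ E]

/-- `G` is the height above a Lipschitz graph, measured along the unit vector `e`: it is Lipschitz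
and increases at unit speed in the direction `e`. The graph itself is the zero set of `G`. -/
structure IsGraphHeight (e : E) (G : E → ℝ) (M : ℝ≥0) : Prop where
  norm_eq_one : ‖e‖ = 1
  lipschitzWith : LipschitzWith M G
  apply_add_smul : ∀ (y : E) (t : ℝ), G (y + t • e) = G y + t

/-- The projection along `e` onto the graph with height function `G`. -/
def graphProj (e : E) (G : E → ℝ) (y : E) : E := y - G y • e

/-- The points at height between `a` and `b` above a point of `W` of the graph. -/
def graphSlab (e : E) (G : E → ℝ) (W : Set E) (a b : ℝ) : Set E :=
  {y | G y ∈ Ioo a b ∧ graphProj e G y ∈ W}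

/-- The translate of `y` along `e` by a multiple of `s` whose height lies in `[s, 2 * s)`. -/
def layerSample (e : E) (G : E → ℝ) (s : ℝ) (y : E) : E := y - ((⌊G y / s⌋ - 1) * s) • e

lemma graphSlab_mono {e : E} {G : E → ℝ} {W W' : Set E} {a a' b b' : ℝ} (hW : W ⊆ W')
    (ha : a' ≤ a) (hb : b ≤ b') : graphSlab e G W a b ⊆ graphSlab e G W' a' b' :=
  fun _ hy => ⟨Ioo_subset_Ioo ha hb hy.1, hW hy.2⟩

namespace IsGraphHeight

variable {e : E} {G : E → ℝ} {M : ℝ≥0} {W : Set E} {a b s t : ℝ} {y z : E}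

lemma apply_sub_smul (hG : IsGraphHeight e G M) (y : E) (t : ℝ) : G (y - t • e) = G y - t := by
  rw [sub_eq_add_neg, ← neg_smul, hG.apply_add_smul, sub_eq_add_neg]

lemma graphProj_sub_smul (hG : IsGraphHeight e G M) (y : E) (t : ℝ) :
    graphProj e G (y - t • e) = graphProj e G y := by
  simp only [graphProj, hG.apply_sub_smul, sub_smul]
  abel

lemma graphProj_add_smul (hG : IsGraphHeight e G M) (y : E) (t : ℝ) :
    graphProj e G (y + t • e) = graphProj e G y := by
  simpa using hG.graphProj_sub_smul y (-t)

lemma apply_graphProj (hG : IsGraphHeight e G M) (y : E) : G (graphProj e G y) = 0 := by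
  rw [graphProj, hG.apply_sub_smul, sub_self]

lemma dist_graphProj (hG : IsGraphHeight e G M) (y : E) : dist y (graphProj e G y) = |G y| := by
  rw [dist_eq_norm, graphProj, sub_sub_cancel, norm_smul, hG.norm_eq_one, mul_one,
    Real.norm_eq_abs]

lemma abs_sub_le (hG : IsGraphHeight e G M) (y z : E) : |G y - G z| ≤ M * dist y z := by
  simpa [Real.dist_eq] using hG.lipschitzWith.dist_le_mul y z

lemma dist_graphProj_graphProj_le (hG : IsGraphHeight e G M) (y z : E) :
    dist (graphProj e G y) (graphProj e G z) ≤ (1 + M) * dist y z := by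
  have hsub : graphProj e G y - graphProj e G z = (y - z) - (G y - G z) • e := by
    simp only [graphProj, sub_smul]
    abel
  calc dist (graphProj e G y) (graphProj e G z) ≤ ‖y - z‖ + ‖(G y - G z) • e‖ := by
        rw [dist_eq_norm, hsub]
        exact norm_sub_le _ _
    _ ≤ dist y z + M * dist y z := by
        rw [norm_smul, hG.norm_eq_one, mul_one, Real.norm_eq_abs, ← dist_eq_norm]
        gcongr
        exact hG.abs_sub_le y z
    _ = (1 + M) * dist y z := by ring

lemma continuous_graphProj (hG : IsGraphHeight e G M) : Continuous (graphProj e G) :=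
  continuous_id.sub (hG.lipschitzWith.continuous.smul continuous_const)

lemma isOpen_graphSlab (hG : IsGraphHeight e G M) (hW : IsOpen W) (a b : ℝ) :
    IsOpen (graphSlab e G W a b) :=
  (isOpen_Ioo.preimage hG.lipschitzWith.continuous).inter (hW.preimage hG.continuous_graphProj)

lemma sub_smul_mem_graphSlab_iff (hG : IsGraphHeight e G M) :
    y - t • e ∈ graphSlab e G W a b ↔ y ∈ graphSlab e G W (t + a) (t + b) := by
  simp only [graphSlab, mem_ofPred_eq, hG.apply_sub_smul, hG.graphProj_sub_smul, mem_Ioo,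
    lt_sub_iff_add_lt', sub_lt_iff_lt_add']

lemma mem_graphSlab_of_dist_lt (hG : IsGraphHeight e G M) (hy : y ∈ graphSlab e G W a b)
    {d : ℝ} (hz : (1 + M) * dist z y < d) :
    z ∈ graphSlab e G (thickening d W) (a - d) (b + d) := by
  have hheight := abs_le.1 (hG.abs_sub_le z y)
  have hdist : (0 : ℝ) ≤ dist z y := dist_nonneg
  refine ⟨⟨by linarith [hy.1.1], by linarith [hy.1.2]⟩, mem_thickening_iff.2 ⟨_, hy.2, ?_⟩⟩
  exact (hG.dist_graphProj_graphProj_le z y).trans_lt hz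

lemma layerSample_mem_Ico (hG : IsGraphHeight e G M) (hs : 0 < s) (y : E) :
    G (layerSample e G s y) ∈ Ico s (2 * s) := by
  have hfloor := Int.floor_le (G y / s)
  have hfloor' := Int.lt_floor_add_one (G y / s)
  rw [le_div_iff₀ hs] at hfloor
  rw [div_lt_iff₀ hs] at hfloor'
  rw [layerSample, hG.apply_sub_smul]
  constructor <;> linarith

lemma measurable_layerSample [MeasurableSpace E] [BorelSpace E] [SecondCountableTopology E]
    (hG : IsGraphHeight e G M) (s : ℝ) : Measurable (layerSample e G s) := by
  have hfloor : Measurable fun y => ((⌊G y / s⌋ : ℤ) : ℝ) :=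
    (measurable_of_countable _).comp (hG.lipschitzWith.continuous.measurable.div_const s).floor
  exact measurable_id.sub (((hfloor.sub_const 1).mul_const s).smul_const e)

lemma ball_layerSample_subset (hG : IsGraphHeight e G M) (hs : 0 < s)
    (hy : graphProj e G y ∈ W) :
    ball (layerSample e G s y) (s / (2 * (1 + M))) ⊆
      ball (graphProj e G y) (3 * s) ∩ graphSlab e G (thickening s W) 0 (3 * s) := by
  intro z hz
  have hheight := hG.layerSample_mem_Ico hs y
  have hproj : graphProj e G (layerSample e G s y) = graphProj e G y := hG.graphProj_sub_smul _ _
  have hM : (0 : ℝ) ≤ M := M.2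
  have hdist : (1 + M) * dist z (layerSample e G s y) < s / 2 := by
    rw [mem_ball, lt_div_iff₀ (by positivity)] at hz
    linarith
  have hmem : layerSample e G s y ∈ graphSlab e G W (s / 2) (2 * s) :=
    ⟨⟨by linarith [hheight.1], hheight.2⟩, hproj ▸ hy⟩
  refine ⟨?_, graphSlab_mono (thickening_mono (by linarith) W) (by linarith) (by linarith)
    (hG.mem_graphSlab_of_dist_lt hmem hdist)⟩
  calc dist z (graphProj e G y)
      ≤ dist z (layerSample e G s y) + dist (layerSample e G s y) (graphProj e G y) :=
        dist_triangle _ _ _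
    _ = dist z (layerSample e G s y) + G (layerSample e G s y) := by
        rw [← hproj, hG.dist_graphProj, abs_of_nonneg (by linarith [hheight.1])]
    _ < 3 * s := by
        have := mul_nonneg hM (dist_nonneg (x := z) (y := layerSample e G s y))
        linarith [hheight.2]

end IsGraphHeight

end Graph

section LayerEstimate

variable {N : ℕ} {u : Euc N → ℝ} {V W : Set (Euc N)} {e : Euc N} {G : Euc N → ℝ} {M : ℝ≥0}
  {a b r s t ε : ℝ}

namespace IsGraphHeight

lemma setLIntegral_enorm_add_smul_sub_le (hG : IsGraphHeight e G M) (hu : Integrable u)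
    (hW : IsOpen W) (hab : a < b) (ht : 0 ≤ t) (hV : graphSlab e G W a (b + t) ⊆ V) :
    ∫⁻ y in graphSlab e G W a b, ‖u (y + t • e) - u y‖ₑ ≤ ENNReal.ofReal (b - a) * TV V u := by
  refine setLIntegral_enorm_translate_sub_le hu (hG.isOpen_graphSlab hW a b)
    (fun y hy τ hτ => hV ?_) (sub_pos.2 hab) fun y => ?_
  · have h0 : 0 ≤ τ * t := mul_nonneg hτ.1 ht
    have h1 : τ * t ≤ t := mul_le_of_le_one_left ht hτ.2
    rw [smul_smul]
    refine ⟨?_, (hG.graphProj_add_smul y _).symm ▸ hy.2⟩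
    rw [hG.apply_add_smul]
    constructor <;> linarith [hy.1.1, hy.1.2]
  · rw [norm_smul, hG.norm_eq_one, mul_one, Real.norm_of_nonneg ht]
    obtain rfl | ht := ht.eq_or_lt
    · simpa using hab.le
    have hsub : Ioc (0 : ℝ) 1 ∩ {τ | y - τ • t • e ∈ graphSlab e G W a b} ⊆
        Icc ((G y - b) / t) ((G y - a) / t) := by
      rintro τ ⟨-, hτ⟩
      rw [mem_ofPred_eq, smul_smul, hG.sub_smul_mem_graphSlab_iff] at hτ
      rw [mem_Icc, div_le_iff₀ ht, le_div_iff₀ ht]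
      constructor <;> linarith [hτ.1.1, hτ.1.2]
    calc t * volume.real (Ioc (0 : ℝ) 1 ∩ {τ | y - τ • t • e ∈ graphSlab e G W a b})
        ≤ t * volume.real (Icc ((G y - b) / t) ((G y - a) / t)) := by
          gcongr
          exact measure_Icc_lt_top.ne
      _ = b - a := by
          rw [Real.volume_real_Icc_of_le (by gcongr)]
          field_simp
          ring

lemma setLIntegral_enorm_setAverage_ball_sub_le (hG : IsGraphHeight e G M)
    (hum : StronglyMeasurable u) (hu : Integrable u) (hW : IsOpen W) (hr : 0 < r)
    (hV : graphSlab e G (thickening ((1 + M) * r) W) (a - (1 + M) * r) (b + (1 + M) * r) ⊆ V) :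
    ∫⁻ y in graphSlab e G W a b, ‖(⨍ z in ball y r, u z) - u y‖ₑ ≤
      ENNReal.ofReal r * TV V u := by
  refine _root_.setLIntegral_enorm_setAverage_ball_sub_le hum hu.locallyIntegrable hr
    fun w hw => ?_
  rw [mem_ball_zero_iff] at hw
  refine setLIntegral_enorm_translate_sub_le_of_norm_le hu (hG.isOpen_graphSlab hW a b)
    (fun y hy τ hτ => hV (hG.mem_graphSlab_of_dist_lt hy ?_)) hr hw.le
  have hdist : dist (y + τ • w) y < r := by
    rw [dist_self_add_left, norm_smul, Real.norm_of_nonneg hτ.1]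
    exact (mul_le_of_le_one_left (norm_nonneg w) hτ.2).trans_lt hw
  gcongr

lemma setLIntegral_enorm_sub_setAverage_ball_le (hG : IsGraphHeight e G M)
    (hum : StronglyMeasurable u) (hu : Integrable u) (hW : IsOpen W) (hab : a < b) (ht : 0 ≤ t)
    (hr : 0 < r) (hV : graphSlab e G (thickening ((1 + M) * r) W) (a - (1 + M) * r)
      (b + t + (1 + M) * r) ⊆ V) :
    ∫⁻ y in graphSlab e G W (t + a) (t + b), ‖u y - ⨍ z in ball (y - t • e) r, u z‖ₑ ≤
      ENNReal.ofReal (b - a + r) * TV V u := by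
  have hMr : 0 < (1 + M) * r := by positivity
  have htrans : StronglyMeasurable fun y => u (y + t • e) :=
    hum.comp_measurable (measurable_add_const _)
  have htrans_av : Measurable fun y => ‖u (y + t • e) - ⨍ z in ball y r, u z‖ₑ :=
    (htrans.sub (stronglyMeasurable_setAverage_ball hum r)).measurable.enorm
  have htrans_sub : Measurable fun y => ‖u (y + t • e) - u y‖ₑ :=
    (htrans.sub hum).measurable.enorm
  have hpre : graphSlab e G W (t + a) (t + b) =
      (fun y => y - t • e) ⁻¹' graphSlab e G W a b :=
    Set.ext fun y => hG.sub_smul_mem_graphSlab_iff.symm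
  calc ∫⁻ y in graphSlab e G W (t + a) (t + b), ‖u y - ⨍ z in ball (y - t • e) r, u z‖ₑ
      = ∫⁻ y in graphSlab e G W a b, ‖u (y + t • e) - ⨍ z in ball y r, u z‖ₑ := by
        rw [← (measurePreserving_sub_right volume (t • e)).setLIntegral_comp_preimage
          (hG.isOpen_graphSlab hW a b).measurableSet htrans_av, ← hpre]
        simp only [sub_add_cancel]
    _ ≤ ∫⁻ y in graphSlab e G W a b,
          (‖u (y + t • e) - u y‖ₑ + ‖(⨍ z in ball y r, u z) - u y‖ₑ) := by
        gcongr with y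
        rw [← sub_sub_sub_cancel_right _ _ (u y)]
        exact enorm_sub_le
    _ ≤ ENNReal.ofReal (b - a) * TV V u + ENNReal.ofReal r * TV V u := by
        rw [lintegral_add_left htrans_sub]
        refine add_le_add (hG.setLIntegral_enorm_add_smul_sub_le hu hW hab ht (subset_trans ?_ hV))
          (hG.setLIntegral_enorm_setAverage_ball_sub_le hum hu hW hr (subset_trans ?_ hV))
        · exact graphSlab_mono (self_subset_thickening hMr W) (by linarith) (by linarith)
        · exact graphSlab_mono subset_rfl le_rfl (by linarith)
    _ = ENNReal.ofReal (b - a + r) * TV V u := by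
        rw [← add_mul, ENNReal.ofReal_add (sub_pos.2 hab).le hr.le]

lemma setLIntegral_enorm_sub_setAverage_layerSample_le_of_floor_eq (hG : IsGraphHeight e G M)
    (hum : StronglyMeasurable u) (hu : Integrable u) (hW : IsOpen W) (hs : 0 < s) {j : ℕ}
    (hj : 1 ≤ j) (hV : graphSlab e G (thickening s W) 0 ((j + 2) * s) ⊆ V) :
    ∫⁻ y in {y | ⌊G y / s⌋ = j ∧ graphProj e G y ∈ W},
        ‖u y - ⨍ z in ball (layerSample e G s y) (s / (2 * (1 + M))), u z‖ₑ ≤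
      ENNReal.ofReal (2 * s) * TV V u := by
  have : (0 : ℝ) ≤ M := M.2
  have hMr : (1 + M) * (s / (2 * (1 + M))) = s / 2 := by field_simp
  have hrs : s / (2 * (1 + M)) ≤ s / 2 := by gcongr; linarith
  have hj' : (0 : ℝ) ≤ j - 1 := sub_nonneg.2 (by exact_mod_cast hj)
  have hmeas : MeasurableSet {y | ⌊G y / s⌋ = (j : ℤ) ∧ graphProj e G y ∈ W} :=
    ((hG.lipschitzWith.continuous.measurable.div_const s).floor (measurableSet_singleton _)).inter
      (hW.preimage hG.continuous_graphProj).measurableSet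
  calc ∫⁻ y in {y | ⌊G y / s⌋ = j ∧ graphProj e G y ∈ W},
        ‖u y - ⨍ z in ball (layerSample e G s y) (s / (2 * (1 + M))), u z‖ₑ
      = ∫⁻ y in {y | ⌊G y / s⌋ = j ∧ graphProj e G y ∈ W},
        ‖u y - ⨍ z in ball (y - ((j - 1) * s) • e) (s / (2 * (1 + M))), u z‖ₑ := by
        refine setLIntegral_congr_fun hmeas fun y hy => ?_
        simp only [layerSample, hy.1, Int.cast_natCast]
    _ ≤ ∫⁻ y in graphSlab e G W ((j - 1) * s + s / 2) ((j - 1) * s + 2 * s),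
        ‖u y - ⨍ z in ball (y - ((j - 1) * s) • e) (s / (2 * (1 + M))), u z‖ₑ := by
        refine lintegral_mono_set fun y hy => ⟨?_, hy.2⟩
        obtain ⟨hfloor, hfloor'⟩ := Int.floor_eq_iff.1 hy.1
        rw [Int.cast_natCast, le_div_iff₀ hs] at hfloor
        rw [Int.cast_natCast, div_lt_iff₀ hs] at hfloor'
        constructor <;> linarith
    _ ≤ ENNReal.ofReal (2 * s - s / 2 + s / (2 * (1 + M))) * TV V u := by
        refine hG.setLIntegral_enorm_sub_setAverage_ball_le hum hu hW (by linarith)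
          (by positivity) (by positivity) (subset_trans ?_ hV)
        rw [hMr]
        exact graphSlab_mono (thickening_mono (by linarith) W) (by linarith) (by linarith)
    _ ≤ ENNReal.ofReal (2 * s) * TV V u := by
        gcongr
        linarith

lemma setLIntegral_enorm_sub_setAverage_layerSample_le (hG : IsGraphHeight e G M)
    (hum : StronglyMeasurable u) (hu : Integrable u) (hW : IsOpen W) {n : ℕ} (hn : 1 ≤ n)
    (hs : 0 < s) (hV : graphSlab e G (thickening s W) 0 ((2 * n + 1) * s) ⊆ V) :
    ∫⁻ y in graphSlab e G W (n * s) (2 * n * s),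
        ‖u y - ⨍ z in ball (layerSample e G s y) (s / (2 * (1 + M))), u z‖ₑ ≤
      ENNReal.ofReal (2 * n * s) * TV V u := by
  have hcover : graphSlab e G W (n * s) (2 * n * s) ⊆
      ⋃ j : Finset.Ico n (2 * n), {y | ⌊G y / s⌋ = (j : ℕ) ∧ graphProj e G y ∈ W} := by
    rintro y ⟨⟨hlow, hup⟩, hy⟩
    have hfloor : (n : ℤ) ≤ ⌊G y / s⌋ := by
      rw [Int.le_floor, le_div_iff₀ hs]
      exact_mod_cast hlow.le
    have hfloor' : ⌊G y / s⌋ < (2 * n : ℤ) := by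
      rw [Int.floor_lt, div_lt_iff₀ hs]
      exact_mod_cast hup
    refine mem_iUnion.2 ⟨⟨⌊G y / s⌋.toNat, by rw [Finset.mem_Ico]; lia⟩, ?_, hy⟩
    exact (Int.toNat_of_nonneg (by lia)).symm
  refine (lintegral_mono_set hcover).trans ((lintegral_iUnion_le _ _).trans ?_)
  calc _ ≤ ∑' _ : Finset.Ico n (2 * n), ENNReal.ofReal (2 * s) * TV V u := by
        refine ENNReal.tsum_le_tsum fun j => ?_
        have hj := Finset.mem_Ico.1 j.2
        have hj' : ((j : ℕ) : ℝ) + 1 ≤ 2 * n := by exact_mod_cast hj.2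
        exact hG.setLIntegral_enorm_sub_setAverage_layerSample_le_of_floor_eq hum hu hW hs
          (hn.trans hj.1) ((graphSlab_mono subset_rfl le_rfl (by nlinarith)).trans hV)
    _ = ENNReal.ofReal (2 * n * s) * TV V u := by
        rw [tsum_fintype, Finset.sum_const, Finset.card_univ, Fintype.card_coe, Nat.card_Ico,
          two_mul n, Nat.add_sub_cancel, nsmul_eq_mul, ← mul_assoc, ← ENNReal.ofReal_natCast,
          ← ENNReal.ofReal_mul (by positivity)]
        congr 2
        ring

lemma tendsto_setAverage_ball_layerSample (hG : IsGraphHeight e G M) (hu : LocallyIntegrable u)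
    {y : Euc N} (hy : graphProj e G y ∈ W) {Ω : Set (Euc N)} {c : ℝ}
    (hc : Tendsto (fun r : ℝ => ⨍ z in ball (graphProj e G y) r ∩ Ω, ‖u z - c‖) (𝓝[>] 0) (𝓝 0))
    {ι : Type*} {l : Filter ι} {s : ι → ℝ} (hs : Tendsto s l (𝓝[>] 0)) (hs₀ : ∀ i, 0 < s i)
    (hΩ : ∀ i, graphSlab e G (thickening (s i) W) 0 (3 * s i) ⊆ Ω) :
    Tendsto (fun i => ⨍ z in ball (layerSample e G (s i) y) (s i / (2 * (1 + M))), u z) l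
      (𝓝 c) := by
  have hs3 : Tendsto (fun i => 3 * s i) l (𝓝[>] 0) := by
    refine tendsto_nhdsWithin_iff.2 ⟨?_, Eventually.of_forall fun i => ?_⟩
    · simpa using (tendsto_nhds_of_tendsto_nhdsWithin hs).const_mul 3
    · exact mul_pos three_pos (hs₀ i)
  have hradius (i : ι) : s i / (2 * (1 + M)) = 1 / (6 * (1 + M)) * (3 * s i) := by
    field_simp
    ring
  simp only [hradius]
  refine tendsto_setAverage_ball_of_ball_subset hu hc hs3 (by positivity) fun i => ?_
  rw [← hradius]
  exact (hG.ball_layerSample_subset (hs₀ i) hy).trans (inter_subset_inter_right _ (hΩ i))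

/-- The averages of `u` at heights comparable to `s` converge to the trace as `s → 0`, while their
distance to `u` is controlled by the variation of `u`, uniformly in `s`. -/
theorem setLIntegral_enorm_sub_trace_le (hG : IsGraphHeight e G M)
    (hum : StronglyMeasurable u) (hu : Integrable u) (hW : IsOpen W) (hε : 0 < ε)
    (hV : graphSlab e G (thickening ε W) 0 (3 * ε) ⊆ V) {Ω : Set (Euc N)} (hVΩ : V ⊆ Ω)
    {f : Euc N → ℝ} (hf : ∀ᵐ y ∂volume.restrict (graphSlab e G W ε (2 * ε)), Tendsto
      (fun r : ℝ => ⨍ z in ball (graphProj e G y) r ∩ Ω, ‖u z - f (graphProj e G y)‖)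
      (𝓝[>] 0) (𝓝 0)) :
    ∫⁻ y in graphSlab e G W ε (2 * ε), ‖u y - f (graphProj e G y)‖ₑ ≤
      ENNReal.ofReal (2 * ε) * TV V u := by
  set s : ℕ → ℝ := fun n => ε / (n + 1 : ℕ)
  have hs₀ (n : ℕ) : 0 < s n := by positivity
  have hsε (n : ℕ) : s n ≤ ε := div_le_self hε.le (by exact_mod_cast n.succ_pos)
  have hns (n : ℕ) : (n + 1 : ℕ) * s n = ε := mul_div_cancel₀ _ (by positivity)
  have hs_lim : Tendsto s atTop (𝓝[>] 0) :=
    tendsto_nhdsWithin_iff.2 ⟨(tendsto_const_div_atTop_nhds_zero_nat ε).comp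
      (tendsto_add_atTop_nat 1), Eventually.of_forall hs₀⟩
  set A : ℕ → Euc N → ℝ := fun n y =>
    ⨍ z in ball (layerSample e G (s n) y) (s n / (2 * (1 + M))), u z
  have hAm (n : ℕ) : Measurable (A n) := ((stronglyMeasurable_setAverage_ball hum _).comp_measurable
    (hG.measurable_layerSample (s n))).measurable
  have hAlim : ∀ᵐ y ∂volume.restrict (graphSlab e G W ε (2 * ε)),
      Tendsto (fun n => A n y) atTop (𝓝 (f (graphProj e G y))) := by
    filter_upwards [hf, ae_restrict_mem (hG.isOpen_graphSlab hW _ _).measurableSet] with y hy hyW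
    refine hG.tendsto_setAverage_ball_layerSample hu.locallyIntegrable hyW.2 hy hs_lim hs₀
      fun n => (graphSlab_mono (thickening_mono (hsε n) W) le_rfl ?_).trans (hV.trans hVΩ)
    linarith [hsε n]
  calc ∫⁻ y in graphSlab e G W ε (2 * ε), ‖u y - f (graphProj e G y)‖ₑ
      = ∫⁻ y in graphSlab e G W ε (2 * ε), liminf (fun n => ‖u y - A n y‖ₑ) atTop := by
        refine lintegral_congr_ae ?_
        filter_upwards [hAlim] with y hy
        exact ((hy.const_sub (u y)).enorm).liminf_eq.symm
    _ ≤ liminf (fun n => ∫⁻ y in graphSlab e G W ε (2 * ε), ‖u y - A n y‖ₑ) atTop :=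
        lintegral_liminf_le fun n => (hum.measurable.sub (hAm n)).enorm
    _ ≤ ENNReal.ofReal (2 * ε) * TV V u := by
        refine liminf_le_of_le (by isBoundedDefault) fun c hc => ?_
        obtain ⟨n, hn⟩ := hc.exists
        refine hn.trans ?_
        have hstep := hG.setLIntegral_enorm_sub_setAverage_layerSample_le (V := V) hum hu hW
          (n := n + 1) (by lia) (hs₀ n) ?_
        · rwa [mul_assoc 2, hns] at hstep
        · refine (graphSlab_mono (thickening_mono (hsε n) W) le_rfl ?_).trans hV
          linarith [hsε n, hns n]

end IsGraphHeight

end LayerEstimate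

section VolumeBounds

variable {E : Type*} [NormedAddCommGroup E] [InnerProductSpace ℝ E] [FiniteDimensional ℝ E]
  [MeasurableSpace E] [BorelSpace E] {V : Set E} {w₀ w : ℝ}

lemma volume_le_prod_ediam_inner {ι : Type*} [Fintype ι] (b : OrthonormalBasis ι ℝ E)
    (V : Set E) : volume V ≤ ∏ i, ediam ((fun y => ⟪b i, y⟫) '' V) := by
  have hcoord : MeasurePreserving (fun y i => ⟪b i, y⟫ : E → ι → ℝ) volume volume := by
    have hrepr : (fun y i => ⟪b i, y⟫ : E → ι → ℝ) = WithLp.ofLp ∘ b.repr :=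
      funext₂ fun y i => (b.repr_apply_apply y i).symm
    exact hrepr ▸ (PiLp.volume_preserving_ofLp ι).comp b.measurePreserving_repr
  have hVle := hcoord.measure_preimage
    (measurableSet_toMeasurable volume ((fun y i => ⟪b i, y⟫) '' V)).nullMeasurableSet
  calc volume V ≤ volume ((fun y i => ⟪b i, y⟫ : E → ι → ℝ) '' V) := by
        rw [← measure_toMeasurable ((fun y i => ⟪b i, y⟫) '' V), ← hVle]
        exact measure_mono ((subset_preimage_image _ V).trans
          (preimage_mono (subset_toMeasurable _ _)))
    _ ≤ ∏ i, ediam (Function.eval i '' ((fun y i => ⟪b i, y⟫ : E → ι → ℝ) '' V)) :=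
        Real.volume_pi_le_prod_diam _
    _ = ∏ i, ediam ((fun y => ⟪b i, y⟫) '' V) := by
        simp only [image_image, Function.eval]

lemma volume_le_of_abs_inner_le_of_norm_sub_le {n : E} (hn : ‖n‖ = 1)
    (h₀ : ∀ y ∈ V, ∀ y' ∈ V, |⟪n, y - y'⟫| ≤ w₀)
    (h : ∀ y ∈ V, ∀ y' ∈ V, ‖y - y' - ⟪n, y - y'⟫ • n‖ ≤ w) :
    volume V ≤ ENNReal.ofReal w₀ * ENNReal.ofReal w ^ (Module.finrank ℝ E - 1) := by
  classical
  have hsingle : Orthonormal ℝ ((↑) : ({n} : Set E) → E) :=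
    ⟨fun i => by rw [mem_singleton_iff.1 i.2, hn],
      fun i j hij => (hij (Subsingleton.elim i j)).elim⟩
  obtain ⟨t, b, hnt, hb⟩ := hsingle.exists_orthonormalBasis_extension
  set i₀ : t := ⟨n, hnt rfl⟩
  have hbi₀ : b i₀ = n := by rw [hb]
  have hediam (i : t) (c : ℝ) (hc : ∀ y ∈ V, ∀ y' ∈ V, |⟪b i, y - y'⟫| ≤ c) :
      ediam ((fun y => ⟪b i, y⟫) '' V) ≤ ENNReal.ofReal c := by
    refine ediam_le_of_forall_dist_le ?_
    rintro _ ⟨y, hy, rfl⟩ _ ⟨y', hy', rfl⟩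
    rw [Real.dist_eq, ← inner_sub_right]
    exact hc y hy y' hy'
  have hperp (i : t) (hi : i ∈ Finset.univ.erase i₀) (y : E) (hy : y ∈ V) (y' : E) (hy' : y' ∈ V) :
      |⟪b i, y - y'⟫| ≤ w := by
    have hin : ⟪b i, n⟫ = 0 := hbi₀ ▸ b.orthonormal.2 (Finset.ne_of_mem_erase hi)
    calc |⟪b i, y - y'⟫| = |⟪b i, y - y' - ⟪n, y - y'⟫ • n⟫| := by
          rw [inner_sub_right _ _ (_ • _), inner_smul_right, hin, mul_zero, sub_zero]
      _ ≤ ‖b i‖ * ‖y - y' - ⟪n, y - y'⟫ • n‖ := abs_real_inner_le_norm _ _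
      _ ≤ w := by rw [b.orthonormal.1 i, one_mul]; exact h y hy y' hy'
  refine (volume_le_prod_ediam_inner b V).trans ?_
  rw [← Finset.mul_prod_erase Finset.univ _ (Finset.mem_univ i₀)]
  refine mul_le_mul' (hediam i₀ w₀ (hbi₀ ▸ h₀)) ?_
  refine (Finset.prod_le_pow_card _ _ _ fun i hi => hediam i w (hperp i hi)).trans_eq ?_
  rw [Finset.card_erase_of_mem (Finset.mem_univ i₀), Finset.card_univ,
    Module.finrank_eq_card_basis b.toBasis]

-- The transvection `y ↦ y + ⟪v, y⟫ • (v / ‖v‖ ^ 2 - e)` preserves volume and straightens the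
-- oblique decomposition along `e` into the orthogonal one along `v`.
lemma volume_le_of_abs_inner_le_of_norm_sub_smul_le {v e : E} (hve : ⟪v, e⟫ = 1)
    (h₀ : ∀ y ∈ V, ∀ y' ∈ V, |⟪v, y - y'⟫| ≤ w₀)
    (h : ∀ y ∈ V, ∀ y' ∈ V, ‖y - y' - ⟪v, y - y'⟫ • e‖ ≤ w) :
    volume V ≤ ENNReal.ofReal (w₀ / ‖v‖) * ENNReal.ofReal w ^ (Module.finrank ℝ E - 1) := by
  have hv : 0 < ‖v‖ := by
    rw [norm_pos_iff]
    rintro rfl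
    simp at hve
  set L : E →ₗ[ℝ] E := LinearMap.transvection (innerSL ℝ v : E →ₗ[ℝ] ℝ) ((‖v‖ ^ 2)⁻¹ • v - e)
  have hL (y : E) : L y = y + ⟪v, y⟫ • ((‖v‖ ^ 2)⁻¹ • v - e) := rfl
  have hshift : ⟪v, (‖v‖ ^ 2)⁻¹ • v - e⟫ = 0 := by
    rw [inner_sub_right, inner_smul_right, real_inner_self_eq_norm_sq, hve]
    field_simp
    ring
  have hdet : LinearMap.det L = 1 := by
    rw [LinearMap.transvection.det, ContinuousLinearMap.coe_coe, innerSL_apply_apply, hshift,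
      add_zero]
  have hinner (y : E) : ⟪‖v‖⁻¹ • v, L y⟫ = ⟪v, y⟫ / ‖v‖ := by
    rw [hL, real_inner_smul_left, inner_add_right, inner_smul_right, hshift]
    ring
  have hnorm : ‖‖v‖⁻¹ • v‖ = 1 := by
    rw [norm_smul, norm_inv, norm_norm, inv_mul_cancel₀ hv.ne']
  calc volume V = volume (L '' V) := by
        rw [Measure.addHaar_image_linearMap, hdet, abs_one, ENNReal.ofReal_one, one_mul]
    _ ≤ ENNReal.ofReal (w₀ / ‖v‖) * ENNReal.ofReal w ^ (Module.finrank ℝ E - 1) := by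
        refine volume_le_of_abs_inner_le_of_norm_sub_le hnorm ?_ ?_
        · rintro _ ⟨y, hy, rfl⟩ _ ⟨y', hy', rfl⟩
          rw [← map_sub, hinner, abs_div, abs_norm]
          gcongr
          exact h₀ y hy y' hy'
        · rintro _ ⟨y, hy, rfl⟩ _ ⟨y', hy', rfl⟩
          rw [← map_sub, hinner]
          convert h y hy y' hy' using 2
          rw [hL, smul_sub, smul_smul, smul_smul]
          module

end VolumeBounds

section MeasureComparison

lemma measure_le_of_forall_restrict_le {X : Type*} [MeasurableSpace X] {μ ν : Measure X}
    {Q : ℕ → Set X} (hQ : ∀ n, MeasurableSet (Q n)) (hcover : ∀ᵐ x ∂μ, x ∈ ⋃ n, Q n)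
    (h : ∀ n, μ.restrict (Q n) ≤ ν.restrict (Q n)) : μ ≤ ν := by
  rw [← iUnion_disjointed] at hcover
  have hmeas := MeasurableSet.disjointed hQ
  rw [← Measure.restrict_eq_self_of_ae_mem hcover]
  refine le_trans (Measure.le_iff.2 fun B hB => ?_)
    (Measure.restrict_le_self (s := ⋃ n, disjointed Q n))
  rw [Measure.restrict_iUnion (disjoint_disjointed Q) hmeas,
    Measure.restrict_iUnion (disjoint_disjointed Q) hmeas, Measure.sum_apply _ hB,
    Measure.sum_apply _ hB]
  refine ENNReal.tsum_le_tsum fun n => ?_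
  rw [← Measure.restrict_restrict_of_subset (disjointed_subset Q n),
    ← Measure.restrict_restrict_of_subset (μ := ν) (disjointed_subset Q n)]
  exact Measure.restrict_mono_measure (h n) _ B

lemma restrict_le_smul_hausdorffMeasure {X : Type*} [EMetricSpace X] [MeasurableSpace X]
    [BorelSpace X] {μ : Measure X} {B : Set X} (hB : MeasurableSet B) {c δ : ℝ≥0∞} (hc₀ : c ≠ 0)
    (hc : c ≠ ⊤) (hδ : 0 < δ) {d : ℝ} (hd : 0 ≤ d)
    (h : ∀ s ⊆ B, MeasurableSet s → ediam s ≤ δ → μ s ≤ c * ediam s ^ d) :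
    μ.restrict B ≤ c • (μH[d]).restrict B := by
  have hle : c⁻¹ • μ.restrict B ≤ μH[d] := by
    refine Measure.le_hausdorffMeasure d _ δ hδ fun s hs => ?_
    rw [Measure.smul_apply, smul_eq_mul, ENNReal.inv_mul_le_iff hc₀ hc]
    rw [← ediam_closure] at hs
    calc μ.restrict B s ≤ μ.restrict B (closure s) := measure_mono subset_closure
      _ = μ (closure s ∩ B) := Measure.restrict_apply isClosed_closure.measurableSet
      _ ≤ c * ediam (closure s ∩ B) ^ d := h _ inter_subset_right
          (isClosed_closure.measurableSet.inter hB) ((ediam_mono inter_subset_left).trans hs)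
      _ ≤ c * ediam s ^ d := by
          rw [← ediam_closure (s := s)]
          gcongr
          exact inter_subset_left
  refine Measure.le_iff.2 fun A hA => ?_
  have hAB := hle (A ∩ B)
  rw [Measure.smul_apply, smul_eq_mul, ENNReal.inv_mul_le_iff hc₀ hc,
    Measure.restrict_apply' hB, inter_assoc, inter_self] at hAB
  rwa [Measure.smul_apply, smul_eq_mul, Measure.restrict_apply hA, Measure.restrict_apply hA]

end MeasureComparison

section LayerMeasure

lemma exists_cover_approximatesLinearOn {E F : Type*} [NormedAddCommGroup E] [NormedSpace ℝ E]
    [FiniteDimensional ℝ E] [MeasurableSpace E] [BorelSpace E] [NormedAddCommGroup F]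
    [NormedSpace ℝ F] [FiniteDimensional ℝ F] {f : E → F} {s : Set E} (hs : MeasurableSet s)
    (hf : ∀ x ∈ s, DifferentiableAt ℝ f x) {η : ℝ≥0} (hη : 0 < η) :
    ∃ Q : ℕ → Set E, (∀ n, MeasurableSet (Q n)) ∧ (s ⊆ ⋃ n, Q n) ∧ ∀ n, Q n ⊆ s ∧
      ((Q n).Nonempty → ∃ y ∈ s, ApproximatesLinearOn f (fderiv ℝ f y) (Q n) η ∧
        ∀ x ∈ Q n, ‖fderiv ℝ f x - fderiv ℝ f y‖ ≤ η) := by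
  let : MeasurableSpace (E →L[ℝ] F) := borel _
  have : BorelSpace (E →L[ℝ] F) := ⟨rfl⟩
  obtain ⟨a, ha⟩ := TopologicalSpace.exists_dense_seq (E →L[ℝ] F)
  set S : ℕ → Set E := fun k => s ∩ fderiv ℝ f ⁻¹' closedBall (a k) (η / 2)
  have hS (k : ℕ) : MeasurableSet (S k) :=
    hs.inter (measurable_fderiv ℝ f measurableSet_closedBall)
  choose t A _ ht hcover happrox hA using fun k =>
    exists_partition_approximatesLinearOn_of_hasFDerivWithinAt f (S k) (fderiv ℝ f)
      (fun x hx => (hf x hx.1).hasFDerivAt.hasFDerivWithinAt) (fun _ => η) fun _ => hη.ne'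
  refine ⟨fun n => S n.unpair.1 ∩ t n.unpair.1 n.unpair.2, fun n => (hS _).inter (ht _ _), ?_,
    fun n => ⟨inter_subset_left.trans inter_subset_left, ?_⟩⟩
  · intro x hx
    obtain ⟨k, hk⟩ := ha.exists_dist_lt (fderiv ℝ f x) (half_pos (NNReal.coe_pos.2 hη))
    have hxk : x ∈ S k := ⟨hx, mem_closedBall.2 hk.le⟩
    obtain ⟨m, hm⟩ := mem_iUnion.1 (hcover k hxk)
    exact mem_iUnion.2 ⟨Nat.pair k m, by simpa using ⟨hxk, hm⟩⟩
  · rintro ⟨x₀, hx₀, -⟩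
    obtain ⟨y, hy, hAy⟩ := hA n.unpair.1 ⟨x₀, hx₀⟩ n.unpair.2
    refine ⟨y, hy.1, hAy ▸ happrox n.unpair.1 n.unpair.2, fun x hx => ?_⟩
    have hxa := mem_closedBall.1 hx.1.2
    have hya := mem_closedBall.1 hy.2
    rw [← dist_eq_norm]
    linarith [dist_triangle_right (fderiv ℝ f x) (fderiv ℝ f y) (a n.unpair.1)]

/-- The push-forward to the graph with height function `G` of the volume of the layer of heights
between `a` and `b`, weighted by the area factor `‖fderiv ℝ G y‖`. It is at most `b - a` times the
surface measure of the graph. -/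
def layerMeasure {E : Type*} [NormedAddCommGroup E] [InnerProductSpace ℝ E]
    [FiniteDimensional ℝ E] [MeasurableSpace E] [BorelSpace E] (e : E) (G : E → ℝ) (a b : ℝ) :
    Measure E :=
  ((volume.restrict (G ⁻¹' Ioo a b)).withDensity fun y => ‖fderiv ℝ G y‖ₑ).map (graphProj e G)

namespace IsGraphHeight

section NormedSpace

variable {E : Type*} [NormedAddCommGroup E] [NormedSpace ℝ E] {e : E} {G : E → ℝ} {M : ℝ≥0}

lemma fderiv_graphProj (hG : IsGraphHeight e G M) (y : E) :
    fderiv ℝ G (graphProj e G y) = fderiv ℝ G y := by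
  rw [graphProj, sub_eq_add_neg, ← neg_smul, ← fderiv_comp_add_right]
  simp only [hG.apply_add_smul, fderiv_add_const]

lemma differentiableAt_graphProj (hG : IsGraphHeight e G M) {y : E} :
    DifferentiableAt ℝ G (graphProj e G y) ↔ DifferentiableAt ℝ G y := by
  rw [graphProj, sub_eq_add_neg, ← neg_smul, ← differentiableAt_comp_add_right]
  simp only [hG.apply_add_smul, differentiableAt_add_const_iff]

lemma fderiv_apply_self (hG : IsGraphHeight e G M) {y : E} (hy : DifferentiableAt ℝ G y) :
    fderiv ℝ G y e = 1 := by
  rw [← hy.lineDeriv_eq_fderiv, lineDeriv]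
  simp [hG.apply_add_smul]

lemma one_le_norm_of_apply_eq_one (hG : IsGraphHeight e G M) {A : E →L[ℝ] ℝ} (hA : A e = 1) :
    1 ≤ ‖A‖ := by
  simpa [hA, hG.norm_eq_one] using A.le_opNorm e

end NormedSpace

variable {E : Type*} [NormedAddCommGroup E] [InnerProductSpace ℝ E] [FiniteDimensional ℝ E]
  [MeasurableSpace E] [BorelSpace E] {e : E} {G : E → ℝ} {M : ℝ≥0} {a b : ℝ}

lemma volume_graphSlab_le (hG : IsGraphHeight e G M) {A : E →L[ℝ] ℝ} (hA : A e = 1) {s : Set E}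
    {d w : ℝ} (hd : ∀ x ∈ s, ∀ x' ∈ s, ‖x - x'‖ ≤ d) (hw : ∀ x ∈ s, ∀ x' ∈ s, |A (x - x')| ≤ w) :
    volume (graphSlab e G s a b) ≤ ENNReal.ofReal ((b - a + w) / ‖A‖) *
      ENNReal.ofReal (d + w) ^ (Module.finrank ℝ E - 1) := by
  set v := (InnerProductSpace.toDual ℝ E).symm A
  have hv (x : E) : ⟪v, x⟫ = A x := InnerProductSpace.toDual_symm_apply
  have hdecomp (y y' : E) :
      y - y' = (graphProj e G y - graphProj e G y') + (G y - G y') • e := by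
    simp only [graphProj, sub_smul]
    abel
  have hAsub (y y' : E) : A (y - y') = A (graphProj e G y - graphProj e G y') + (G y - G y') := by
    conv_lhs => rw [hdecomp, map_add, map_smul, hA, smul_eq_mul, mul_one]
  rw [← LinearIsometryEquiv.norm_map (InnerProductSpace.toDual ℝ E).symm A]
  refine volume_le_of_abs_inner_le_of_norm_sub_smul_le (v := v) (e := e) (by rw [hv, hA]) ?_ ?_
  · rintro y ⟨hy, hys⟩ y' ⟨hy', hys'⟩
    have hheight : |G y - G y'| ≤ b - a :=
      abs_le.2 ⟨by linarith [hy.1, hy'.2], by linarith [hy.2, hy'.1]⟩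
    rw [hv, hAsub]
    linarith [abs_add_le (A (graphProj e G y - graphProj e G y')) (G y - G y'),
      hw _ hys _ hys']
  · rintro y ⟨-, hys⟩ y' ⟨-, hys'⟩
    have hperp : y - y' - A (y - y') • e = (graphProj e G y - graphProj e G y') -
        A (graphProj e G y - graphProj e G y') • e := by
      rw [hAsub, hdecomp y y', add_smul]
      abel
    rw [hv, hperp]
    refine (norm_sub_le _ _).trans (add_le_add (hd _ hys _ hys') ?_)
    rw [norm_smul, hG.norm_eq_one, mul_one]
    exact hw _ hys _ hys'

lemma layerMeasure_apply (hG : IsGraphHeight e G M) {B : Set E} (hB : MeasurableSet B) :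
    layerMeasure e G a b B = ∫⁻ y in graphSlab e G B a b, ‖fderiv ℝ G y‖ₑ := by
  have hproj := hG.continuous_graphProj.measurable hB
  rw [layerMeasure, Measure.map_apply hG.continuous_graphProj.measurable hB,
    withDensity_apply _ hproj, Measure.restrict_restrict hproj, inter_comm]
  rfl

lemma ae_layerMeasure_eq_zero_and_differentiableAt (hG : IsGraphHeight e G M) :
    ∀ᵐ x ∂layerMeasure e G a b, G x = 0 ∧ DifferentiableAt ℝ G x := by
  have hmeas : MeasurableSet {x | G x = 0 ∧ DifferentiableAt ℝ G x} :=
    (isClosed_eq hG.lipschitzWith.continuous continuous_const).measurableSet.inter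
      (measurableSet_of_differentiableAt ℝ G)
  rw [layerMeasure, ae_map_iff hG.continuous_graphProj.aemeasurable hmeas]
  refine (withDensity_absolutelyContinuous _ _).ae_le (ae_restrict_of_ae ?_)
  filter_upwards [hG.lipschitzWith.ae_differentiableAt] with y hy
  exact ⟨hG.apply_graphProj y, hG.differentiableAt_graphProj.2 hy⟩

lemma volume_graphSlab_le_of_approximatesLinearOn (hG : IsGraphHeight e G M) {A : E →L[ℝ] ℝ}
    (hA : A e = 1) {η : ℝ≥0} {s : Set E} (hs₀ : ∀ x ∈ s, G x = 0)
    (happrox : ApproximatesLinearOn G A s η) (hfin : ediam s ≠ ⊤) :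
    volume (graphSlab e G s a b) ≤ ENNReal.ofReal ((b - a + η * diam s) / ‖A‖) *
      ENNReal.ofReal (diam s + η * diam s) ^ (Module.finrank ℝ E - 1) := by
  have hd (x : E) (hx : x ∈ s) (x' : E) (hx' : x' ∈ s) : ‖x - x'‖ ≤ diam s :=
    dist_eq_norm x x' ▸ dist_le_diam_of_mem' hfin hx hx'
  refine hG.volume_graphSlab_le hA hd fun x hx x' hx' => ?_
  have hlin := happrox x hx x' hx'
  rw [hs₀ x hx, hs₀ x' hx', sub_self, zero_sub, norm_neg] at hlin
  exact hlin.trans (by gcongr; exact hd x hx x' hx')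

lemma layerMeasure_le_mul_volume (hG : IsGraphHeight e G M) {A : E →L[ℝ] ℝ} {η : ℝ} {s : Set E}
    (hs : MeasurableSet s) (hderiv : ∀ x ∈ s, ‖fderiv ℝ G x - A‖ ≤ η) :
    layerMeasure e G a b s ≤ ENNReal.ofReal (‖A‖ + η) * volume (graphSlab e G s a b) := by
  rw [hG.layerMeasure_apply hs, ← setLIntegral_const]
  refine setLIntegral_mono measurable_const fun y hy => ?_
  rw [← ofReal_norm, ← hG.fderiv_graphProj]
  refine ENNReal.ofReal_le_ofReal ?_
  linarith [norm_sub_norm_le (fderiv ℝ G (graphProj e G y)) A, hderiv _ hy.2]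

lemma layerMeasure_le_mul_ediam_pow (hG : IsGraphHeight e G M) {A : E →L[ℝ] ℝ} (hA : A e = 1)
    {η : ℝ≥0} {s : Set E} (hs : MeasurableSet s) (hs₀ : ∀ x ∈ s, G x = 0)
    (happrox : ApproximatesLinearOn G A s η) (hderiv : ∀ x ∈ s, ‖fderiv ℝ G x - A‖ ≤ η)
    (hdiam : ediam s ≤ ENNReal.ofReal (b - a)) (hab : a < b) :
    layerMeasure e G a b s ≤ ENNReal.ofReal ((1 + η) ^ (Module.finrank ℝ E + 1) * (b - a)) *
      ediam s ^ (Module.finrank ℝ E - 1) := by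
  have hA₁ := hG.one_le_norm_of_apply_eq_one hA
  have hba := sub_pos.2 hab
  have hfin : ediam s ≠ ⊤ := ne_top_of_le_ne_top ENNReal.ofReal_ne_top hdiam
  have hdb : diam s ≤ b - a := ENNReal.toReal_le_of_le_ofReal hba.le hdiam
  have hslope : (‖A‖ + η) * ((b - a + η * diam s) / ‖A‖) ≤ (1 + η) ^ 2 * (b - a) := by
    rw [mul_div_assoc', div_le_iff₀ (by linarith)]
    calc (‖A‖ + η) * (b - a + η * diam s)
        ≤ (‖A‖ + η * ‖A‖) * (b - a + η * (b - a)) := by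
          gcongr
          exact le_mul_of_one_le_right η.2 hA₁
      _ = (1 + η) ^ 2 * (b - a) * ‖A‖ := by ring
  calc layerMeasure e G a b s
      ≤ ENNReal.ofReal (‖A‖ + η) * volume (graphSlab e G s a b) :=
        hG.layerMeasure_le_mul_volume hs hderiv
    _ ≤ ENNReal.ofReal (‖A‖ + η) * (ENNReal.ofReal ((b - a + η * diam s) / ‖A‖) *
          ENNReal.ofReal (diam s + η * diam s) ^ (Module.finrank ℝ E - 1)) := by
        gcongr
        exact hG.volume_graphSlab_le_of_approximatesLinearOn hA hs₀ happrox hfin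
    _ ≤ ENNReal.ofReal ((1 + η) ^ 2 * (b - a)) *
          (ENNReal.ofReal (1 + η) * ediam s) ^ (Module.finrank ℝ E - 1) := by
        rw [← mul_assoc, ← ENNReal.ofReal_mul (by positivity), ← ENNReal.ofReal_toReal hfin,
          ← ENNReal.ofReal_mul (by positivity), ← one_add_mul]
        gcongr
        exact le_rfl
    _ = ENNReal.ofReal ((1 + η) ^ (Module.finrank ℝ E + 1) * (b - a)) *
          ediam s ^ (Module.finrank ℝ E - 1) := by
        have : Nontrivial E := ⟨e, 0, norm_pos_iff.1 (hG.norm_eq_one ▸ one_pos)⟩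
        have hexp : Module.finrank ℝ E + 1 = 2 + (Module.finrank ℝ E - 1) := by
          have := Module.finrank_pos (R := ℝ) (M := E)
          omega
        rw [mul_pow, ← mul_assoc, ← ENNReal.ofReal_pow (by positivity),
          ← ENNReal.ofReal_mul (by positivity), hexp, pow_add]
        ring_nf

lemma layerMeasure_restrict_le (hG : IsGraphHeight e G M) {A : E →L[ℝ] ℝ} (hA : A e = 1)
    {η : ℝ≥0} {B : Set E} (hB : MeasurableSet B) (hB₀ : ∀ x ∈ B, G x = 0)
    (happrox : ApproximatesLinearOn G A B η) (hderiv : ∀ x ∈ B, ‖fderiv ℝ G x - A‖ ≤ η)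
    (hab : a < b) :
    (layerMeasure e G a b).restrict B ≤
      ENNReal.ofReal ((1 + η) ^ (Module.finrank ℝ E + 1) * (b - a)) •
        (μH[(Module.finrank ℝ E : ℝ) - 1]).restrict B := by
  have : Nontrivial E := ⟨e, 0, norm_pos_iff.1 (hG.norm_eq_one ▸ one_pos)⟩
  have hdim : 1 ≤ Module.finrank ℝ E := Module.finrank_pos
  have hba := sub_pos.2 hab
  refine restrict_le_smul_hausdorffMeasure hB (ENNReal.ofReal_pos.2 (by positivity)).ne'
    ENNReal.ofReal_ne_top (ENNReal.ofReal_pos.2 hba)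
    (sub_nonneg.2 (by exact_mod_cast hdim)) fun s hsB hs hdiam => ?_
  rw [← Nat.cast_pred hdim, ENNReal.rpow_natCast]
  exact hG.layerMeasure_le_mul_ediam_pow hA hs (fun x hx => hB₀ x (hsB hx))
    (happrox.mono_set hsB) (fun x hx => hderiv x (hsB hx)) hdiam hab

lemma layerMeasure_le (hG : IsGraphHeight e G M) (hab : a < b) :
    layerMeasure e G a b ≤ ENNReal.ofReal (b - a) • μH[(Module.finrank ℝ E : ℝ) - 1] := by
  have happrox (η : ℝ≥0) (hη : 0 < η) : layerMeasure e G a b ≤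
      ENNReal.ofReal ((1 + η) ^ (Module.finrank ℝ E + 1) * (b - a)) •
        μH[(Module.finrank ℝ E : ℝ) - 1] := by
    obtain ⟨Q, hQ, hcover, hpiece⟩ := exists_cover_approximatesLinearOn (f := G)
      ((isClosed_eq hG.lipschitzWith.continuous continuous_const).measurableSet.inter
        (measurableSet_of_differentiableAt ℝ G)) (fun _ hx => hx.2) hη
    refine measure_le_of_forall_restrict_le hQ
      (hG.ae_layerMeasure_eq_zero_and_differentiableAt.mono fun x hx => hcover hx) fun n => ?_
    rw [Measure.restrict_smul]
    obtain ⟨hsub, hne⟩ := hpiece n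
    rcases (Q n).eq_empty_or_nonempty with hempty | hnonempty
    · simp [hempty]
    obtain ⟨y, hy, hlin, hderiv⟩ := hne hnonempty
    exact hG.layerMeasure_restrict_le (hG.fderiv_apply_self hy.2) (hQ n)
      (fun x hx => (hsub hx).1) hlin hderiv hab
  refine Measure.le_iff.2 fun B _ => ?_
  have hlim : Tendsto (fun η : ℝ≥0 => ENNReal.ofReal
      ((1 + η) ^ (Module.finrank ℝ E + 1) * (b - a)) * μH[(Module.finrank ℝ E : ℝ) - 1] B)
      (𝓝[>] 0) (𝓝 (ENNReal.ofReal (b - a) * μH[(Module.finrank ℝ E : ℝ) - 1] B)) := by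
    refine ENNReal.Tendsto.mul_const ?_ (Or.inl (ENNReal.ofReal_pos.2 (sub_pos.2 hab)).ne')
    refine (ENNReal.tendsto_ofReal ?_).mono_left nhdsWithin_le_nhds
    have hcont : Continuous fun η : ℝ≥0 =>
        (1 + (η : ℝ)) ^ (Module.finrank ℝ E + 1) * (b - a) := by fun_prop
    simpa using hcont.tendsto 0
  refine ge_of_tendsto hlim ?_
  filter_upwards [self_mem_nhdsWithin] with η hη
  exact happrox η hη B

end IsGraphHeight

end LayerMeasure

section BoundaryChart

/-- Inside the open set `U`, the set `Ω` is the region above the Lipschitz graph with height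
function `G`. -/
structure IsBoundaryChart {E : Type*} [NormedAddCommGroup E] [NormedSpace ℝ E] (Ω : Set E) (e : E)
    (G : E → ℝ) (M : ℝ≥0) (U : Set E) : Prop extends IsGraphHeight e G M where
  isOpen : IsOpen U
  mem_iff : ∀ y ∈ U, (y ∈ Ω ↔ 0 < G y)

lemma isGraphHeight_inner_sub {E : Type*} [NormedAddCommGroup E] [InnerProductSpace ℝ E] {e : E}
    (he : ‖e‖ = 1) {g : E → ℝ} {L : ℝ≥0} (hg : LipschitzWith L g) :
    IsGraphHeight e (fun y => ⟪y, e⟫ - g (y - ⟪y, e⟫ • e)) (1 + L * (1 + 1)) := by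
  have hinner : LipschitzWith 1 fun y : E => ⟪y, e⟫ := by
    refine LipschitzWith.of_dist_le_mul fun y z => ?_
    rw [Real.dist_eq, ← inner_sub_left, dist_eq_norm]
    simpa [he] using abs_real_inner_le_norm (y - z) e
  have hproj : LipschitzWith (1 + 1) fun y : E => y - ⟪y, e⟫ • e := by
    refine LipschitzWith.id.sub (LipschitzWith.of_dist_le_mul fun y z => ?_)
    rw [dist_eq_norm, ← sub_smul, norm_smul, he, mul_one, ← dist_eq_norm]
    exact hinner.dist_le_mul y z
  refine ⟨he, hinner.sub (hg.comp hproj), fun y t => ?_⟩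
  have ht : ⟪y + t • e, e⟫ = ⟪y, e⟫ + t := by
    rw [inner_add_left, real_inner_smul_left, real_inner_self_eq_norm_sq, he]
    ring
  have hproj_eq : y + t • e - (⟪y, e⟫ + t) • e = y - ⟪y, e⟫ • e := by
    rw [add_smul]
    abel
  simp only [ht, hproj_eq]
  ring

lemma HasLipschitzBoundary.exists_isBoundaryChart {N : ℕ} {Ω : Set (Euc N)}
    (hΩ : HasLipschitzBoundary Ω) {x : Euc N} (hx : x ∈ frontier Ω) :
    ∃ e G M U, IsBoundaryChart Ω e G M U ∧ x ∈ U := by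
  obtain ⟨e, U, g, L, he, hU, hxU, hg, hiff⟩ := hΩ x hx
  exact ⟨e, _, _, U, ⟨isGraphHeight_inner_sub he hg, hU, fun y hy => by rw [hiff y hy, sub_pos]⟩,
    hxU⟩

variable {E : Type*} [NormedAddCommGroup E] [NormedSpace ℝ E] {Ω U : Set E} {e : E} {G : E → ℝ}
  {M : ℝ≥0} {x : E}

lemma IsBoundaryChart.mem_frontier_iff (h : IsBoundaryChart Ω e G M U) (hΩ : IsOpen Ω)
    (hx : x ∈ U) : x ∈ frontier Ω ↔ G x = 0 := by
  rw [hΩ.frontier_eq, Set.mem_sdiff, h.mem_iff x hx, not_lt]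
  refine ⟨fun ⟨hcl, hle⟩ => hle.antisymm (not_lt.1 fun hneg => ?_), fun h0 => ⟨?_, h0.le⟩⟩
  · have hopen : IsOpen (U ∩ {y | G y < 0}) :=
      h.isOpen.inter (isOpen_lt h.lipschitzWith.continuous continuous_const)
    obtain ⟨y, ⟨hyU, hy : G y < 0⟩, hyΩ⟩ := mem_closure_iff.1 hcl _ hopen ⟨hx, hneg⟩
    exact hy.not_gt ((h.mem_iff y hyU).1 hyΩ)
  · have hline : Tendsto (fun t : ℝ => x + t • e) (𝓝[>] 0) (𝓝 x) :=
      ((by fun_prop : Continuous fun t : ℝ => x + t • e).tendsto' 0 x (by simp)).mono_left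
        nhdsWithin_le_nhds
    refine mem_closure_of_tendsto hline ?_
    filter_upwards [hline (h.isOpen.mem_nhds hx), self_mem_nhdsWithin] with t ht (ht0 : 0 < t)
    rwa [h.mem_iff _ ht, h.apply_add_smul, h0, zero_add]

lemma graphSlab_inter_frontier (h : IsBoundaryChart Ω e G M U) (hΩ : IsOpen Ω) {W : Set E}
    (hW : W ⊆ U) (a b : ℝ) : graphSlab e G (W ∩ frontier Ω) a b = graphSlab e G W a b := by
  refine (graphSlab_mono inter_subset_left le_rfl le_rfl).antisymm fun y hy => ⟨hy.1, hy.2, ?_⟩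
  exact (h.mem_frontier_iff hΩ (hW hy.2)).2 (h.apply_graphProj y)

end BoundaryChart

section OuterNormal

lemma eventually_lt_of_hasFDerivAt {E : Type*} [NormedAddCommGroup E] [NormedSpace ℝ E]
    {f : E → ℝ} {A : E →L[ℝ] ℝ} {x v : E} (hf : HasFDerivAt f A x) (hv : 0 < A v) :
    ∀ᶠ p : ℝ × E in 𝓝[>] 0 ×ˢ 𝓝 v, f x < f (x + p.1 • p.2) := by
  have ht : Tendsto (Prod.fst : ℝ × E → ℝ) (𝓝[>] 0 ×ˢ 𝓝 v) (𝓝[>] 0) := tendsto_fst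
  have hw : Tendsto (Prod.snd : ℝ × E → E) (𝓝[>] 0 ×ˢ 𝓝 v) (𝓝 v) := tendsto_snd
  have hzero : Tendsto (fun p : ℝ × E => p.1 • p.2) (𝓝[>] 0 ×ˢ 𝓝 v) (𝓝 0) := by
    simpa using (ht.mono_right nhdsWithin_le_nhds).smul hw
  have hpos : ∀ᶠ p : ℝ × E in 𝓝[>] 0 ×ˢ 𝓝 v, 0 < p.1 := ht.eventually self_mem_nhdsWithin
  have hdir : Tendsto (fun p : ℝ × E => p.1⁻¹ • p.1 • p.2) (𝓝[>] 0 ×ˢ 𝓝 v) (𝓝 v) :=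
    hw.congr' (hpos.mono fun p hp => (inv_smul_smul₀ hp.ne' p.2).symm)
  have hquot := hf.hasFDerivWithinAt.lim hzero (Eventually.of_forall fun p => mem_univ _) hdir
  filter_upwards [hquot.eventually (lt_mem_nhds hv), hpos] with p hp hp0
  exact sub_pos.1 ((pos_iff_pos_of_mul_pos hp).1 (inv_pos.2 hp0))

open scoped Pointwise in
lemma not_tendsto_measure_inter_ball_div {E : Type*} [NormedAddCommGroup E] [NormedSpace ℝ E]
    [FiniteDimensional ℝ E] [MeasurableSpace E] [BorelSpace E] (μ : Measure E)
    [μ.IsAddHaarMeasure] {s : Set E} {x v : E}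
    (hs : ∀ᶠ p : ℝ × E in 𝓝[>] 0 ×ˢ 𝓝 v, x + p.1 • p.2 ∈ s) :
    ¬ Tendsto (fun r => μ (s ∩ ball x r) / μ (ball x r)) (𝓝[>] 0) (𝓝 0) := by
  obtain ⟨T, hT, S, hS, hTS⟩ := mem_prod_iff.1 hs
  obtain ⟨t₀, ht₀, hT⟩ := mem_nhdsGT_iff_exists_Ioo_subset.1 hT
  obtain ⟨ρ, hρ, hS⟩ := Metric.mem_nhds_iff.1 hS
  have hR : 0 < ‖v‖ + ρ := by positivity
  set c := ρ / (‖v‖ + ρ) with hc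
  have hc0 : 0 < c := by positivity
  intro hlim
  refine (ENNReal.ofReal_pos.2 (pow_pos hc0 (Module.finrank ℝ E))).not_ge
    (ge_of_tendsto hlim ?_)
  filter_upwards [Ioo_mem_nhdsGT (mul_pos ht₀ hR)] with r ⟨hr0, hr⟩
  rw [ENNReal.le_div_iff_mul_le (Or.inl (measure_ball_pos μ x hr0).ne')
    (Or.inl measure_ball_lt_top.ne), Measure.addHaar_ball_center μ x,
    ← Measure.addHaar_ball_mul_of_pos μ (x + (r / (‖v‖ + ρ)) • v) hc0]
  refine measure_mono ?_
  set t := r / (‖v‖ + ρ) with ht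
  have ht0 : 0 < t := by positivity
  have hball : ball (x + t • v) (c * r) = x +ᵥ t • ball v ρ := by
    rw [_root_.smul_ball ht0.ne', vadd_ball, vadd_eq_add, Real.norm_of_nonneg ht0.le, hc, ht]
    ring_nf
  rw [hball]
  rintro _ ⟨_, ⟨w, hw, rfl⟩, rfl⟩
  refine ⟨hTS (mk_mem_prod (hT ⟨ht0, (div_lt_iff₀ hR).2 hr⟩) (hS hw)), ?_⟩
  have hnorm : ‖w‖ < ‖v‖ + ρ := by
    linarith [norm_le_norm_add_norm_sub v w, mem_ball_iff_norm'.1 hw]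
  calc dist (x + t • w) x = t * ‖w‖ := by
        rw [dist_self_add_left, norm_smul, Real.norm_of_nonneg ht0.le]
    _ < t * (‖v‖ + ρ) := by gcongr
    _ = r := div_mul_cancel₀ r hR.ne'

variable {N : ℕ} {Ω U : Set (Euc N)} {e : Euc N} {G : Euc N → ℝ} {M : ℝ≥0} {ν : Euc N → Euc N}
  {x : Euc N}

lemma norm_gradient_eq_norm_fderiv {E : Type*} [NormedAddCommGroup E] [InnerProductSpace ℝ E]
    [CompleteSpace E] (f : E → ℝ) (x : E) : ‖gradient f x‖ = ‖fderiv ℝ f x‖ :=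
  LinearIsometryEquiv.norm_map _ _

/-- If the unit vectors `a` and `ν x` were not opposite, the direction `a + ν x` would point into
both `Ω` and the half-space `0 < ⟪y - x, ν x⟫`, contradicting that these meet with density zero. -/
lemma IsOuterUnitNormal.eq_neg_of_eventually_mem (hν : IsOuterUnitNormal Ω ν)
    (hx : x ∈ frontier Ω) {a : Euc N} (ha : ‖a‖ = 1)
    (h : ∀ v, 0 < ⟪a, v⟫ → ∀ᶠ p : ℝ × Euc N in 𝓝[>] 0 ×ˢ 𝓝 v, x + p.1 • p.2 ∈ Ω) :
    a = -ν x := by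
  obtain ⟨hν1, hlim⟩ := hν x hx
  by_contra hne
  have hpos : 0 < 1 + ⟪a, ν x⟫ := by
    have hge : -1 ≤ ⟪a, ν x⟫ := by
      have := (abs_le.1 (abs_real_inner_le_norm a (ν x))).1
      rwa [ha, hν1, mul_one] at this
    have : ⟪a, ν x⟫ ≠ -1 := fun h => hne ((inner_eq_neg_one_iff_of_norm_eq_one ha hν1).1 h)
    linarith [hge.lt_of_ne' this]
  have hν_pos : 0 < ⟪a + ν x, ν x⟫ := by
    rwa [inner_add_left, real_inner_self_eq_norm_sq, hν1, one_pow, add_comm]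
  have ha_pos : 0 < ⟪a, a + ν x⟫ := by
    rwa [inner_add_right, real_inner_self_eq_norm_sq, ha, one_pow]
  have hhalf : ∀ᶠ p : ℝ × Euc N in 𝓝[>] 0 ×ˢ 𝓝 (a + ν x),
      0 < ⟪x + p.1 • p.2 - x, ν x⟫ := by
    have hsnd : Tendsto (fun p : ℝ × Euc N => ⟪p.2, ν x⟫) (𝓝[>] 0 ×ˢ 𝓝 (a + ν x))
        (𝓝 ⟪a + ν x, ν x⟫) := tendsto_snd.inner tendsto_const_nhds
    filter_upwards [hsnd.eventually (lt_mem_nhds hν_pos),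
      tendsto_fst.eventually self_mem_nhdsWithin] with p hp (hp0 : 0 < p.1)
    rw [add_sub_cancel_left, real_inner_smul_left]
    positivity
  have hmem : ∀ᶠ p : ℝ × Euc N in 𝓝[>] 0 ×ˢ 𝓝 (a + ν x),
      x + p.1 • p.2 ∈ Ω ∩ {y | 0 < ⟪y - x, ν x⟫} := (h _ ha_pos).and hhalf
  refine not_tendsto_measure_inter_ball_div volume hmem ?_
  simpa only [inter_right_comm] using hlim

lemma IsBoundaryChart.gradient_eq_neg_norm_smul (h : IsBoundaryChart Ω e G M U) (hΩ : IsOpen Ω)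
    (hν : IsOuterUnitNormal Ω ν) (hxU : x ∈ U) (hx : x ∈ frontier Ω)
    (hd : DifferentiableAt ℝ G x) : gradient G x = (-‖gradient G x‖) • ν x := by
  have hnorm : 0 < ‖gradient G x‖ := by
    rw [norm_gradient_eq_norm_fderiv]
    exact one_pos.trans_le (h.one_le_norm_of_apply_eq_one (h.fderiv_apply_self hd))
  have hunit : ‖gradient G x‖⁻¹ • gradient G x = -ν x := by
    refine hν.eq_neg_of_eventually_mem hx (norm_smul_inv_norm (𝕜 := ℝ) (norm_pos_iff.1 hnorm))
      fun v hv => ?_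
    rw [real_inner_smul_left, inner_gradient_left] at hv
    have hpos : 0 < fderiv ℝ G x v := (pos_iff_pos_of_mul_pos hv).1 (inv_pos.2 hnorm)
    have hzero : Tendsto (fun p : ℝ × Euc N => x + p.1 • p.2) (𝓝[>] 0 ×ˢ 𝓝 v) (𝓝 x) := by
      simpa using tendsto_const_nhds.add (((tendsto_fst (f := 𝓝[>] (0 : ℝ)) (g := 𝓝 v)).mono_right
        nhdsWithin_le_nhds).smul tendsto_snd)
    filter_upwards [eventually_lt_of_hasFDerivAt hd.hasFDerivAt hpos,
      hzero.eventually (h.isOpen.mem_nhds hxU)] with p hp hpU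
    rwa [h.mem_iff _ hpU, ← (h.mem_frontier_iff hΩ hxU).1 hx]
  rw [neg_smul, ← smul_neg, ← hunit, smul_inv_smul₀ hnorm.ne']

end OuterNormal

section SlabIntegral

namespace IsGraphHeight

variable {E : Type*} [NormedAddCommGroup E] [InnerProductSpace ℝ E] [FiniteDimensional ℝ E]
  [MeasurableSpace E] [BorelSpace E] {e : E} {G : E → ℝ} {M : ℝ≥0} {a b : ℝ} {B : Set E}

lemma layerMeasure_restrict (hG : IsGraphHeight e G M) (hB : MeasurableSet B) :
    (layerMeasure e G a b).restrict B = ((volume.restrict (graphSlab e G B a b)).withDensity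
      fun y => ‖fderiv ℝ G y‖ₑ).map (graphProj e G) := by
  have hproj := hG.continuous_graphProj.measurable hB
  rw [layerMeasure, Measure.restrict_map hG.continuous_graphProj.measurable hB,
    restrict_withDensity hproj, Measure.restrict_restrict hproj, inter_comm]
  rfl

lemma layerMeasure_absolutelyContinuous (hG : IsGraphHeight e G M) (hab : a < b) :
    layerMeasure e G a b ≪ μH[(Module.finrank ℝ E : ℝ) - 1] :=
  (hG.layerMeasure_le hab).absolutelyContinuous.trans Measure.smul_absolutelyContinuous

lemma quasiMeasurePreserving_graphProj (hG : IsGraphHeight e G M) (hab : a < b)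
    (hB : MeasurableSet B) : Measure.QuasiMeasurePreserving (graphProj e G)
      (volume.restrict (graphSlab e G B a b))
      ((μH[(Module.finrank ℝ E : ℝ) - 1] : Measure E).restrict B) := by
  have hdens : ∀ᵐ y ∂volume.restrict (graphSlab e G B a b), ‖fderiv ℝ G y‖ₑ ≠ 0 := by
    refine ae_restrict_of_ae ?_
    filter_upwards [hG.lipschitzWith.ae_differentiableAt] with y hy
    rw [← ofReal_norm]
    exact (ENNReal.ofReal_pos.2 (one_pos.trans_le
      (hG.one_le_norm_of_apply_eq_one (hG.fderiv_apply_self hy)))).ne'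
  refine ⟨hG.continuous_graphProj.measurable, ?_⟩
  refine ((withDensity_absolutelyContinuous' (measurable_fderiv ℝ G).enorm.aemeasurable hdens).map
    hG.continuous_graphProj.measurable).trans ?_
  rw [← hG.layerMeasure_restrict hB]
  exact (hG.layerMeasure_absolutelyContinuous hab).restrict B

lemma setLIntegral_graphSlab_le (hG : IsGraphHeight e G M) (hab : a < b) (hB : MeasurableSet B)
    {F : E → ℝ≥0∞} (hF : AEMeasurable F ((layerMeasure e G a b).restrict B)) :
    ∫⁻ y in graphSlab e G B a b, ‖fderiv ℝ G y‖ₑ * F (graphProj e G y) ≤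
      ENNReal.ofReal (b - a) * ∫⁻ x in B, F x ∂μH[(Module.finrank ℝ E : ℝ) - 1] := by
  have hproj := hG.continuous_graphProj.measurable
  have hF' := hF
  rw [hG.layerMeasure_restrict hB] at hF'
  calc ∫⁻ y in graphSlab e G B a b, ‖fderiv ℝ G y‖ₑ * F (graphProj e G y)
      = ∫⁻ x in B, F x ∂layerMeasure e G a b := by
        rw [hG.layerMeasure_restrict hB, lintegral_map' hF' hproj.aemeasurable]
        exact (lintegral_withDensity_eq_lintegral_mul₀'
          (measurable_fderiv ℝ G).enorm.aemeasurable (hF'.comp_measurable hproj)).symm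
    _ ≤ ∫⁻ x in B, F x ∂(ENNReal.ofReal (b - a) • μH[(Module.finrank ℝ E : ℝ) - 1]) :=
        lintegral_mono' (Measure.restrict_mono le_rfl (hG.layerMeasure_le hab)) le_rfl
    _ = ENNReal.ofReal (b - a) * ∫⁻ x in B, F x ∂μH[(Module.finrank ℝ E : ℝ) - 1] := by
        rw [Measure.restrict_smul, lintegral_smul_measure, smul_eq_mul]

end IsGraphHeight

end SlabIntegral

section ChartEstimate

lemma IsGraphHeight.mem_graphSlab_thickening {E : Type*} [NormedAddCommGroup E] [NormedSpace ℝ E]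
    {e : E} {G : E → ℝ} {M : ℝ≥0} (hG : IsGraphHeight e G M) {A : Set E} {a b : ℝ} (ha : 0 ≤ a)
    {y : E} (hyA : y ∈ A) (hy : G y ∈ Ioo a b) : y ∈ graphSlab e G (thickening b A) a b := by
  refine ⟨hy, mem_thickening_iff.2 ⟨y, hyA, ?_⟩⟩
  rw [dist_comm, hG.dist_graphProj, abs_of_pos (ha.trans_lt hy.1)]
  exact hy.2

lemma IsGraphHeight.dist_graphProj_lt {E : Type*} [NormedAddCommGroup E] [NormedSpace ℝ E]
    {e : E} {G : E → ℝ} {M : ℝ≥0} (hG : IsGraphHeight e G M) {W : Set E} {a b : ℝ} (ha : 0 ≤ a)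
    {y : E} (hy : y ∈ graphSlab e G W a b) : dist y (graphProj e G y) < b := by
  rw [hG.dist_graphProj, abs_of_pos (ha.trans_lt hy.1.1)]
  exact hy.1.2

lemma IsBoundaryChart.graphSlab_thickening_subset_sdiff {E : Type*} [NormedAddCommGroup E]
    [NormedSpace ℝ E] {Ω U W K : Set E} {e : E} {G : E → ℝ} {M : ℝ≥0}
    (h : IsBoundaryChart Ω e G M U) (hΩ : IsOpen Ω) {b δ : ℝ} (hW : thickening (b + δ) W ⊆ U)
    (hK : thickening b K ⊆ Ω) : graphSlab e G (thickening δ W) 0 b ⊆ Ω \ K := by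
  rintro y ⟨⟨hy0, hyb⟩, hyW⟩
  have hdist : dist (graphProj e G y) y < b := by rwa [dist_comm, h.dist_graphProj, abs_of_pos hy0]
  have hpU : graphProj e G y ∈ U := hW (thickening_mono (by linarith) W hyW)
  have hp : graphProj e G y ∈ frontier Ω := (h.mem_frontier_iff hΩ hpU).2 (h.apply_graphProj y)
  have hyU : y ∈ U := hW (thickening_thickening_subset b δ W
    (mem_thickening_iff.2 ⟨_, hyW, by rwa [dist_comm]⟩))
  refine ⟨(h.mem_iff y hyU).2 hy0, fun hyK => ?_⟩
  rw [hΩ.frontier_eq] at hp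
  exact hp.2 (hK (mem_thickening_iff.2 ⟨y, hyK, hdist⟩))

variable {N : ℕ} {φ : Euc N → Euc N → ℝ} {Ω U : Set (Euc N)} {lam Lam : ℝ} {u f : Euc N → ℝ}
  {e : Euc N} {G : Euc N → ℝ} {M : ℝ≥0} {ν : Euc N → Euc N}

lemma IsTrace.aemeasurable (hf : IsTrace Ω u f) (hΩ : IsOpen Ω) (hum : StronglyMeasurable u)
    (hu : LocallyIntegrable u) :
    AEMeasurable f ((μH[(N : ℝ) - 1] : Measure (Euc N)).restrict (frontier Ω)) := by
  refine (aestronglyMeasurable_of_tendsto_setAverage_ball hΩ hum hu ?_).aemeasurable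
  filter_upwards [hf, ae_restrict_mem isClosed_frontier.measurableSet] with x hlim hx
  exact ⟨frontier_subset_closure hx, hlim⟩

lemma MetricIntegrand.aemeasurable (hφ : MetricIntegrand φ Ω lam Lam) {μ : Measure (Euc N)}
    (hμ : ∀ᵐ x ∂μ, x ∈ closure Ω) {ξ : Euc N → Euc N} (hξ : AEMeasurable ξ μ) :
    AEMeasurable (fun x => φ x (ξ x)) μ := by
  classical
  have hind : Measurable ((closure Ω ×ˢ univ).piecewise (fun p : Euc N × Euc N => φ p.1 p.2) 0) :=
    hφ.1.measurable_piecewise continuousOn_const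
      (isClosed_closure.measurableSet.prod MeasurableSet.univ)
  refine (hind.comp_aemeasurable (aemeasurable_id.prodMk hξ)).congr ?_
  filter_upwards [hμ] with x hx
  exact piecewise_eq_of_mem _ _ _ (mk_mem_prod hx (mem_univ _))

lemma IsBoundaryChart.aemeasurable_normal (h : IsBoundaryChart Ω e G M U) (hΩ : IsOpen Ω)
    (hν : IsOuterUnitNormal Ω ν) (a b : ℝ) :
    AEMeasurable ν ((layerMeasure e G a b).restrict (U ∩ frontier Ω)) := by
  have hgrad : Measurable (gradient G) :=
    (InnerProductSpace.toDual ℝ (Euc N)).symm.continuous.measurable.comp (measurable_fderiv ℝ G)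
  refine ((hgrad.norm.inv.smul hgrad).neg).aemeasurable.congr ?_
  filter_upwards [ae_restrict_of_ae h.ae_layerMeasure_eq_zero_and_differentiableAt,
    ae_restrict_mem (h.isOpen.measurableSet.inter isClosed_frontier.measurableSet)]
    with x hGx hxUΩ
  obtain ⟨hxU, hx⟩ := hxUΩ
  have hd : DifferentiableAt ℝ G x := hGx.2
  have hnorm : ‖gradient G x‖ ≠ 0 := by
    rw [norm_gradient_eq_norm_fderiv]
    exact (one_pos.trans_le (h.one_le_norm_of_apply_eq_one (h.fderiv_apply_self hd))).ne'
  rw [Pi.neg_apply, Pi.smul_apply', Pi.inv_apply]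
  nth_rw 2 [h.gradient_eq_neg_norm_smul hΩ hν hxU hx hd]
  rw [neg_smul, smul_neg, neg_neg, inv_smul_smul₀ hnorm]

end ChartEstimate

section CutoffEstimate

variable {N : ℕ} {φ : Euc N → Euc N → ℝ} {Ω U W K : Set (Euc N)} {lam Lam : ℝ} {u f : Euc N → ℝ}
  {e : Euc N} {G ψ : Euc N → ℝ} {M C : ℝ≥0} {ν : Euc N → Euc N} {a b : ℝ}

lemma IsBoundaryChart.quasiMeasurePreserving_graphProj (h : IsBoundaryChart Ω e G M U)
    (hΩ : IsOpen Ω) (hW : MeasurableSet W) (hWU : W ⊆ U) (hab : a < b) :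
    Measure.QuasiMeasurePreserving (graphProj e G) (volume.restrict (graphSlab e G W a b))
      ((μH[(N : ℝ) - 1] : Measure (Euc N)).restrict (frontier Ω)) := by
  have hmap := h.toIsGraphHeight.quasiMeasurePreserving_graphProj hab
    (hW.inter (isClosed_frontier (s := Ω)).measurableSet)
  rw [finrank_euclideanSpace_fin, graphSlab_inter_frontier h hΩ hWU] at hmap
  exact hmap.mono_right (Measure.restrict_mono inter_subset_right le_rfl).absolutelyContinuous

lemma IsBoundaryChart.aemeasurable_apply_normal_mul_abs_trace (h : IsBoundaryChart Ω e G M U)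
    (hφ : MetricIntegrand φ Ω lam Lam) (hΩ : IsOpen Ω) (hν : IsOuterUnitNormal Ω ν)
    (hf : IsTrace Ω u f) (hum : StronglyMeasurable u) (hu : LocallyIntegrable u) (hab : a < b) :
    AEMeasurable (fun x => φ x (ν x) * |f x|)
      ((layerMeasure e G a b).restrict (U ∩ frontier Ω)) := by
  have hmem : ∀ᵐ x ∂(layerMeasure e G a b).restrict (U ∩ frontier Ω), x ∈ closure Ω := by
    filter_upwards [ae_restrict_mem (h.isOpen.measurableSet.inter isClosed_frontier.measurableSet)]
      with x hx using frontier_subset_closure hx.2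
  have hac := h.layerMeasure_absolutelyContinuous hab
  rw [finrank_euclideanSpace_fin] at hac
  have hf' := ((hf.aemeasurable hΩ hum hu).mono_ac (hac.restrict (frontier Ω))).mono_measure
    (Measure.restrict_mono (inter_subset_right : U ∩ frontier Ω ⊆ _) le_rfl)
  exact (hφ.aemeasurable hmem (h.aemeasurable_normal hΩ hν a b)).mul
    (continuous_abs.measurable.comp_aemeasurable hf')

lemma IsBoundaryChart.apply_gradient_le (h : IsBoundaryChart Ω e G M U)
    (hφ : MetricIntegrand φ Ω lam Lam) (hΩ : IsOpen Ω) (hν : IsOuterUnitNormal Ω ν) {y : Euc N}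
    {c : ℝ} (hy : DifferentiableAt ℝ G y) (hU : graphProj e G y ∈ U)
    (hcomp : ∀ ξ, φ y ξ ≤ c * φ (graphProj e G y) ξ) :
    φ y (gradient G y) ≤
      c * (‖fderiv ℝ G y‖ * φ (graphProj e G y) (ν (graphProj e G y))) := by
  have hp : graphProj e G y ∈ frontier Ω := (h.mem_frontier_iff hΩ hU).2 (h.apply_graphProj y)
  have hgrad : gradient G (graphProj e G y) = gradient G y :=
    congrArg (InnerProductSpace.toDual ℝ (Euc N)).symm (h.fderiv_graphProj y)
  have hnormal := h.gradient_eq_neg_norm_smul hΩ hν hU hp (h.differentiableAt_graphProj.2 hy)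
  rw [hgrad, norm_gradient_eq_norm_fderiv] at hnormal
  calc φ y (gradient G y) ≤ c * φ (graphProj e G y) (gradient G y) := hcomp _
    _ = c * (‖fderiv ℝ G y‖ * φ (graphProj e G y) (ν (graphProj e G y))) := by
        rw [hnormal, hφ.smul (frontier_subset_closure hp), abs_neg, abs_norm]

lemma MetricIntegrand.apply_gradient_le_mul (hφ : MetricIntegrand φ Ω lam Lam)
    (hG : LipschitzWith M G) {y : Euc N} (hy : y ∈ closure Ω) :
    φ y (gradient G y) ≤ Lam * M := by
  obtain ⟨-, -, -, -, hLam, hbound⟩ := hφ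
  refine (hbound y hy _).2.trans (mul_le_mul_of_nonneg_left ?_ hLam.le)
  rw [norm_gradient_eq_norm_fderiv]
  exact norm_fderiv_le_of_lipschitz ℝ hG

-- Replacing the weight `s` at a point by the weight `t` at its projection costs `D`, replacing the
-- value `v` by the boundary value `w` costs `|v - w|`.
lemma ofReal_abs_mul_le_add_enorm_sub {v w s t D k c L Φ P : ℝ} (hk : 0 ≤ k) (hst : s ≤ t + D)
    (hD : 0 ≤ D) (ht : t ∈ Icc (0 : ℝ) 1) (hc : 0 ≤ c) (hΦ : 0 ≤ Φ) (hΦL : Φ ≤ L)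
    (hΦP : Φ ≤ c * P) :
    ENNReal.ofReal (|v| * (s * k * Φ)) ≤ ENNReal.ofReal (D * k * L) * ‖v‖ₑ +
      (ENNReal.ofReal (k * L) * ‖v - w‖ₑ +
        ENNReal.ofReal (c * k) * ENNReal.ofReal (t * (P * |w|))) := by
  obtain ⟨ht0, ht1⟩ := ht
  have hL : 0 ≤ L := hΦ.trans hΦL
  have htri : |v| ≤ |v - w| + |w| := by simpa using abs_add_le (v - w) w
  have hreal : |v| * (s * k * Φ) ≤
      D * k * L * |v| + (k * L * |v - w| + c * k * (t * (P * |w|))) :=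
    calc |v| * (s * k * Φ) ≤ |v| * ((t + D) * k * Φ) := by gcongr
      _ = D * k * Φ * |v| + t * k * Φ * |v| := by ring
      _ ≤ D * k * L * |v| + t * k * Φ * (|v - w| + |w|) := by gcongr
      _ = D * k * L * |v| + (t * k * Φ * |v - w| + t * k * Φ * |w|) := by ring
      _ ≤ D * k * L * |v| + (1 * k * L * |v - w| + t * k * (c * P) * |w|) := by gcongr
      _ = D * k * L * |v| + (k * L * |v - w| + c * k * (t * (P * |w|))) := by ring
  rw [Real.enorm_eq_ofReal_abs, Real.enorm_eq_ofReal_abs, ← ENNReal.ofReal_mul (by positivity),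
    ← ENNReal.ofReal_mul (by positivity), ← ENNReal.ofReal_mul (by positivity)]
  exact (ENNReal.ofReal_le_ofReal hreal).trans (ENNReal.ofReal_add_le.trans
    (add_le_add_right ENNReal.ofReal_add_le _))

lemma IsBoundaryChart.ofReal_abs_mul_apply_gradient_le (h : IsBoundaryChart Ω e G M U)
    (hφ : MetricIntegrand φ Ω lam Lam) (hΩ : IsOpen Ω) (hν : IsOuterUnitNormal Ω ν)
    (hψ : LipschitzWith C ψ) (h01 : ∀ x, ψ x ∈ Icc 0 1) {ε c : ℝ} (hε : 0 < ε) (hc : 0 ≤ c)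
    {y : Euc N} (hyΩ : y ∈ Ω) (hy : DifferentiableAt ℝ G y) (hU : graphProj e G y ∈ U)
    (hdist : dist y (graphProj e G y) ≤ 2 * ε)
    (hcomp : ∀ ξ, φ y ξ ≤ c * φ (graphProj e G y) ξ) :
    ENNReal.ofReal (|u y| * (ψ y * ε⁻¹ * φ y (gradient G y))) ≤
      ENNReal.ofReal (2 * C * (Lam * M)) * ‖u y‖ₑ +
        (ENNReal.ofReal (ε⁻¹ * (Lam * M)) * ‖u y - f (graphProj e G y)‖ₑ +
          ENNReal.ofReal (c * ε⁻¹) * (‖fderiv ℝ G y‖ₑ *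
            (ENNReal.ofReal (ψ (graphProj e G y)) * ENNReal.ofReal
              (φ (graphProj e G y) (ν (graphProj e G y)) * |f (graphProj e G y)|)))) := by
  set p := graphProj e G y
  have hψp : ψ y ≤ ψ p + C * (2 * ε) := by
    have hlip := (Real.le_norm_self _).trans (hψ.dist_le_mul y p)
    linarith [mul_le_mul_of_nonneg_left hdist C.coe_nonneg]
  have hyc : y ∈ closure Ω := subset_closure hyΩ
  convert ofReal_abs_mul_le_add_enorm_sub (inv_nonneg.2 hε.le) hψp (by positivity) (h01 p) hc
    (hφ.nonneg hyc _) (hφ.apply_gradient_le_mul h.lipschitzWith hyc)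
    (h.apply_gradient_le hφ hΩ hν hy hU hcomp) using 4
  · field_simp
  · rw [← ofReal_norm, ← ENNReal.ofReal_mul (h01 p).1, ← ENNReal.ofReal_mul (norm_nonneg _)]
    congr 1
    ring

lemma IsBoundaryChart.setLIntegral_graphSlab_le (h : IsBoundaryChart Ω e G M U)
    (hφ : MetricIntegrand φ Ω lam Lam) (hΩ : IsOpen Ω) (hν : IsOuterUnitNormal Ω ν)
    (hf : IsTrace Ω u f) (hum : StronglyMeasurable u) (hu : LocallyIntegrable u)
    (hψ : Measurable ψ) (hW : MeasurableSet W) (hWU : W ⊆ U) (hab : a < b) :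
    ∫⁻ y in graphSlab e G W a b, ‖fderiv ℝ G y‖ₑ * (ENNReal.ofReal (ψ (graphProj e G y)) *
        ENNReal.ofReal (φ (graphProj e G y) (ν (graphProj e G y)) * |f (graphProj e G y)|)) ≤
      ENNReal.ofReal (b - a) * ∫⁻ x in frontier Ω, ENNReal.ofReal (ψ x) *
        ENNReal.ofReal (φ x (ν x) * |f x|) ∂(μH[(N : ℝ) - 1] : Measure (Euc N)) := by
  have hmeas := hψ.ennreal_ofReal.aemeasurable.mul
    ((h.aemeasurable_apply_normal_mul_abs_trace hφ hΩ hν hf hum hu hab).mono_measure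
      (Measure.restrict_mono (inter_subset_inter_left _ hWU) le_rfl)).ennreal_ofReal
  have hle := h.toIsGraphHeight.setLIntegral_graphSlab_le hab
    (hW.inter (isClosed_frontier (s := Ω)).measurableSet) hmeas
  rw [graphSlab_inter_frontier h hΩ hWU, finrank_euclideanSpace_fin] at hle
  exact hle.trans (mul_le_mul_right (lintegral_mono_set inter_subset_right) _)

lemma IsBoundaryChart.graphProj_mem_frontier (h : IsBoundaryChart Ω e G M U) (hΩ : IsOpen Ω)
    {y : Euc N} (hU : graphProj e G y ∈ U) : graphProj e G y ∈ frontier Ω :=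
  (h.mem_frontier_iff hΩ hU).2 (h.apply_graphProj y)

lemma IsBoundaryChart.setLIntegral_cutoff_le_add_enorm_sub_trace (h : IsBoundaryChart Ω e G M U)
    (hφ : MetricIntegrand φ Ω lam Lam) (hΩ : IsOpen Ω) (hν : IsOuterUnitNormal Ω ν)
    (hf : IsTrace Ω u f) (hum : StronglyMeasurable u) (hu : LocallyIntegrable u)
    (hψ : LipschitzWith C ψ) (h01 : ∀ x, ψ x ∈ Icc 0 1) {ε c : ℝ} (hε : 0 < ε) (hc : 0 ≤ c)
    (hW : IsOpen W) (hWU : W ⊆ U) (hWΩ : graphSlab e G W ε (2 * ε) ⊆ Ω)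
    (hcomp : ∀ y ∈ closure Ω, ∀ p ∈ closure Ω, dist y p < 2 * ε → ∀ ξ, φ y ξ ≤ c * φ p ξ) :
    ∫⁻ y in graphSlab e G W ε (2 * ε),
        ENNReal.ofReal (|u y| * (ψ y * ε⁻¹ * φ y (gradient G y))) ≤
      ENNReal.ofReal (2 * C * (Lam * M)) * (∫⁻ y in graphSlab e G W ε (2 * ε), ‖u y‖ₑ) +
        (ENNReal.ofReal (ε⁻¹ * (Lam * M)) *
            (∫⁻ y in graphSlab e G W ε (2 * ε), ‖u y - f (graphProj e G y)‖ₑ) +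
          ENNReal.ofReal c * ∫⁻ x in frontier Ω, ENNReal.ofReal (ψ x) *
            ENNReal.ofReal (φ x (ν x) * |f x|) ∂(μH[(N : ℝ) - 1] : Measure (Euc N))) := by
  have hab : ε < 2 * ε := by linarith
  have hproj := h.quasiMeasurePreserving_graphProj hΩ hW.measurableSet hWU hab
  have htrace : AEMeasurable (fun y => ENNReal.ofReal (ε⁻¹ * (Lam * M)) *
      ‖u y - f (graphProj e G y)‖ₑ) (volume.restrict (graphSlab e G W ε (2 * ε))) :=
    (hum.aemeasurable.sub
      ((hf.aemeasurable hΩ hum hu).comp_quasiMeasurePreserving hproj)).enorm.const_mul _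
  have hdiff : ∀ᵐ y, DifferentiableAt ℝ G y := h.lipschitzWith.ae_differentiableAt
  refine (setLIntegral_mono_ae' (h.isOpen_graphSlab hW ε (2 * ε)).measurableSet
    (hdiff.mono fun y hy hyS => h.ofReal_abs_mul_apply_gradient_le (u := u) (f := f) hφ hΩ hν hψ
      h01 hε hc (hWΩ hyS) hy (hWU hyS.2) (h.dist_graphProj_lt hε.le hyS).le
      (hcomp y (subset_closure (hWΩ hyS)) _
        (frontier_subset_closure (h.graphProj_mem_frontier hΩ (hWU hyS.2)))
        (h.dist_graphProj_lt hε.le hyS)))).trans ?_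
  rw [lintegral_add_left (hum.enorm.const_mul _), lintegral_add_left' htrace,
    lintegral_const_mul' _ _ ENNReal.ofReal_ne_top, lintegral_const_mul' _ _ ENNReal.ofReal_ne_top,
    lintegral_const_mul' _ _ ENNReal.ofReal_ne_top]
  gcongr _ + (_ + ?_)
  refine (mul_le_mul_right (h.setLIntegral_graphSlab_le hφ hΩ hν hf hum hu
    hψ.continuous.measurable hW.measurableSet hWU hab) _).trans_eq ?_
  rw [← mul_assoc, ← ENNReal.ofReal_mul (by positivity)]
  congr 2
  field_simp
  ring

lemma IsBoundaryChart.setLIntegral_cutoff_le (h : IsBoundaryChart Ω e G M U)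
    (hφ : MetricIntegrand φ Ω lam Lam) (hΩ : IsOpen Ω) (hν : IsOuterUnitNormal Ω ν)
    (hf : IsTrace Ω u f) (hum : StronglyMeasurable u) (hu : Integrable u)
    (hψ : LipschitzWith C ψ) (h01 : ∀ x, ψ x ∈ Icc 0 1) {ε c : ℝ} (hε : 0 < ε) (hc : 0 ≤ c)
    (hU : thickening (6 * ε) (Function.support ψ) ⊆ U) (hK : thickening (3 * ε) K ⊆ Ω)
    (hcomp : ∀ y ∈ closure Ω, ∀ p ∈ closure Ω, dist y p < 2 * ε → ∀ ξ, φ y ξ ≤ c * φ p ξ) :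
    ∫⁻ y in graphSlab e G (thickening (2 * ε) (Function.support ψ)) ε (2 * ε),
        ENNReal.ofReal (|u y| * (ψ y * ε⁻¹ * φ y (gradient G y))) ≤
      ENNReal.ofReal (2 * C * (Lam * M)) *
          (∫⁻ y in Ω ∩ thickening (2 * ε) (frontier Ω), ‖u y‖ₑ) +
        (ENNReal.ofReal (2 * (Lam * M)) * TV (Ω \ K) u +
          ENNReal.ofReal c * ∫⁻ x in frontier Ω, ENNReal.ofReal (ψ x) *
            ENNReal.ofReal (φ x (ν x) * |f x|) ∂(μH[(N : ℝ) - 1] : Measure (Euc N))) := by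
  set W := thickening (2 * ε) (Function.support ψ)
  have hW : IsOpen W := isOpen_thickening
  have hWU' : thickening (3 * ε + ε) W ⊆ U :=
    (thickening_thickening_subset _ _ _).trans (by ring_nf at hU ⊢; exact hU)
  have hWU : W ⊆ U := (self_subset_thickening (by positivity) W).trans hWU'
  have hlayer : graphSlab e G (thickening ε W) 0 (3 * ε) ⊆ Ω \ K :=
    h.graphSlab_thickening_subset_sdiff hΩ hWU' hK
  have hslab : graphSlab e G W ε (2 * ε) ⊆ Ω := (graphSlab_mono
    (self_subset_thickening hε W) hε.le (by linarith)).trans (hlayer.trans sdiff_subset)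
  have htrace : ENNReal.ofReal (ε⁻¹ * (Lam * M)) *
      (∫⁻ y in graphSlab e G W ε (2 * ε), ‖u y - f (graphProj e G y)‖ₑ) ≤
        ENNReal.ofReal (2 * (Lam * M)) * TV (Ω \ K) u := by
    refine (mul_le_mul_right (h.setLIntegral_enorm_sub_trace_le hum hu hW hε hlayer sdiff_subset
      ((h.quasiMeasurePreserving_graphProj hΩ hW.measurableSet hWU (by linarith)).ae hf))
      _).trans_eq ?_
    rw [← mul_assoc, ← ENNReal.ofReal_mul' (by positivity)]
    congr 2
    field_simp
  refine (h.setLIntegral_cutoff_le_add_enorm_sub_trace hφ hΩ hν hf hum hu.locallyIntegrable hψ h01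
    hε hc hW hWU hslab hcomp).trans (add_le_add ?_ (add_le_add htrace le_rfl))
  gcongr
  exact fun y hy => ⟨hslab hy, mem_thickening_iff.2 ⟨_, h.graphProj_mem_frontier hΩ (hWU hy.2),
    h.dist_graphProj_lt hε.le hy⟩⟩

end CutoffEstimate

section CutoffProfile

/-- The piecewise linear profile equal to `1` on `(-∞, ε]` and to `0` on `[2 * ε, ∞)`; composed with
a height function it cuts off to the layer along the boundary. -/
def cutoffProfile (ε t : ℝ) : ℝ := max 0 (min 1 (2 - ε⁻¹ * t))

variable {ε t : ℝ}

lemma cutoffProfile_mem_Icc (ε t : ℝ) : cutoffProfile ε t ∈ Icc 0 1 :=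
  ⟨le_max_left _ _, max_le zero_le_one (min_le_left _ _)⟩

lemma cutoffProfile_of_le (hε : 0 < ε) (ht : t ≤ ε) : cutoffProfile ε t = 1 := by
  have : ε⁻¹ * t ≤ 1 := by rwa [inv_mul_le_iff₀ hε, mul_one]
  rw [cutoffProfile, min_eq_left (by linarith), max_eq_right zero_le_one]

lemma cutoffProfile_of_two_mul_le (hε : 0 < ε) (ht : 2 * ε ≤ t) : cutoffProfile ε t = 0 := by
  have : 2 ≤ ε⁻¹ * t := by rwa [le_inv_mul_iff₀ hε, mul_comm]
  rw [cutoffProfile, max_eq_left ((min_le_right _ _).trans (by linarith))]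

lemma cutoffProfile_of_mem_Ioo (hε : 0 < ε) (ht : t ∈ Ioo ε (2 * ε)) :
    cutoffProfile ε t = 2 - ε⁻¹ * t := by
  have : 1 < ε⁻¹ * t := by rw [lt_inv_mul_iff₀ hε, mul_one]; exact ht.1
  have : ε⁻¹ * t < 2 := by rw [inv_mul_lt_iff₀ hε, mul_comm]; exact ht.2
  rw [cutoffProfile, min_eq_right (by linarith), max_eq_right (by linarith)]

lemma lipschitzWith_cutoffProfile (ε : ℝ) : LipschitzWith ‖ε⁻¹‖₊ (cutoffProfile ε) := by
  refine ((LipschitzWith.of_dist_le_mul fun s t => ?_).const_min 1).const_max 0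
  rw [dist_sub_left, Real.dist_eq, ← mul_sub, abs_mul, Real.dist_eq, coe_nnnorm, Real.norm_eq_abs]

variable {E : Type*} [NormedAddCommGroup E] [InnerProductSpace ℝ E] [CompleteSpace E]
  {G : E → ℝ} {y : E}

lemma gradient_cutoffProfile_comp_of_mem_Ioo (hε : 0 < ε) (hG : DifferentiableAt ℝ G y)
    (hy : G y ∈ Ioo ε (2 * ε)) :
    gradient (fun x => cutoffProfile ε (G x)) y = (-ε⁻¹) • gradient G y := by
  have heq : (fun x => cutoffProfile ε (G x)) =ᶠ[𝓝 y] fun x => 2 - ε⁻¹ * G x := by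
    filter_upwards [hG.continuousAt.eventually (isOpen_Ioo.mem_nhds hy)] with x hx
    exact cutoffProfile_of_mem_Ioo hε hx
  rw [gradient, gradient, heq.fderiv_eq, fderiv_const_sub, fderiv_const_mul hG, ← neg_smul,
    map_smul]

-- Off the open layer the profile takes its extreme values, also at the kinks.
lemma gradient_cutoffProfile_comp_of_notMem_Ioo (hε : 0 < ε) (hy : G y ∉ Ioo ε (2 * ε)) :
    gradient (fun x => cutoffProfile ε (G x)) y = 0 := by
  have : fderiv ℝ (fun x => cutoffProfile ε (G x)) y = 0 := by
    rw [mem_Ioo, not_and_or, not_lt, not_lt] at hy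
    rcases hy with hy | hy
    · refine IsLocalMax.fderiv_eq_zero (Eventually.of_forall fun x => ?_)
      simp only [cutoffProfile_of_le hε hy]
      exact (cutoffProfile_mem_Icc ε _).2
    · refine IsLocalMin.fderiv_eq_zero (Eventually.of_forall fun x => ?_)
      simp only [cutoffProfile_of_two_mul_le hε hy]
      exact (cutoffProfile_mem_Icc ε _).1
  rw [gradient, this, map_zero]

lemma gradient_sum_mul {ι : Type*} (s : Finset ι) {a b : ι → E → ℝ}
    (ha : ∀ i ∈ s, DifferentiableAt ℝ (a i) y) (hb : ∀ i ∈ s, DifferentiableAt ℝ (b i) y) :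
    gradient (fun x => ∑ i ∈ s, a i x * b i x) y =
      ∑ i ∈ s, (b i y • gradient (a i) y + a i y • gradient (b i) y) := by
  rw [gradient, fderiv_fun_sum fun i hi => (ha i hi).fun_mul (hb i hi), map_sum]
  refine Finset.sum_congr rfl fun i hi => ?_
  rw [fderiv_fun_mul (ha i hi) (hb i hi), map_add, map_smul, map_smul, gradient, gradient, add_comm]

lemma lipschitzWith_mul_of_nnnorm_le {α R : Type*} [PseudoMetricSpace α] [SeminormedRing R]
    {a b : α → R} {A B K L : ℝ≥0} (ha : LipschitzWith A a) (hb : LipschitzWith B b)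
    (haK : ∀ x, ‖a x‖₊ ≤ K) (hbL : ∀ x, ‖b x‖₊ ≤ L) :
    LipschitzWith (A * L + K * B) fun x => a x * b x := by
  refine LipschitzWith.of_dist_le_mul fun x y => ?_
  have ha' := ha.dist_le_mul x y
  have hb' := hb.dist_le_mul x y
  rw [dist_eq_norm] at ha' hb'
  calc dist (a x * b x) (a y * b y) = ‖(a x - a y) * b x + a y * (b x - b y)‖ := by
        rw [dist_eq_norm, sub_mul, mul_sub, sub_add_sub_cancel]
    _ ≤ ‖a x - a y‖ * ‖b x‖ + ‖a y‖ * ‖b x - b y‖ :=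
        (norm_add_le _ _).trans (add_le_add (norm_mul_le _ _) (norm_mul_le _ _))
    _ ≤ A * dist x y * L + K * (B * dist x y) := by
        gcongr
        exacts [hbL x, haK y]
    _ = ↑(A * L + K * B) * dist x y := by
        push_cast
        ring

lemma lipschitzWith_sum {α F ι : Type*} [PseudoEMetricSpace α] [SeminormedAddCommGroup F]
    {f : ι → α → F} {A : ι → ℝ≥0} (s : Finset ι) (hf : ∀ i ∈ s, LipschitzWith (A i) (f i)) :
    LipschitzWith (∑ i ∈ s, A i) fun x => ∑ i ∈ s, f i x := by
  classical
  induction s using Finset.induction_on with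
  | empty => simpa using LipschitzWith.const (0 : F)
  | insert i s hi ih =>
    simp_rw [Finset.sum_insert hi]
    exact (hf i (s.mem_insert_self i)).add (ih fun j hj => hf j (Finset.mem_insert_of_mem hj))

lemma sum_lintegral_le {α ι : Type*} [MeasurableSpace α] (μ : Measure α) (s : Finset ι)
    (F : ι → α → ℝ≥0∞) : ∑ i ∈ s, ∫⁻ x, F i x ∂μ ≤ ∫⁻ x, ∑ i ∈ s, F i x ∂μ := by
  classical
  induction s using Finset.induction_on with
  | empty => simp
  | insert i s hi ih =>
    simp_rw [Finset.sum_insert hi]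
    exact (add_le_add_right ih _).trans (le_lintegral_add _ _)

end CutoffProfile

section Comparison

variable {N : ℕ} {φ : Euc N → Euc N → ℝ} {Ω : Set (Euc N)} {lam Lam : ℝ} {x : Euc N}

lemma MetricIntegrand.add_le (hφ : MetricIntegrand φ Ω lam Lam) (hx : x ∈ closure Ω)
    (ξ ζ : Euc N) : φ x (ξ + ζ) ≤ φ x ξ + φ x ζ := by
  have hconv := (hφ.2.1 x hx).2 (mem_univ ξ) (mem_univ ζ) (one_half_pos (α := ℝ)).le
    one_half_pos.le (add_halves 1)
  rw [← smul_add, hφ.smul hx, abs_of_pos one_half_pos, smul_eq_mul, smul_eq_mul] at hconv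
  linarith

lemma MetricIntegrand.sum_le (hφ : MetricIntegrand φ Ω lam Lam) (hx : x ∈ closure Ω) {ι : Type*}
    (s : Finset ι) (ξ : ι → Euc N) : φ x (∑ i ∈ s, ξ i) ≤ ∑ i ∈ s, φ x (ξ i) :=
  Finset.le_sum_of_subadditive (φ x) (hφ.zero hx).le (hφ.add_le hx) s ξ

lemma MetricIntegrand.exists_forall_dist_lt_le_mul (hφ : MetricIntegrand φ Ω lam Lam)
    (hΩ : IsBounded Ω) {η : ℝ} (hη : 0 < η) :
    ∃ τ > 0, ∀ y ∈ closure Ω, ∀ p ∈ closure Ω, dist y p < τ → ∀ ξ, φ y ξ ≤ (1 + η) * φ p ξ := by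
  obtain ⟨hcont, -, -, hlam, -, hbound⟩ := id hφ
  have hunif := (hΩ.isCompact_closure.prod (isCompact_sphere (0 : Euc N) 1))
    |>.uniformContinuousOn_of_continuous (hcont.mono (prod_mono le_rfl (subset_univ _)))
  obtain ⟨τ, hτ, hclose⟩ := Metric.uniformContinuousOn_iff.1 hunif (η * lam) (by positivity)
  refine ⟨τ, hτ, fun y hy p hp hdist ξ => ?_⟩
  have hsphere : ∀ ζ ∈ sphere (0 : Euc N) 1, φ y ζ ≤ (1 + η) * φ p ζ := by
    intro ζ hζ
    have hdiff := (le_abs_self _).trans_lt (hclose (y, ζ) ⟨hy, hζ⟩ (p, ζ) ⟨hp, hζ⟩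
      (by simpa [Prod.dist_eq, hτ] using hdist))
    have hlower : η * lam ≤ η * φ p ζ := by
      gcongr
      simpa [mem_sphere_zero_iff_norm.1 hζ] using (hbound p hp ζ).1
    linarith
  rcases eq_or_ne ξ 0 with rfl | hξ
  · rw [hφ.zero hy, hφ.zero hp, mul_zero]
  · have hnorm : ‖ξ‖ ≠ 0 := norm_ne_zero_iff.2 hξ
    have hunit : ‖ξ‖⁻¹ • ξ ∈ sphere (0 : Euc N) 1 := by
      rw [mem_sphere_zero_iff_norm, norm_smul, norm_inv, norm_norm, inv_mul_cancel₀ hnorm]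
    rw [← smul_inv_smul₀ hnorm ξ, hφ.smul hy, hφ.smul hp, abs_norm]
    calc ‖ξ‖ * φ y (‖ξ‖⁻¹ • ξ) ≤ ‖ξ‖ * ((1 + η) * φ p (‖ξ‖⁻¹ • ξ)) := by
          gcongr
          exact hsphere _ hunit
      _ = (1 + η) * (‖ξ‖ * φ p (‖ξ‖⁻¹ • ξ)) := by ring

end Comparison

section BoundaryAtlas

lemma eventually_thickening_subset {α : Type*} [PseudoEMetricSpace α] {K U : Set α}
    (hK : IsCompact K) (hU : IsOpen U) (hKU : K ⊆ U) :
    ∀ᶠ ρ in 𝓝[>] (0 : ℝ), thickening ρ K ⊆ U := by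
  obtain ⟨δ, hδ, hsub⟩ := hK.exists_thickening_subset_open hU hKU
  filter_upwards [Ioo_mem_nhdsGT hδ] with ρ hρ
  exact (thickening_mono hρ.2.le K).trans hsub

lemma exists_lipschitz_partition_of_unity {E ι : Type*} [NormedAddCommGroup E] [NormedSpace ℝ E]
    [FiniteDimensional ℝ E] [Fintype ι] {K : Set E} (hK : IsCompact K) {U : ι → Set E}
    (hU : ∀ i, IsOpen (U i)) (hKU : K ⊆ ⋃ i, U i) :
    ∃ ρ > 0, ∃ (C : ℝ≥0) (p : ι → E → ℝ), (∀ i, LipschitzWith C (p i)) ∧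
      (∀ i, Differentiable ℝ (p i)) ∧ (∀ i x, 0 ≤ p i x) ∧ (∀ x, ∑ i, p i x ≤ 1) ∧
      (∀ x ∈ thickening ρ K, ∑ i, p i x = 1) ∧
      ∀ i, thickening ρ (Function.support (p i)) ⊆ U i := by
  obtain ⟨R, hKR⟩ := hK.isBounded.subset_ball 0
  have hV : ∀ i, IsOpen (U i ∩ ball 0 R) := fun i => (hU i).inter isOpen_ball
  obtain ⟨ρ₀, hρ₀, hcover⟩ := hK.exists_cthickening_subset_open (isOpen_iUnion hV)
    (by rw [← iUnion_inter]; exact subset_inter hKU hKR)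
  obtain ⟨p, hp⟩ := SmoothPartitionOfUnity.exists_isSubordinate (modelWithCornersSelf ℝ E)
    isClosed_cthickening _ hV hcover
  have hcomp : ∀ i, IsCompact (tsupport (p i)) := fun i => isCompact_of_isClosed_isBounded
    (isClosed_tsupport _) (isBounded_ball.subset ((hp i).trans inter_subset_right))
  have hsmooth : ∀ i, ContDiff ℝ 1 (p i) := fun i =>
    (p i).contMDiff.contDiff.of_le (by exact_mod_cast le_top)
  choose C hC using fun i => (hsmooth i).lipschitzWith_of_hasCompactSupport (hcomp i) one_ne_zero
  have hthick : ∀ᶠ ρ in 𝓝[>] (0 : ℝ), ∀ i, thickening ρ (tsupport (p i)) ⊆ U i :=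
    eventually_all.2 fun i =>
      eventually_thickening_subset (hcomp i) (hU i) ((hp i).trans inter_subset_left)
  obtain ⟨ρ, hρU, hρ, hρρ₀⟩ := (hthick.and (Ioo_mem_nhdsGT hρ₀)).exists
  refine ⟨ρ, hρ, Finset.univ.sup C, fun i => p i,
    fun i => (hC i).weaken (Finset.le_sup (Finset.mem_univ i)),
    fun i => (hsmooth i).differentiable one_ne_zero, fun i => p.nonneg i, fun x => ?_,
    fun x hx => ?_, fun i => (thickening_subset_of_subset ρ subset_closure).trans (hρU i)⟩
  · rw [← finsum_eq_sum_of_fintype]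
    exact p.sum_le_one x
  · rw [← finsum_eq_sum_of_fintype]
    exact p.sum_eq_one (thickening_subset_cthickening_of_le hρρ₀.le K hx)

/-- Finitely many boundary charts of `Ω` together with a subordinate Lipschitz partition of unity
near the boundary; `radius` is a margin both for the domains around the supports of the weights and
for the neighbourhood of the boundary on which the weights add up to `1`. -/
structure BoundaryAtlas {E : Type*} [NormedAddCommGroup E] [NormedSpace ℝ E] (Ω : Set E)
    (ι : Type*) [Fintype ι] where
  dir : ι → E
  height : ι → E → ℝ
  heightLip : ℝ≥0
  domain : ι → Set E
  weight : ι → E → ℝ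
  weightLip : ℝ≥0
  radius : ℝ
  radius_pos : 0 < radius
  isBoundaryChart : ∀ i, IsBoundaryChart Ω (dir i) (height i) heightLip (domain i)
  lipschitzWith_weight : ∀ i, LipschitzWith weightLip (weight i)
  differentiable_weight : ∀ i, Differentiable ℝ (weight i)
  weight_nonneg : ∀ i x, 0 ≤ weight i x
  sum_weight_le_one : ∀ x, ∑ i, weight i x ≤ 1
  sum_weight_eq_one : ∀ x ∈ thickening radius (frontier Ω), ∑ i, weight i x = 1
  thickening_support_subset : ∀ i, thickening radius (Function.support (weight i)) ⊆ domain i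

lemma IsGraphHeight.weaken {E : Type*} [NormedAddCommGroup E] [NormedSpace ℝ E] {e : E} {G : E → ℝ}
    {M M' : ℝ≥0} (h : IsGraphHeight e G M) (hM : M ≤ M') : IsGraphHeight e G M' :=
  ⟨h.norm_eq_one, h.lipschitzWith.weaken hM, h.apply_add_smul⟩

lemma HasLipschitzBoundary.exists_boundaryAtlas {N : ℕ} {Ω : Set (Euc N)}
    (hΩ : HasLipschitzBoundary Ω) (hb : IsBounded Ω) :
    ∃ (ι : Type) (_ : Fintype ι), Nonempty (BoundaryAtlas Ω ι) := by
  have hcomp : IsCompact (frontier Ω) :=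
    hb.isCompact_closure.of_isClosed_subset isClosed_frontier frontier_subset_closure
  choose e G M U hchart hmem using fun x : frontier Ω => hΩ.exists_isBoundaryChart x.2
  obtain ⟨t, ht⟩ := hcomp.elim_finite_subcover U (fun x => (hchart x).isOpen)
    fun x hx => mem_iUnion.2 ⟨⟨x, hx⟩, hmem ⟨x, hx⟩⟩
  obtain ⟨ρ, hρ, C, p, hlip, hdiff, hnonneg, hle, heq, hsub⟩ :=
    exists_lipschitz_partition_of_unity hcomp (U := fun i : t => U i) (fun i => (hchart i).isOpen)
      (by rwa [iUnion_subtype])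
  exact ⟨t, inferInstance, ⟨{
    dir i := e i
    height i := G i
    heightLip := Finset.univ.sup fun i : t => M i
    domain i := U i
    weight := p
    weightLip := C
    radius := ρ
    radius_pos := hρ
    isBoundaryChart i := ⟨(hchart i).weaken
      (Finset.le_sup (f := fun i : t => M i) (Finset.mem_univ i)), (hchart i).isOpen,
      (hchart i).mem_iff⟩
    lipschitzWith_weight := hlip
    differentiable_weight := hdiff
    weight_nonneg := hnonneg
    sum_weight_le_one := hle
    sum_weight_eq_one := heq
    thickening_support_subset := hsub }⟩⟩

end BoundaryAtlas

namespace BoundaryAtlas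

variable {E ι : Type*} [NormedAddCommGroup E] [NormedSpace ℝ E] [Fintype ι] {Ω K : Set E}
  {b ε : ℝ} {i : ι} {q y : E}

lemma weight_mem_Icc (A : BoundaryAtlas Ω ι) (i : ι) (x : E) : A.weight i x ∈ Icc 0 1 :=
  ⟨A.weight_nonneg i x, (Finset.single_le_sum (f := fun i => A.weight i x)
    (fun j _ => A.weight_nonneg j x) (Finset.mem_univ i)).trans (A.sum_weight_le_one x)⟩

lemma tsupport_weight_subset (A : BoundaryAtlas Ω ι) (i : ι) : tsupport (A.weight i) ⊆ A.domain i :=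
  (closure_subset_thickening A.radius_pos _).trans (A.thickening_support_subset i)

lemma mem_thickening_frontier (A : BoundaryAtlas Ω ι) (hΩ : IsOpen Ω) (hb : b ≤ A.radius)
    (hy : y ∈ tsupport (A.weight i)) (hyΩ : y ∈ Ω) (hheight : A.height i y < b) :
    y ∈ thickening b (frontier Ω) := by
  have h := A.isBoundaryChart i
  have hpos := (h.mem_iff y (A.tsupport_weight_subset i hy)).1 hyΩ
  have hdist : dist y (graphProj (A.dir i) (A.height i) y) < b := by
    rwa [h.dist_graphProj, abs_of_pos hpos]
  refine mem_thickening_iff.2 ⟨_, (h.mem_frontier_iff hΩ (A.thickening_support_subset i ?_)).2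
    (h.apply_graphProj y), hdist⟩
  rw [← thickening_closure]
  exact mem_thickening_iff.2 ⟨y, hy, by rw [dist_comm]; exact hdist.trans_le hb⟩

/-- The cutoff to the boundary layer of width `2 * ε`: it is `1` near the boundary and vanishes at
points of `Ω` farther than `2 * ε` from it. -/
def cutoff (A : BoundaryAtlas Ω ι) (ε : ℝ) (x : E) : ℝ :=
  ∑ i, A.weight i x * cutoffProfile ε (A.height i x)

lemma cutoff_mem_Icc (A : BoundaryAtlas Ω ι) (ε : ℝ) (x : E) : A.cutoff ε x ∈ Icc 0 1 :=
  ⟨Finset.sum_nonneg fun i _ => mul_nonneg (A.weight_nonneg i x) (cutoffProfile_mem_Icc ε _).1,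
    (Finset.sum_le_sum fun i _ => mul_le_of_le_one_right (A.weight_nonneg i x)
      (cutoffProfile_mem_Icc ε _).2).trans (A.sum_weight_le_one x)⟩

lemma lipschitzWith_cutoffProfile_height (A : BoundaryAtlas Ω ι) (ε : ℝ) (i : ι) :
    LipschitzWith (‖ε⁻¹‖₊ * A.heightLip) fun x => cutoffProfile ε (A.height i x) :=
  (lipschitzWith_cutoffProfile ε).comp (A.isBoundaryChart i).lipschitzWith

lemma exists_lipschitzWith_cutoff (A : BoundaryAtlas Ω ι) (ε : ℝ) :
    ∃ C, LipschitzWith C (A.cutoff ε) := by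
  have hbound : ∀ t ∈ Icc (0 : ℝ) 1, ‖t‖₊ ≤ 1 := fun t ht => by
    rw [← NNReal.coe_le_coe, coe_nnnorm, Real.norm_of_nonneg ht.1]
    exact ht.2
  exact ⟨_, lipschitzWith_sum Finset.univ fun i _ => lipschitzWith_mul_of_nnnorm_le
    (A.lipschitzWith_weight i) (A.lipschitzWith_cutoffProfile_height ε i)
    (fun x => hbound _ (A.weight_mem_Icc i x)) fun x => hbound _ (cutoffProfile_mem_Icc ε _)⟩

lemma eventually_cutoff_eq_one (A : BoundaryAtlas Ω ι) (hΩ : IsOpen Ω) (hε : 0 < ε)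
    (hq : q ∈ frontier Ω) : ∀ᶠ y in 𝓝 q, A.cutoff ε y = 1 := by
  have hheight : ∀ᶠ y in 𝓝 q, ∀ i, q ∈ A.domain i → A.height i y < ε := by
    refine eventually_all.2 fun i => eventually_imp_distrib_left.2 fun hqi => ?_
    have hzero := ((A.isBoundaryChart i).mem_frontier_iff hΩ hqi).1 hq
    exact (A.isBoundaryChart i).lipschitzWith.continuous.continuousAt.eventually_lt_const
      (by rwa [hzero])
  filter_upwards [hheight, ball_mem_nhds q A.radius_pos] with y hy hyq
  rw [cutoff, ← A.sum_weight_eq_one y (mem_thickening_iff.2 ⟨q, hq, hyq⟩)]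
  refine Finset.sum_congr rfl fun i _ => ?_
  rcases eq_or_ne (A.weight i y) 0 with h0 | h0
  · rw [h0, zero_mul]
  · have hqi : q ∈ A.domain i := A.thickening_support_subset i
      (mem_thickening_iff.2 ⟨y, h0, by rwa [dist_comm]⟩)
    rw [cutoffProfile_of_le hε (hy i hqi).le, mul_one]

lemma cutoff_eq_zero (A : BoundaryAtlas Ω ι) (hΩ : IsOpen Ω) (hε : 0 < ε) (hεr : 2 * ε ≤ A.radius)
    (hy : y ∈ Ω) (hyf : y ∉ thickening (2 * ε) (frontier Ω)) : A.cutoff ε y = 0 := by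
  refine Finset.sum_eq_zero fun i _ => ?_
  rcases eq_or_ne (A.weight i y) 0 with h0 | h0
  · rw [h0, zero_mul]
  · rw [cutoffProfile_of_two_mul_le hε (not_lt.1 fun hlt =>
      hyf (A.mem_thickening_frontier hΩ hεr (subset_closure h0) hy hlt)), mul_zero]

lemma disjoint_tsupport_cutoff (A : BoundaryAtlas Ω ι) (hΩ : IsOpen Ω) (hε : 0 < ε)
    (hεr : 2 * ε ≤ A.radius) (hK : thickening (4 * ε) K ⊆ Ω) :
    Disjoint (tsupport (A.cutoff ε)) K := by
  refine Set.disjoint_right.2 fun x hx => notMem_tsupport_iff_eventuallyEq.2 ?_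
  filter_upwards [ball_mem_nhds x (show 0 < 2 * ε by positivity)] with y (hy : dist y x < 2 * ε)
  refine A.cutoff_eq_zero hΩ hε hεr (hK (mem_thickening_iff.2 ⟨x, hx, by linarith⟩)) fun hyf => ?_
  obtain ⟨q, hq, hyq⟩ := mem_thickening_iff.1 hyf
  have hqx := dist_triangle_left q x y
  exact (hΩ.inter_frontier_eq.subset ⟨hK (mem_thickening_iff.2 ⟨x, hx, by linarith⟩), hq⟩).elim

end BoundaryAtlas

section AtlasEstimate

variable {N : ℕ} {ι : Type*} [Fintype ι] {Ω K : Set (Euc N)} {φ : Euc N → Euc N → ℝ}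
  {u f : Euc N → ℝ} {ν : Euc N → Euc N} {lam Lam ε c : ℝ} {i : ι} {y : Euc N}

lemma measurable_gradient (G : Euc N → ℝ) : Measurable (gradient G) :=
  (InnerProductSpace.toDual ℝ (Euc N)).symm.continuous.measurable.comp (measurable_fderiv ℝ G)

lemma BoundaryAtlas.cutoffProfile_mul_apply_gradient_weight_le (A : BoundaryAtlas Ω ι)
    (hφ : MetricIntegrand φ Ω lam Lam) (hΩ : IsOpen Ω) (hε : 0 < ε) (hεr : 2 * ε ≤ A.radius)
    (hy : y ∈ Ω) :
    cutoffProfile ε (A.height i y) * φ y (gradient (A.weight i) y) ≤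
      (Ω ∩ thickening (2 * ε) (frontier Ω)).indicator (fun _ => Lam * A.weightLip) y := by
  have hyc : y ∈ closure Ω := subset_closure hy
  by_cases hyf : y ∈ thickening (2 * ε) (frontier Ω)
  · rw [indicator_of_mem (mem_inter hy hyf)]
    exact (mul_le_of_le_one_left (hφ.nonneg hyc _) (cutoffProfile_mem_Icc ε _).2).trans
      (hφ.apply_gradient_le_mul (A.lipschitzWith_weight i) hyc)
  · rw [indicator_of_notMem fun h => hyf h.2]
    by_cases hyt : y ∈ tsupport (A.weight i)
    · rw [cutoffProfile_of_two_mul_le hε (not_lt.1 fun hlt =>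
        hyf (A.mem_thickening_frontier hΩ hεr hyt hy hlt)), zero_mul]
    · rw [gradient, fderiv_of_notMem_tsupport ℝ hyt, map_zero, hφ.zero hyc, mul_zero]

/-- The part of the layer of heights between `ε` and `2 * ε` in the `i`-th chart that lies over the
support of the `i`-th weight; it carries the gradient of the `i`-th cutoff profile. -/
def BoundaryAtlas.slab (A : BoundaryAtlas Ω ι) (ε : ℝ) (i : ι) : Set (Euc N) :=
  graphSlab (A.dir i) (A.height i) (thickening (2 * ε) (Function.support (A.weight i))) ε (2 * ε)

lemma BoundaryAtlas.measurableSet_slab (A : BoundaryAtlas Ω ι) (ε : ℝ) (i : ι) :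
    MeasurableSet (A.slab ε i) :=
  ((A.isBoundaryChart i).isOpen_graphSlab isOpen_thickening _ _).measurableSet

lemma BoundaryAtlas.weight_mul_apply_gradient_cutoffProfile_le (A : BoundaryAtlas Ω ι)
    (hφ : MetricIntegrand φ Ω lam Lam) (hε : 0 < ε) (hy : y ∈ closure Ω)
    (hd : DifferentiableAt ℝ (A.height i) y) :
    A.weight i y * φ y (gradient (fun x => cutoffProfile ε (A.height i x)) y) ≤
      (A.slab ε i).indicator (fun x => A.weight i x * ε⁻¹ * φ x (gradient (A.height i) x)) y := by
  have hnonneg := mul_nonneg (mul_nonneg (A.weight_nonneg i y) (inv_nonneg.2 hε.le))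
    (hφ.nonneg hy (gradient (A.height i) y))
  rcases eq_or_ne (A.weight i y) 0 with h0 | h0
  · rw [h0, zero_mul]
    exact indicator_apply_nonneg fun _ => hnonneg
  by_cases hheight : A.height i y ∈ Ioo ε (2 * ε)
  · have hmem : y ∈ A.slab ε i :=
      (A.isBoundaryChart i).mem_graphSlab_thickening hε.le h0 hheight
    rw [indicator_of_mem hmem, gradient_cutoffProfile_comp_of_mem_Ioo hε hd hheight, hφ.smul hy,
      abs_neg, abs_of_pos (inv_pos.2 hε), mul_assoc]
  · rw [gradient_cutoffProfile_comp_of_notMem_Ioo hε hheight, hφ.zero hy, mul_zero]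
    exact indicator_apply_nonneg fun _ => hnonneg

lemma BoundaryAtlas.apply_gradient_cutoff_le (A : BoundaryAtlas Ω ι)
    (hφ : MetricIntegrand φ Ω lam Lam) (hΩ : IsOpen Ω) (hε : 0 < ε) (hεr : 2 * ε ≤ A.radius)
    (hy : y ∈ Ω) (hd : ∀ i, DifferentiableAt ℝ (A.height i) y)
    (hd' : ∀ i, DifferentiableAt ℝ (fun x => cutoffProfile ε (A.height i x)) y) :
    φ y (gradient (A.cutoff ε) y) ≤
      ∑ i, ((Ω ∩ thickening (2 * ε) (frontier Ω)).indicator (fun _ => Lam * A.weightLip) y +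
        (A.slab ε i).indicator
          (fun x => A.weight i x * ε⁻¹ * φ x (gradient (A.height i) x)) y) := by
  have hyc : y ∈ closure Ω := subset_closure hy
  have hgrad := gradient_sum_mul Finset.univ (fun i _ => A.differentiable_weight i y)
    fun i _ => hd' i
  rw [show A.cutoff ε = fun x => ∑ i, A.weight i x * cutoffProfile ε (A.height i x) from rfl, hgrad]
  refine (hφ.sum_le hyc _ _).trans (Finset.sum_le_sum fun i _ => (hφ.add_le hyc _ _).trans ?_)
  rw [hφ.smul hyc, hφ.smul hyc, abs_of_nonneg (cutoffProfile_mem_Icc ε _).1,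
    abs_of_nonneg (A.weight_nonneg i y)]
  exact add_le_add (A.cutoffProfile_mul_apply_gradient_weight_le hφ hΩ hε hεr hy)
    (A.weight_mul_apply_gradient_cutoffProfile_le hφ hε hyc (hd i))

lemma BoundaryAtlas.ofReal_abs_mul_apply_gradient_cutoff_le (A : BoundaryAtlas Ω ι)
    (hφ : MetricIntegrand φ Ω lam Lam) (hΩ : IsOpen Ω) (hε : 0 < ε) (hεr : 2 * ε ≤ A.radius) :
    ∀ᵐ y ∂volume.restrict Ω, ENNReal.ofReal (|u y| * φ y (gradient (A.cutoff ε) y)) ≤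
      ∑ i, ((Ω ∩ thickening (2 * ε) (frontier Ω)).indicator
          (fun x => ENNReal.ofReal (Lam * A.weightLip) * ‖u x‖ₑ) y +
        (A.slab ε i).indicator (fun x => ENNReal.ofReal
            (|u x| * (A.weight i x * ε⁻¹ * φ x (gradient (A.height i) x)))) y) := by
  have hd : ∀ᵐ y ∂volume.restrict Ω, ∀ i, DifferentiableAt ℝ (A.height i) y :=
    ae_all_iff.2 fun i => ae_restrict_of_ae (A.isBoundaryChart i).lipschitzWith.ae_differentiableAt
  have hd' : ∀ᵐ y ∂volume.restrict Ω, ∀ i,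
      DifferentiableAt ℝ (fun x => cutoffProfile ε (A.height i x)) y :=
    ae_all_iff.2 fun i =>
      ae_restrict_of_ae (A.lipschitzWith_cutoffProfile_height ε i).ae_differentiableAt
  filter_upwards [hd, hd', ae_restrict_mem hΩ.measurableSet] with y hdy hdy' hy
  refine (ENNReal.ofReal_le_ofReal (mul_le_mul_of_nonneg_left
    (A.apply_gradient_cutoff_le hφ hΩ hε hεr hy hdy hdy') (abs_nonneg (u y)))).trans ?_
  rw [Finset.mul_sum]
  refine (Finset.le_sum_of_subadditive _ ENNReal.ofReal_zero.le
    (fun _ _ => ENNReal.ofReal_add_le) _ _).trans (Finset.sum_le_sum fun i _ => ?_)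
  rw [mul_add]
  refine ENNReal.ofReal_add_le.trans (add_le_add ?_ ?_)
  · by_cases hyD : y ∈ Ω ∩ thickening (2 * ε) (frontier Ω)
    · rw [indicator_of_mem hyD, indicator_of_mem hyD, ENNReal.ofReal_mul (abs_nonneg _), mul_comm,
        ← Real.enorm_abs, Real.enorm_of_nonneg (abs_nonneg _)]
    · simp [hyD]
  · by_cases hyS : y ∈ A.slab ε i <;> simp [hyS]

lemma BoundaryAtlas.sum_setLIntegral_boundary_le (A : BoundaryAtlas Ω ι) (μ : Measure (Euc N))
    (F : Euc N → ℝ≥0∞) :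
    ∑ i, ∫⁻ x, ENNReal.ofReal (A.weight i x) * F x ∂μ ≤ ∫⁻ x, F x ∂μ := by
  refine (sum_lintegral_le _ _ _).trans (lintegral_mono fun x => ?_)
  simp only
  rw [← Finset.sum_mul, ← ENNReal.ofReal_sum_of_nonneg fun i _ => A.weight_nonneg i x]
  exact mul_le_of_le_one_left' (ENNReal.ofReal_le_one.2 (A.sum_weight_le_one x))

lemma BoundaryAtlas.lintegral_gradient_cutoff_le_sum (A : BoundaryAtlas Ω ι)
    (hφ : MetricIntegrand φ Ω lam Lam) (hΩ : IsOpen Ω) (hum : StronglyMeasurable u) (hε : 0 < ε)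
    (hεr : 2 * ε ≤ A.radius) :
    ∫⁻ y in Ω, ENNReal.ofReal (|u y| * φ y (gradient (A.cutoff ε) y)) ≤
      ∑ i, (ENNReal.ofReal (Lam * A.weightLip) *
          (∫⁻ y in Ω ∩ thickening (2 * ε) (frontier Ω), ‖u y‖ₑ) +
        ∫⁻ y in A.slab ε i,
          ENNReal.ofReal (|u y| * (A.weight i y * ε⁻¹ * φ y (gradient (A.height i) y)))) := by
  have hD : MeasurableSet (Ω ∩ thickening (2 * ε) (frontier Ω)) :=
    (hΩ.inter isOpen_thickening).measurableSet
  have hleft := (hum.enorm.const_mul (ENNReal.ofReal (Lam * A.weightLip))).indicator hD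
  have hright : ∀ i, AEMeasurable (fun y => ENNReal.ofReal
      (|u y| * (A.weight i y * ε⁻¹ * φ y (gradient (A.height i) y)))) (volume.restrict Ω) :=
    fun i => (hum.measurable.abs.aemeasurable.mul
      (((A.lipschitzWith_weight i).continuous.measurable.mul_const _).aemeasurable.mul
        (hφ.aemeasurable ((ae_restrict_mem hΩ.measurableSet).mono fun _ h => subset_closure h)
          (measurable_gradient _).aemeasurable))).ennreal_ofReal
  refine (lintegral_mono_ae (A.ofReal_abs_mul_apply_gradient_cutoff_le hφ hΩ hε hεr)).trans ?_
  rw [lintegral_finsetSum' _ fun i _ =>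
    hleft.aemeasurable.fun_add ((hright i).indicator (A.measurableSet_slab ε i))]
  refine Finset.sum_le_sum fun i _ => ?_
  rw [lintegral_add_left hleft, lintegral_indicator hD,
    lintegral_indicator (A.measurableSet_slab ε i), lintegral_const_mul' _ _ ENNReal.ofReal_ne_top]
  gcongr <;> exact Measure.restrict_le_self

lemma BoundaryAtlas.lintegral_gradient_cutoff_le (A : BoundaryAtlas Ω ι)
    (hφ : MetricIntegrand φ Ω lam Lam) (hΩ : IsOpen Ω) (hν : IsOuterUnitNormal Ω ν)
    (hf : IsTrace Ω u f) (hum : StronglyMeasurable u) (hu : Integrable u) (hε : 0 < ε)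
    (hεr : 6 * ε ≤ A.radius) (hc : 0 ≤ c) (hK : thickening (3 * ε) K ⊆ Ω)
    (hcomp : ∀ y ∈ closure Ω, ∀ p ∈ closure Ω, dist y p < 2 * ε → ∀ ξ, φ y ξ ≤ c * φ p ξ) :
    ∫⁻ y in Ω, ENNReal.ofReal (|u y| * φ y (gradient (A.cutoff ε) y)) ≤
      Fintype.card ι * ((ENNReal.ofReal (Lam * A.weightLip) +
          ENNReal.ofReal (2 * A.weightLip * (Lam * A.heightLip))) *
            (∫⁻ y in Ω ∩ thickening (2 * ε) (frontier Ω), ‖u y‖ₑ) +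
          ENNReal.ofReal (2 * (Lam * A.heightLip)) * TV (Ω \ K) u) +
        ENNReal.ofReal c * ∫⁻ x in frontier Ω, ENNReal.ofReal (φ x (ν x) * |f x|)
          ∂(μH[(N : ℝ) - 1] : Measure (Euc N)) := by
  refine (A.lintegral_gradient_cutoff_le_sum hφ hΩ hum hε (by linarith)).trans ?_
  refine (Finset.sum_le_sum fun i _ => add_le_add_right
    ((A.isBoundaryChart i).setLIntegral_cutoff_le hφ hΩ hν hf hum hu (A.lipschitzWith_weight i)
      (A.weight_mem_Icc i) hε hc ((thickening_mono hεr _).trans (A.thickening_support_subset i)) hK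
      hcomp) _).trans ?_
  simp_rw [← add_assoc, ← add_mul]
  rw [Finset.sum_add_distrib, ← Finset.mul_sum, Finset.sum_const, Finset.card_univ, nsmul_eq_mul]
  gcongr
  exact A.sum_setLIntegral_boundary_le _ _

end AtlasEstimate

section LeastGradient

lemma tendsto_setLIntegral_inter_thickening_frontier {α : Type*} [PseudoEMetricSpace α]
    [MeasurableSpace α] [OpensMeasurableSpace α] {μ : Measure α} {Ω : Set α} (hΩ : IsOpen Ω)
    {g : α → ℝ≥0∞} (hg : ∫⁻ y in Ω, g y ∂μ ≠ ⊤) :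
    Tendsto (fun r => ∫⁻ y in Ω ∩ thickening r (frontier Ω), g y ∂μ) (𝓝[>] 0) (𝓝 0) := by
  have hval : ∀ s, MeasurableSet s →
      (μ.restrict Ω).withDensity g s = ∫⁻ y in Ω ∩ s, g y ∂μ := fun s hs => by
    rw [withDensity_apply _ hs, Measure.restrict_restrict hs, inter_comm]
  have hfin : (μ.restrict Ω).withDensity g (thickening 1 (frontier Ω)) ≠ ⊤ := by
    rw [hval _ isOpen_thickening.measurableSet]
    exact ne_top_of_le_ne_top hg (lintegral_mono_set inter_subset_left)
  have hlim := tendsto_measure_thickening_of_isClosed ⟨1, one_pos, hfin⟩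
    (isClosed_frontier (s := Ω))
  rw [hval _ isClosed_frontier.measurableSet, hΩ.inter_frontier_eq, setLIntegral_empty] at hlim
  exact hlim.congr fun r => hval _ isOpen_thickening.measurableSet

lemma exists_layer_width {α : Type*} [PseudoEMetricSpace α] [MeasurableSpace α]
    [OpensMeasurableSpace α] {μ : Measure α} {Ω K : Set α} (hΩ : IsOpen Ω) {g : α → ℝ≥0∞}
    (hg : ∫⁻ y in Ω, g y ∂μ ≠ ⊤) (hK : IsCompact K) (hKΩ : K ⊆ Ω) {r τ : ℝ} (hr : 0 < r)
    (hτ : 0 < τ) {δ : ℝ≥0∞} (hδ : δ ≠ 0) :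
    ∃ ε > 0, 6 * ε ≤ r ∧ 2 * ε ≤ τ ∧ thickening (4 * ε) K ⊆ Ω ∧
      ∫⁻ y in Ω ∩ thickening (2 * ε) (frontier Ω), g y ∂μ ≤ δ := by
  have hlayer := (tendsto_setLIntegral_inter_thickening_frontier hΩ hg).eventually_le_const
    (pos_iff_ne_zero.2 hδ)
  obtain ⟨s, ⟨hs, hsK⟩, hs0, hsr⟩ := ((hlayer.and (eventually_thickening_subset hK hΩ hKΩ)).and
    (Ioo_mem_nhdsGT (lt_min (half_pos hr) hτ))).exists
  obtain ⟨hsr, hsτ⟩ := lt_min_iff.1 hsr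
  refine ⟨s / 4, by positivity, by linarith, by linarith, by rwa [mul_div_cancel₀ s four_ne_zero],
    (lintegral_mono_set (inter_subset_inter_right Ω (thickening_mono ?_ _))).trans hs⟩
  linarith

lemma le_of_forall_pos_le_ofReal_mul_add {a B R : ℝ≥0∞} (hB : B ≠ ⊤)
    (h : ∀ δ > 0, a ≤ ENNReal.ofReal δ * B + ENNReal.ofReal (1 + δ) * R) : a ≤ R := by
  have hleft : Tendsto (fun δ => ENNReal.ofReal δ * B) (𝓝[>] 0) (𝓝 (ENNReal.ofReal 0 * B)) :=
    ENNReal.Tendsto.mul_const (ENNReal.tendsto_ofReal nhdsWithin_le_nhds) (Or.inr hB)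
  have hright : Tendsto (fun δ => ENNReal.ofReal (1 + δ) * R) (𝓝[>] 0)
      (𝓝 (ENNReal.ofReal (1 + 0) * R)) :=
    ENNReal.Tendsto.mul_const (ENNReal.tendsto_ofReal
      ((continuous_const_add (1 : ℝ)).continuousWithinAt)) (Or.inl (by simp))
  have hlim := hleft.add hright
  rw [ENNReal.ofReal_zero, zero_mul, zero_add, add_zero, ENNReal.ofReal_one, one_mul] at hlim
  exact ge_of_tendsto hlim (eventually_mem_nhdsWithin.mono h)

variable {N : ℕ} {Ω : Set (Euc N)} {φ : Euc N → Euc N → ℝ} {u w f : Euc N → ℝ}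
  {ν : Euc N → Euc N} {lam Lam : ℝ}

lemma IsPhiLeastGradient.congr_ae (h : IsPhiLeastGradient φ Ω u)
    (huw : u =ᵐ[volume.restrict Ω] w) : IsPhiLeastGradient φ Ω w := by
  intro v hv hvΩ
  rw [← phiTV_congr_ae huw, ← phiTV_congr_ae (huw.add (ae_eq_refl v))]
  exact h v hv hvΩ

lemma IsTrace.congr_ae (h : IsTrace Ω u f) (huw : u =ᵐ[volume.restrict Ω] w) : IsTrace Ω w f := by
  refine h.mono fun x hx => hx.congr fun r => average_congr ?_
  filter_upwards [ae_restrict_of_ae_restrict_of_subset inter_subset_right huw] with y hy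
  rw [hy]

lemma IsPhiLeastGradient.exists_phiTV_le_ofReal_mul_add (hlg : IsPhiLeastGradient φ Ω u)
    (hφ : MetricIntegrand φ Ω lam Lam) (hΩ : IsOpen Ω) (hΩb : IsBounded Ω)
    (hΩl : HasLipschitzBoundary Ω) (hν : IsOuterUnitNormal Ω ν) (hf : IsTrace Ω u f)
    (hum : StronglyMeasurable u) (hu : Integrable u) (hTV : phiTV φ Ω u ≠ ⊤) :
    ∃ B ≠ ⊤, ∀ δ > 0, phiTV φ Ω u ≤ ENNReal.ofReal δ * B +
      ENNReal.ofReal (1 + δ) * ∫⁻ x in frontier Ω, ENNReal.ofReal (φ x (ν x) * |f x|)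
        ∂(μH[(N : ℝ) - 1] : Measure (Euc N)) := by
  obtain ⟨ι, _, ⟨A⟩⟩ := hΩl.exists_boundaryAtlas hΩb
  obtain ⟨-, -, -, hlam, -, hbound⟩ := id hφ
  have hlam' : ENNReal.ofReal lam ≠ 0 := (ENNReal.ofReal_pos.2 hlam).ne'
  set a := ENNReal.ofReal (Lam * A.weightLip) +
    ENNReal.ofReal (2 * A.weightLip * (Lam * A.heightLip))
  set b := ENNReal.ofReal (2 * (Lam * A.heightLip))
  refine ⟨1 + Fintype.card ι * (a + b * (ENNReal.ofReal lam)⁻¹), by finiteness, fun δ hδ => ?_⟩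
  obtain ⟨K, hKc, hKΩ, hK⟩ := exists_isCompact_phiTV_sdiff_le hu.integrableOn hTV
    (ENNReal.ofReal_pos.2 hδ).ne'
  have hTVK : TV (Ω \ K) u ≤ (ENNReal.ofReal lam)⁻¹ * ENNReal.ofReal δ := by
    rw [← ENNReal.mul_le_iff_le_inv hlam' ENNReal.ofReal_ne_top]
    exact (ofReal_mul_TV_le_phiTV hlam.le
      (fun x hx ξ => (hbound x (subset_closure hx.1) ξ).1) u).trans hK
  obtain ⟨τ, hτ, hcomp⟩ := hφ.exists_forall_dist_lt_le_mul hΩb hδ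
  obtain ⟨ε, hε, hεr, hετ, hεK, hlayer⟩ := exists_layer_width hΩ hu.hasFiniteIntegral.restrict.ne
    hKc hKΩ A.radius_pos hτ (ENNReal.ofReal_pos.2 hδ).ne'
  obtain ⟨C, hC⟩ := A.exists_lipschitzWith_cutoff ε
  calc phiTV φ Ω u
      ≤ phiTV φ (Ω \ K) u + ∫⁻ x in Ω, ENNReal.ofReal (|u x| * φ x (gradient (A.cutoff ε) x)) :=
        hlg.phiTV_le_add_lintegral_gradient hφ hΩ hΩb hu.integrableOn hKc hC (A.cutoff_mem_Icc ε)
          (A.disjoint_tsupport_cutoff hΩ hε (by linarith) hεK)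
          fun q hq => nhdsWithin_le_nhds (A.eventually_cutoff_eq_one hΩ hε hq)
    _ ≤ ENNReal.ofReal δ + (Fintype.card ι * (a * ENNReal.ofReal δ +
          b * ((ENNReal.ofReal lam)⁻¹ * ENNReal.ofReal δ)) + ENNReal.ofReal (1 + δ) * _) := by
        refine add_le_add hK ((A.lintegral_gradient_cutoff_le hφ hΩ hν hf hum hu hε hεr
          (by positivity) ((thickening_mono (by linarith) K).trans hεK)
          fun y hy p hp hdist => hcomp y hy p hp (hdist.trans_le hετ)).trans ?_)
        gcongr
    _ = _ := by ring

lemma IsPhiLeastGradient.phiTV_le_setLIntegral_frontier (hlg : IsPhiLeastGradient φ Ω u)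
    (hφ : MetricIntegrand φ Ω lam Lam) (hΩ : IsOpen Ω) (hΩb : IsBounded Ω)
    (hΩl : HasLipschitzBoundary Ω) (hν : IsOuterUnitNormal Ω ν) (hf : IsTrace Ω u f)
    (hum : StronglyMeasurable u) (hu : Integrable u) (hTV : phiTV φ Ω u ≠ ⊤) :
    phiTV φ Ω u ≤ ∫⁻ x in frontier Ω, ENNReal.ofReal (φ x (ν x) * |f x|)
      ∂(μH[(N : ℝ) - 1] : Measure (Euc N)) := by
  obtain ⟨B, hB, hle⟩ :=
    hlg.exists_phiTV_le_ofReal_mul_add hφ hΩ hΩb hΩl hν hf hum hu hTV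
  exact le_of_forall_pos_le_ofReal_mul_add hB hle

end LeastGradient

theorem phiTV_le_boundary_integral {N : ℕ} (Ω : Set (Euc N)) (hΩo : IsOpen Ω)
    (hΩb : Bornology.IsBounded Ω) (hΩl : HasLipschitzBoundary Ω)
    (φ : Euc N → Euc N → ℝ) (lam Lam : ℝ) (hφ : MetricIntegrand φ Ω lam Lam)
    (u f : Euc N → ℝ) (ν : Euc N → Euc N)
    (hu1 : IntegrableOn u Ω volume) (hu2 : phiTV φ Ω u ≠ ⊤)
    (hlg : IsPhiLeastGradient φ Ω u) (htr : IsTrace Ω u f)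
    (hν : IsOuterUnitNormal Ω ν) :
    phiTV φ Ω u ≤
      ∫⁻ x in frontier Ω, ENNReal.ofReal (φ x (ν x) * |f x|)
        ∂(μH[(N : ℝ) - 1] : Measure (Euc N)) := by
  have hΩm := hΩo.measurableSet
  obtain ⟨g, hg, hug⟩ := hu1.aestronglyMeasurable
  have huw : u =ᵐ[volume.restrict Ω] Ω.indicator g := hug.trans (indicator_ae_eq_restrict hΩm).symm
  have hint : Integrable (Ω.indicator g) :=
    (integrable_indicator_iff hΩm).2 (Integrable.congr hu1 hug)
  rw [phiTV_congr_ae huw] at hu2 ⊢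
  exact (hlg.congr_ae huw).phiTV_le_setLIntegral_frontier hφ hΩo hΩb hΩl hν (htr.congr_ae huw)
    (hg.indicator hΩm) hint hu2
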